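/- Let f : ℝ → ℝ be smooth, positive, with f(x) → 0 as |x| → ∞ and with bounded first and second derivatives. Then for every sufficiently small ε > 0 there exist β > 0 and x₀ ∈ ℝ such that the smooth function h(x) = −β e^{−β^{3/2}(x−x₀)²} satisfies ‖h‖_{L^p(ℝ)} < ε for every 1 ≤ p ≤ ∞, and there exists no global classical solution u : [0,∞) × ℝ → ℝ of the Cauchy problem ∂u/∂t = ∂²u/∂x² − 2 f(x) u − u², u(0,·) = h, with u(t,x) ≤ 0 everywhere and u(t,·) bounded for every t ≥ 0. That is, any classical solution with these properties on a maximal interval [0,T) must have T < ∞, and then ‖u(t,·)‖_∞ → ∞ as t → T⁻. -/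

import Mathlib

open MeasureTheory Filter
open scoped ENNReal NNReal

/-- `u` is a classical solution on `[0,T) × ℝ` of the Cauchy problem
`∂u/∂t = ∂²u/∂x² − 2 f(x) u − u²`, `u(0,·) = h`: it is continuous in `t` on `[0,T)`,
twice continuously differentiable in `x` and once in `t` for `0 < t < T`, and satisfies
the equation pointwise. -/
def IsClassicalSolution (f h : ℝ → ℝ) (T : ℝ) (u : ℝ → ℝ → ℝ) : Prop :=
  (∀ x, u 0 x = h x) ∧
  (∀ x, ContinuousOn (fun t => u t x) (Set.Ico 0 T)) ∧
  (∀ t ∈ Set.Ioo (0 : ℝ) T, ContDiff ℝ 2 (u t)) ∧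
  (∀ t ∈ Set.Ioo (0 : ℝ) T, ∀ x : ℝ,
    HasDerivAt (fun s => u s x)
      (deriv (deriv (u t)) x - 2 * f x * u t x - (u t x) ^ 2) t)

/-!
The substitution `v = -u` turns the equation into `v_t = v_xx - 2 f v + v²` with `v ≥ 0`. For small
`a > 0` let `α` solve `α' = α² / 4`, `α 0 = a`. Where `f ≤ a / 8`, the parabola
`α - (α² / 32) (x - x₀)²` is a subsolution as long as it is positive, and it is positive only for
`|x - x₀|² < 32 / a`. As `f` vanishes at infinity, `x₀` can be chosen so far out that `f ≤ a / 8` on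
this interval. A solution starting above the parabola therefore stays above it and does not survive
the blow-up time `4 / a` of `α`. The Gaussian of height `β = 2 a` and exponent `β^{3/2}` is such an
initial datum, and its exponent is chosen so that both its height `β` and its mass, of order
`β^{1/4}`, tend to `0` with `β`.

The solutions are only separately continuous and only bounded at each time, so the comparison
principle needs a locally uniform bound first. It comes from the inequality
`heat (v s) (t - s) ≤ v t`, valid for nonnegative solutions, and a Baire category argument in time.
The same bound gives the blow-up of the norm at a finite maximal time: a solution that stays bounded
along a sequence of times converging to `T` is continued past `T` by the Duhamel fixed point started
at one of them, whose time of existence depends only on the bound.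
-/

namespace SemilinearHeat

open Set Topology ProbabilityTheory

/-! ### Gaussian moments of a bounded function -/

/-- The function `z ↦ zʲ exp (-c z²)`, stable under differentiation in `z` and in `c`. -/
noncomputable def gaussianMonomial (j : ℕ) (c z : ℝ) : ℝ := z ^ j * Real.exp (-c * z ^ 2)

lemma continuous_gaussianMonomial (j : ℕ) (c : ℝ) : Continuous (gaussianMonomial j c) := by
  unfold gaussianMonomial
  fun_prop

lemma hasDerivAt_gaussianMonomial (j : ℕ) (c z : ℝ) :
    HasDerivAt (gaussianMonomial j c)
      (j * gaussianMonomial (j - 1) c z - 2 * c * gaussianMonomial (j + 1) c z) z := by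
  have hpow := hasDerivAt_pow j z
  have hexp := ((hasDerivAt_pow 2 z).const_mul (-c)).exp
  refine (hpow.mul hexp).congr_deriv ?_
  simp only [gaussianMonomial]
  push_cast
  ring

lemma hasDerivAt_gaussianMonomial_param (j : ℕ) (c z : ℝ) :
    HasDerivAt (fun c => gaussianMonomial j c z) (-gaussianMonomial (j + 2) c z) c := by
  have hexp := ((hasDerivAt_neg c).mul_const (z ^ 2)).exp
  refine (hexp.const_mul (z ^ j)).congr_deriv ?_
  simp only [gaussianMonomial]
  ring

lemma exists_abs_gaussianMonomial_le (j : ℕ) {c : ℝ} (hc : 0 < c) :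
    ∃ M : ℝ, 0 ≤ M ∧ ∀ z : ℝ, |gaussianMonomial j c z| ≤ M * Real.exp (-(c / 2) * z ^ 2) := by
  refine ⟨1 + (j.factorial : ℝ) * (2 / c) ^ j, by positivity, fun z => ?_⟩
  have h_abs : |z| ^ j ≤ 1 + (z ^ 2) ^ j := by
    rw [← sq_abs, ← pow_mul, mul_comm 2 j, pow_mul]
    nlinarith [sq_nonneg (|z| ^ j - 1 / 2), pow_nonneg (abs_nonneg z) j]
  have h_even : (z ^ 2) ^ j ≤ (j.factorial : ℝ) * (2 / c) ^ j * Real.exp (c / 2 * z ^ 2) := by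
    calc (z ^ 2) ^ j
        = (j.factorial : ℝ) * (2 / c) ^ j * ((c / 2 * z ^ 2) ^ j / j.factorial) := by
          rw [mul_pow, div_pow, div_pow]
          field_simp
      _ ≤ _ := by
          gcongr
          exact Real.pow_div_factorial_le_exp (x := c / 2 * z ^ 2) (by positivity) j
  have h_one : 1 ≤ Real.exp (c / 2 * z ^ 2) := Real.one_le_exp (by positivity)
  have h_split : Real.exp (-(c / 2) * z ^ 2)
      = Real.exp (c / 2 * z ^ 2) * Real.exp (-c * z ^ 2) := by
    rw [← Real.exp_add]
    congr 1
    ring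
  rw [gaussianMonomial, abs_mul, abs_pow, Real.abs_exp, h_split, ← mul_assoc]
  gcongr
  nlinarith

lemma exp_neg_half_mul_sq_le {c w z : ℝ} (hc : 0 ≤ c) (h : |w - z| ≤ 1) :
    Real.exp (-(c / 2) * w ^ 2) ≤ Real.exp (c / 2) * Real.exp (-(c / 4) * z ^ 2) := by
  rw [← Real.exp_add, Real.exp_le_exp]
  have h_sq : (w - z) ^ 2 ≤ 1 := (sq_le_one_iff_abs_le_one _).2 h
  nlinarith [mul_nonneg hc (sq_nonneg (2 * w - z)), mul_nonneg hc (sub_nonneg.2 h_sq)]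

lemma integrable_exp_neg_mul_sub_sq {c : ℝ} (hc : 0 < c) (x : ℝ) :
    Integrable (fun y : ℝ => Real.exp (-c * (x - y) ^ 2)) :=
  (integrable_exp_neg_mul_sq hc).comp_sub_left x

/-- The `j`-th Gaussian moment of `q` about `x`, a convolution of `q` with `gaussianMonomial j c`.
The derivatives of the heat semigroup are expressed through these moments. -/
noncomputable def gmoment (q : ℝ → ℝ) (j : ℕ) (c x : ℝ) : ℝ :=
  ∫ y, gaussianMonomial j c (x - y) * q y

section GaussianMoments

variable {q : ℝ → ℝ} {C c : ℝ}

lemma aestronglyMeasurable_gaussianMonomial_mul (hq : Continuous q) (j : ℕ) (c x : ℝ) :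
    AEStronglyMeasurable (fun y => gaussianMonomial j c (x - y) * q y) :=
  (((continuous_gaussianMonomial j c).comp (continuous_const.sub continuous_id)).mul
    hq).aestronglyMeasurable

lemma integrable_gaussianMonomial_mul (hq : Continuous q) (hC : ∀ y, |q y| ≤ C) (j : ℕ)
    (hc : 0 < c) (x : ℝ) : Integrable (fun y => gaussianMonomial j c (x - y) * q y) := by
  obtain ⟨M, -, hM⟩ := exists_abs_gaussianMonomial_le j hc
  refine Integrable.mul_bdd (c := C) ?_ hq.aestronglyMeasurable (Eventually.of_forall hC)
  exact ((integrable_exp_neg_mul_sub_sq (half_pos hc) x).const_mul M).mono'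
    ((continuous_gaussianMonomial j c).comp
      (continuous_const.sub continuous_id)).aestronglyMeasurable
    (Eventually.of_forall fun y => hM (x - y))

lemma exists_abs_gaussianMonomial_mul_le (hC : ∀ y, |q y| ≤ C) (j : ℕ) (hc : 0 < c) :
    ∃ K : ℝ, ∀ x x' y : ℝ, |x' - x| ≤ 1 →
      |gaussianMonomial j c (x' - y) * q y| ≤ K * Real.exp (-(c / 4) * (x - y) ^ 2) := by
  obtain ⟨M, hM0, hM⟩ := exists_abs_gaussianMonomial_le j hc
  have hC0 : 0 ≤ C := (abs_nonneg _).trans (hC 0)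
  refine ⟨M * Real.exp (c / 2) * C, fun x x' y hx => ?_⟩
  have h_exp := exp_neg_half_mul_sq_le (w := x' - y) (z := x - y) hc.le (by simpa using hx)
  calc |gaussianMonomial j c (x' - y) * q y|
      ≤ M * Real.exp (-(c / 2) * (x' - y) ^ 2) * C := by
        rw [abs_mul]
        exact mul_le_mul (hM _) (hC y) (abs_nonneg _) (by positivity)
    _ ≤ M * (Real.exp (c / 2) * Real.exp (-(c / 4) * (x - y) ^ 2)) * C := by gcongr
    _ = _ := by ring

lemma hasDerivAt_gmoment_space (hq : Continuous q) (hC : ∀ y, |q y| ≤ C) (j : ℕ) (hc : 0 < c)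
    (x : ℝ) :
    HasDerivAt (gmoment q j c) (j * gmoment q (j - 1) c x - 2 * c * gmoment q (j + 1) c x) x := by
  obtain ⟨K, hlow⟩ := exists_abs_gaussianMonomial_mul_le hC (j - 1) hc
  obtain ⟨K', hhigh⟩ := exists_abs_gaussianMonomial_mul_le hC (j + 1) hc
  have hint := fun i => integrable_gaussianMonomial_mul hq hC i hc x
  have hmeas := aestronglyMeasurable_gaussianMonomial_mul hq
  have hderiv := (hasDerivAt_integral_of_dominated_loc_of_deriv_le (μ := volume)
    (F := fun x y => gaussianMonomial j c (x - y) * q y)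
    (F' := fun x y => j * (gaussianMonomial (j - 1) c (x - y) * q y)
      - 2 * c * (gaussianMonomial (j + 1) c (x - y) * q y))
    (bound := fun y => (j * K + 2 * c * K') * Real.exp (-(c / 4) * (x - y) ^ 2))
    (Metric.ball_mem_nhds x one_pos) (Eventually.of_forall fun x => hmeas j c x) (hint j)
    (((hmeas (j - 1) c x).const_mul _).sub ((hmeas (j + 1) c x).const_mul _))
    (Eventually.of_forall fun y x' hx' => ?_)
    ((integrable_exp_neg_mul_sub_sq (by positivity) x).const_mul _)
    (Eventually.of_forall fun y x' _ => ?_)).2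
  · refine hderiv.congr_deriv ?_
    rw [integral_sub ((hint _).const_mul _) ((hint _).const_mul _), integral_const_mul,
      integral_const_mul]
    rfl
  · have hx : |x' - x| ≤ 1 := (Real.dist_eq x' x ▸ Metric.mem_ball.1 hx').le
    refine (norm_sub_le _ _).trans ?_
    simp only [Real.norm_eq_abs]
    rw [abs_mul, abs_mul (2 * c), Nat.abs_cast, abs_of_pos (by positivity : 0 < 2 * c), add_mul,
      mul_assoc (j : ℝ), mul_assoc (2 * c)]
    gcongr
    exacts [hlow x x' y hx, hhigh x x' y hx]
  · have h_shift := (hasDerivAt_gaussianMonomial j c (x' - y)).comp x'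
      ((hasDerivAt_id x').sub_const y)
    refine (h_shift.mul_const (q y)).congr_deriv ?_
    ring

lemma hasDerivAt_gmoment_param (hq : Continuous q) (hC : ∀ y, |q y| ≤ C) (j : ℕ) (hc : 0 < c)
    (x : ℝ) : HasDerivAt (fun c => gmoment q j c x) (-gmoment q (j + 2) c x) c := by
  obtain ⟨M, hM0, hM⟩ := exists_abs_gaussianMonomial_le (j + 2) (half_pos hc)
  have hmeas := aestronglyMeasurable_gaussianMonomial_mul hq
  have hderiv := (hasDerivAt_integral_of_dominated_loc_of_deriv_le (μ := volume)
    (F := fun c y => gaussianMonomial j c (x - y) * q y)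
    (F' := fun c y => -(gaussianMonomial (j + 2) c (x - y) * q y))
    (bound := fun y => M * Real.exp (-(c / 2 / 2) * (x - y) ^ 2) * C)
    (Ioi_mem_nhds (half_lt_self hc)) (Eventually.of_forall fun c => hmeas j c x)
    (integrable_gaussianMonomial_mul hq hC j hc x) (hmeas (j + 2) c x).neg
    (Eventually.of_forall fun y c' hc' => ?_)
    (((integrable_exp_neg_mul_sub_sq (by positivity) x).const_mul _).mul_const _)
    (Eventually.of_forall fun y c' _ => ?_)).2
  · rwa [integral_neg] at hderiv
  · have h_anti : |gaussianMonomial (j + 2) c' (x - y)|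
        ≤ |gaussianMonomial (j + 2) (c / 2) (x - y)| := by
      simp only [gaussianMonomial, abs_mul, Real.abs_exp]
      gcongr
      exact le_of_lt hc'
    rw [norm_neg, Real.norm_eq_abs, abs_mul]
    exact mul_le_mul (h_anti.trans (hM _)) (hC y) (abs_nonneg _) (by positivity)
  · exact ((hasDerivAt_gaussianMonomial_param j c' (x - y)).mul_const (q y)).congr_deriv (by ring)

end GaussianMoments

/-! ### The heat semigroup -/

/-- The heat semigroup `exp (t ∂²/∂x²)` applied to `q`, as an average against the standard Gaussian
measure; with this encoding it is `q` itself at `t = 0`. -/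
noncomputable def heat (q : ℝ → ℝ) (t x : ℝ) : ℝ :=
  ∫ ξ, q (x + √(2 * t) * ξ) ∂(gaussianReal 0 1)

/-- The first spatial derivative of `heat q`. The derivatives fall on the Gaussian weight, so that
no regularity of `q` is involved. -/
noncomputable def heatX (q : ℝ → ℝ) (t x : ℝ) : ℝ :=
  (√(2 * t))⁻¹ * ∫ ξ, ξ * q (x + √(2 * t) * ξ) ∂(gaussianReal 0 1)

/-- The second spatial derivative of `heat q`. -/
noncomputable def heatXX (q : ℝ → ℝ) (t x : ℝ) : ℝ :=
  (2 * t)⁻¹ * ∫ ξ, (ξ ^ 2 - 1) * q (x + √(2 * t) * ξ) ∂(gaussianReal 0 1)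

/-- The heat kernel on the line, for the equation `∂u/∂t = ∂²u/∂x²`. -/
noncomputable def heatKernel (t z : ℝ) : ℝ := (√(4 * Real.pi * t))⁻¹ * Real.exp (-z ^ 2 / (4 * t))

lemma heatKernel_eq (t z : ℝ) :
    heatKernel t z = (√(4 * Real.pi * t))⁻¹ * Real.exp (-(4 * t)⁻¹ * z ^ 2) := by
  rw [heatKernel]; congr 2; rw [neg_div, div_eq_inv_mul]; ring

lemma heatKernel_nonneg (t z : ℝ) : 0 ≤ heatKernel t z := by
  unfold heatKernel; positivity

lemma continuous_heatKernel (t : ℝ) : Continuous (heatKernel t) := by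
  unfold heatKernel; fun_prop

lemma integrable_heatKernel {t : ℝ} (ht : 0 < t) (x : ℝ) :
    Integrable (fun y => heatKernel t (x - y)) := by
  simp only [heatKernel_eq]
  exact (integrable_exp_neg_mul_sub_sq (by positivity) x).const_mul _

lemma continuousAt_heatKernel_time {t : ℝ} (ht : 0 < t) (z : ℝ) :
    ContinuousAt (fun t => heatKernel t z) t := by
  unfold heatKernel
  fun_prop (disch := positivity)

lemma heatKernel_le_inv_sqrt {t : ℝ} (ht : 0 ≤ t) (z : ℝ) :
    heatKernel t z ≤ (√(4 * Real.pi * t))⁻¹ := by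
  unfold heatKernel
  refine mul_le_of_le_one_right (by positivity) (Real.exp_le_one_iff.2 ?_)
  rw [neg_div]
  exact neg_nonpos.2 (by positivity)

lemma heatKernel_le_mul_heatKernel {τ h : ℝ} (hτ : 0 < τ) (hh : τ ≤ h) (z : ℝ) :
    heatKernel τ z ≤ √(h / τ) * heatKernel h z := by
  have hh0 : 0 < h := hτ.trans_le hh
  have h_prefactor : √(h / τ) * (√(4 * Real.pi * h))⁻¹ = (√(4 * Real.pi * τ))⁻¹ := by
    rw [← Real.sqrt_inv, ← Real.sqrt_inv, ← Real.sqrt_mul (by positivity)]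
    congr 1; field_simp
  unfold heatKernel
  rw [← mul_assoc, h_prefactor]
  gcongr ?_ * Real.exp ?_
  rw [neg_div, neg_div]
  gcongr

lemma gaussianReal_map_add_mul_sqrt {t : ℝ} (ht : 0 ≤ t) (x : ℝ) :
    (gaussianReal 0 1).map (fun ξ => x + √(2 * t) * ξ) = gaussianReal x (2 * t).toNNReal := by
  have h_comp : (fun ξ => x + √(2 * t) * ξ) = (fun z => x + z) ∘ (fun ξ => √(2 * t) * ξ) := rfl
  rw [h_comp, ← Measure.map_map (by fun_prop) (by fun_prop), gaussianReal_map_const_mul,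
    gaussianReal_map_const_add]
  congr 1
  · simp
  · ext
    rw [mul_one, NNReal.coe_mk, Real.sq_sqrt (by positivity), Real.coe_toNNReal _ (by positivity)]

lemma integral_gaussianReal_comp_eq {t : ℝ} (ht : 0 < t) (x : ℝ) (g : ℝ → ℝ) :
    ∫ ξ, g (x + √(2 * t) * ξ) ∂(gaussianReal 0 1) = ∫ y, heatKernel t (x - y) * g y := by
  have hs : √(2 * t) ≠ 0 := (Real.sqrt_pos.2 (by positivity)).ne'
  let affine : ℝ ≃ᵐ ℝ := ((Homeomorph.mulLeft₀ _ hs).trans (Homeomorph.addLeft x)).toMeasurableEquiv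
  have h_map : ∫ y, g y ∂((gaussianReal 0 1).map (fun ξ => x + √(2 * t) * ξ))
      = ∫ ξ, g (x + √(2 * t) * ξ) ∂(gaussianReal 0 1) := affine.measurableEmbedding.integral_map g
  rw [← h_map, gaussianReal_map_add_mul_sqrt ht.le, integral_gaussianReal_eq_integral_smul
    (by simpa using ht)]
  refine integral_congr_ae (Eventually.of_forall fun y => ?_)
  simp only [gaussianPDFReal, heatKernel, smul_eq_mul,
    Real.coe_toNNReal _ (by positivity : 0 ≤ 2 * t)]
  congr 3
  · congr 1; ring
  · congr 1 <;> ring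

lemma integral_mul_gaussianReal_comp_eq {t : ℝ} (ht : 0 < t) (x : ℝ) (p g : ℝ → ℝ) :
    ∫ ξ, p ξ * g (x + √(2 * t) * ξ) ∂(gaussianReal 0 1)
      = ∫ y, heatKernel t (x - y) * (p ((y - x) / √(2 * t)) * g y) := by
  have hs : √(2 * t) ≠ 0 := (Real.sqrt_pos.2 (by positivity)).ne'
  rw [← integral_gaussianReal_comp_eq ht x (fun y => p ((y - x) / √(2 * t)) * g y)]
  simp only [add_sub_cancel_left, mul_div_cancel_left₀ _ hs]

lemma heat_eq_integral_heatKernel {t : ℝ} (ht : 0 < t) (q : ℝ → ℝ) (x : ℝ) :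
    heat q t x = ∫ y, heatKernel t (x - y) * q y :=
  integral_gaussianReal_comp_eq ht x q

lemma heat_eq_gmoment {t : ℝ} (ht : 0 < t) (q : ℝ → ℝ) (x : ℝ) :
    heat q t x = (√(4 * Real.pi * t))⁻¹ * gmoment q 0 (4 * t)⁻¹ x := by
  rw [heat_eq_integral_heatKernel ht, gmoment, ← integral_const_mul]
  congr 1 with y
  rw [heatKernel_eq, gaussianMonomial]; ring

lemma heatX_eq_gmoment {t : ℝ} (ht : 0 < t) (q : ℝ → ℝ) (x : ℝ) :
    heatX q t x = (√(4 * Real.pi * t))⁻¹ * (-(2 * t)⁻¹ * gmoment q 1 (4 * t)⁻¹ x) := by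
  rw [heatX, integral_mul_gaussianReal_comp_eq ht x (fun ξ => ξ), gmoment, ← integral_const_mul,
    ← integral_const_mul, ← integral_const_mul]
  congr 1 with y
  have h_inv : (√(2 * t))⁻¹ * (√(2 * t))⁻¹ = (2 * t)⁻¹ := by
    rw [← mul_inv, Real.mul_self_sqrt (by positivity)]
  rw [heatKernel_eq, gaussianMonomial, div_eq_mul_inv]
  linear_combination ((√(4 * Real.pi * t))⁻¹ * Real.exp (-(4 * t)⁻¹ * (x - y) ^ 2) * (y - x) * q y)
    * h_inv

section HeatSemigroup

variable {q : ℝ → ℝ} {C t : ℝ}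

lemma heatXX_eq_gmoment (hq : Continuous q) (hC : ∀ y, |q y| ≤ C) (ht : 0 < t) (x : ℝ) :
    heatXX q t x = (√(4 * Real.pi * t))⁻¹ * (-(2 * t)⁻¹ * gmoment q 0 (4 * t)⁻¹ x
      + (2 * t)⁻¹ ^ 2 * gmoment q 2 (4 * t)⁻¹ x) := by
  have hint := fun j => integrable_gaussianMonomial_mul hq hC j (inv_pos.2 (mul_pos four_pos ht)) x
  rw [heatXX, integral_mul_gaussianReal_comp_eq ht x (fun ξ => ξ ^ 2 - 1), gmoment, gmoment,
    ← integral_const_mul, ← integral_const_mul, ← integral_const_mul,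
    ← integral_add ((hint 0).const_mul _) ((hint 2).const_mul _), ← integral_const_mul]
  congr 1 with y
  have h_inv : (√(2 * t))⁻¹ ^ 2 = (2 * t)⁻¹ := by
    rw [inv_pow, Real.sq_sqrt (by positivity)]
  rw [heatKernel_eq, div_eq_mul_inv, mul_pow, h_inv, gaussianMonomial, gaussianMonomial]
  ring

lemma hasDerivAt_heat_space (hq : Continuous q) (hC : ∀ y, |q y| ≤ C) (ht : 0 < t) (x : ℝ) :
    HasDerivAt (heat q t) (heatX q t x) x := by
  have hderiv := (hasDerivAt_gmoment_space hq hC 0 (c := (4 * t)⁻¹) (by positivity) x).const_mul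
    (√(4 * Real.pi * t))⁻¹
  rw [funext (heat_eq_gmoment ht q), heatX_eq_gmoment ht]
  refine hderiv.congr_deriv ?_
  push_cast
  field_simp
  ring

lemma hasDerivAt_heatX_space (hq : Continuous q) (hC : ∀ y, |q y| ≤ C) (ht : 0 < t) (x : ℝ) :
    HasDerivAt (heatX q t) (heatXX q t x) x := by
  have hderiv := ((hasDerivAt_gmoment_space hq hC 1 (c := (4 * t)⁻¹) (by positivity) x).const_mul
    (-(2 * t)⁻¹)).const_mul (√(4 * Real.pi * t))⁻¹
  rw [funext (heatX_eq_gmoment ht q), heatXX_eq_gmoment hq hC ht]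
  refine hderiv.congr_deriv ?_
  push_cast
  field_simp
  ring

lemma hasDerivAt_heat_time (hq : Continuous q) (hC : ∀ y, |q y| ≤ C) (ht : 0 < t) (x : ℝ) :
    HasDerivAt (fun t => heat q t x) (heatXX q t x) t := by
  have hc : HasDerivAt (fun t : ℝ => (4 * t)⁻¹) (-(4:ℝ) / (4 * t) ^ 2) t :=
    (((hasDerivAt_id t).const_mul (4:ℝ)).inv (by simpa using ht.ne')).congr_deriv (by simp)
  have h_moment := (hasDerivAt_gmoment_param hq hC 0 (c := (4 * t)⁻¹) (by positivity) x).comp t hc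
  have hpos : 0 < 4 * Real.pi * t := by positivity
  have h_linear : HasDerivAt (fun t : ℝ => 4 * Real.pi * t) (4 * Real.pi) t := by
    simpa using (hasDerivAt_id t).const_mul (4 * Real.pi)
  have h_sqrt_ne := (Real.sqrt_pos.2 hpos).ne'
  have h_prefactor := (h_linear.sqrt hpos.ne').inv h_sqrt_ne
  have h_eq : (fun t => heat q t x) =ᶠ[𝓝 t]
      fun t => (√(4 * Real.pi * t))⁻¹ * gmoment q 0 (4 * t)⁻¹ x := by
    filter_upwards [Ioi_mem_nhds ht] with s hs
    exact heat_eq_gmoment hs q x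
  refine ((h_prefactor.mul h_moment).congr_of_eventuallyEq h_eq).congr_deriv ?_
  rw [heatXX_eq_gmoment hq hC ht]
  simp only [Function.comp_def, zero_add, Pi.inv_apply]
  rw [Real.sq_sqrt hpos.le]
  field_simp
  ring

lemma heat_zero (q : ℝ → ℝ) (x : ℝ) : heat q 0 x = q x := by
  simp [heat]

lemma integrable_heat (hq : Continuous q) (hC : ∀ y, |q y| ≤ C) (t x : ℝ) :
    Integrable (fun ξ => q (x + √(2 * t) * ξ)) (gaussianReal 0 1) :=
  (integrable_const C).mono' (by fun_prop) (Eventually.of_forall fun ξ => hC _)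

lemma continuous_heat (hq : Continuous q) (hC : ∀ y, |q y| ≤ C) :
    Continuous (fun p : ℝ × ℝ => heat q p.1 p.2) :=
  continuous_of_dominated (bound := fun _ => C) (fun p => by fun_prop)
    (fun p => Eventually.of_forall fun ξ => hC _) (integrable_const C)
    (Eventually.of_forall fun ξ => by fun_prop)

lemma heat_le {M : ℝ} (hq : Continuous q) (hC : ∀ y, |q y| ≤ C) (hM : ∀ y, q y ≤ M) (t x : ℝ) :
    heat q t x ≤ M := by
  have h := integral_mono (integrable_heat hq hC t x) (integrable_const M) (fun ξ => hM _)
  simpa [heat] using h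

lemma heat_nonneg (h0 : ∀ y, 0 ≤ q y) (t x : ℝ) : 0 ≤ heat q t x :=
  integral_nonneg fun _ => h0 _

lemma abs_heat_le (hC : ∀ y, |q y| ≤ C) (t x : ℝ) : |heat q t x| ≤ C := by
  have h := norm_integral_le_of_norm_le_const (μ := gaussianReal 0 1)
    (f := fun ξ => q (x + √(2 * t) * ξ)) (C := C) (Eventually.of_forall fun ξ => hC _)
  simpa [heat] using h

lemma integrable_heatKernel_mul (hq : Continuous q) (hC : ∀ y, |q y| ≤ C) (ht : 0 < t) (x : ℝ) :
    Integrable (fun y => heatKernel t (x - y) * q y) :=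
  (integrable_heatKernel ht x).mul_bdd (c := C) hq.aestronglyMeasurable
    (Eventually.of_forall fun y => hC y)

lemma heat_le_mul_heat (hq : Continuous q) (hC : ∀ y, |q y| ≤ C) (h0 : ∀ y, 0 ≤ q y) {τ h : ℝ}
    (hτ : 0 < τ) (hh : τ ≤ h) (x : ℝ) : heat q τ x ≤ √(h / τ) * heat q h x := by
  have hh0 : 0 < h := hτ.trans_le hh
  rw [heat_eq_integral_heatKernel hτ, heat_eq_integral_heatKernel hh0, ← integral_const_mul]
  refine integral_mono (integrable_heatKernel_mul hq hC hτ x)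
    ((integrable_heatKernel_mul hq hC hh0 x).const_mul _) fun y => ?_
  rw [← mul_assoc]
  exact mul_le_mul_of_nonneg_right (heatKernel_le_mul_heatKernel hτ hh (x - y)) (h0 y)

lemma integrable_pow_gaussianReal (n : ℕ) :
    Integrable (fun ξ : ℝ => ξ ^ n) (gaussianReal 0 1) := by
  rcases Nat.eq_zero_or_pos n with rfl | hn
  · simp
  · refine ((memLp_id_gaussianReal (μ := 0) (v := 1) n).integrable_norm_pow hn.ne').mono'
      (by fun_prop) (Eventually.of_forall fun ξ => ?_)
    simp

lemma integrable_abs_gaussianReal : Integrable (fun ξ : ℝ => |ξ|) (gaussianReal 0 1) := by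
  simpa using (integrable_pow_gaussianReal 1).abs

lemma heat_le_add_of_lipschitzWith {L : ℝ≥0} (hC : ∀ y, |q y| ≤ C) (hL : LipschitzWith L q)
    (t x : ℝ) : heat q t x ≤ q x + L * √(2 * t) * ∫ ξ, |ξ| ∂(gaussianReal 0 1) := by
  have h_slope := integrable_abs_gaussianReal.const_mul (L * √(2 * t))
  have h_pointwise : ∀ ξ, q (x + √(2 * t) * ξ) ≤ q x + L * √(2 * t) * |ξ| := fun ξ => by
    have := (le_abs_self _).trans (hL.dist_le_mul (x + √(2 * t) * ξ) x)
    rw [Real.dist_eq, add_sub_cancel_left, abs_mul, abs_of_nonneg (Real.sqrt_nonneg _)] at this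
    linarith
  calc heat q t x ≤ ∫ ξ, (q x + L * √(2 * t) * |ξ|) ∂(gaussianReal 0 1) :=
        integral_mono (integrable_heat hL.continuous hC t x) ((integrable_const _).add h_slope)
          h_pointwise
    _ = _ := by
        rw [integral_add (integrable_const _) h_slope, integral_const_mul]
        simp

end HeatSemigroup

/-! ### One-sided induction and Baire category on the line -/

lemma eventually_lt_of_hasDerivAt_pos {g : ℝ → ℝ} {g' x : ℝ} (h : HasDerivAt g g' x)
    (hg' : 0 < g') : ∀ᶠ y in 𝓝[<] x, g y < g x := by
  have h_slope := ((hasDerivAt_iff_tendsto_slope.1 h).eventually (lt_mem_nhds hg')).filter_mono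
    (nhdsWithin_mono x fun y (hy : y < x) => hy.ne)
  filter_upwards [h_slope, self_mem_nhdsWithin] with y hy hyx
  rw [slope_def_field, ← neg_div_neg_eq, neg_sub, neg_sub] at hy
  exact sub_pos.1 ((div_pos_iff_of_pos_right (sub_pos.2 hyx)).1 hy)

lemma second_deriv_nonneg_of_isLocalMin {g g' : ℝ → ℝ} {g'' x : ℝ}
    (hg : ∀ y, HasDerivAt g (g' y) y) (hg' : HasDerivAt g' g'' x) (hmin : IsLocalMin g x) :
    0 ≤ g'' := by
  by_contra! hneg
  have h_deriv : deriv g = g' := funext fun y => (hg y).deriv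
  have hmax : IsLocalMax g x := by
    refine isLocalMax_of_deriv_deriv_neg ?_ hmin.deriv_eq_zero (hg x).continuousAt
    rwa [h_deriv, hg'.deriv]
  have h_const : g =ᶠ[𝓝 x] fun _ => g x := by
    filter_upwards [hmin, hmax] with y hy hy' using le_antisymm hy' hy
  have h_zero : g' =ᶠ[𝓝 x] fun _ => 0 := by
    filter_upwards [h_const.eventuallyEq_nhds] with y hy
    exact (hg y).unique ((hasDerivAt_const y (g x)).congr_of_eventuallyEq hy)
  exact hneg.ne (hg'.unique ((hasDerivAt_const x (0 : ℝ)).congr_of_eventuallyEq h_zero))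

lemma of_frequently_left_right {P : ℝ → Prop} {s t : ℝ} (hst : s ≤ t) (hs : P s)
    (hright : ∀ τ ∈ Ico s t, P τ → ∃ᶠ r in 𝓝[>] τ, P r)
    (hleft : ∀ τ ∈ Ioc s t, (∃ᶠ r in 𝓝[<] τ, P r) → P τ) : P t := by
  set S : Set ℝ := {r ∈ Icc s t | P r}
  have hsS : s ∈ S := ⟨left_mem_Icc.2 hst, hs⟩
  have hlub : IsLUB S (sSup S) := isLUB_csSup ⟨s, hsS⟩ ⟨t, fun r hr => hr.1.2⟩
  have hc : sSup S ∈ Icc s t := ⟨hlub.1 hsS, hlub.2 fun r hr => hr.1.2⟩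
  have hPc : P (sSup S) := by
    by_contra hP
    have hne : ∀ r, P r → r ≠ sSup S := fun r hr he => hP (he ▸ hr)
    refine hP (hleft _ ⟨lt_of_le_of_ne hc.1 (hne s hs), hc.2⟩ ?_)
    have hfreq := hlub.frequently_mem ⟨s, hsS⟩
    rw [frequently_nhdsWithin_iff] at hfreq ⊢
    exact hfreq.mono fun r hr => ⟨hr.1.2, lt_of_le_of_ne hr.2 (hne r hr.1.2)⟩
  rcases hc.2.eq_or_lt with heq | hlt
  · rwa [← heq]
  · obtain ⟨r, hr, hrt⟩ := ((hright _ ⟨hc.1, hlt⟩ hPc).and_eventually (Ioo_mem_nhdsGT hlt)).exists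
    exact absurd (hlub.1 ⟨⟨hc.1.trans hrt.1.le, hrt.2.le⟩, hr⟩) (not_le.2 hrt.1)

lemma exists_isOpen_inter_subset_of_subset_iUnion {X ι : Type*} [TopologicalSpace X] [Countable ι]
    {C : Set X} [BaireSpace C] (hC : C.Nonempty) {E : ι → Set X}
    (hE : ∀ i, IsClosed (Subtype.val ⁻¹' E i : Set C)) (hcover : C ⊆ ⋃ i, E i) :
    ∃ i U, IsOpen U ∧ (U ∩ C).Nonempty ∧ U ∩ C ⊆ E i := by
  have : Nonempty C := hC.to_subtype
  have h_univ : ⋃ i, (Subtype.val ⁻¹' E i : Set C) = univ := by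
    rw [← preimage_iUnion, eq_univ_iff_forall]
    exact fun x => hcover x.2
  obtain ⟨i, x, hx⟩ := nonempty_interior_of_iUnion_of_closed hE h_univ
  obtain ⟨U, hU, hUE⟩ := isOpen_induced_iff.1 (isOpen_interior (s := (Subtype.val ⁻¹' E i : Set C)))
  refine ⟨i, U, hU, ⟨x, ?_, x.2⟩, fun y hy => ?_⟩
  · exact hUE.symm.subset hx
  · exact interior_subset (s := (Subtype.val ⁻¹' E i : Set C)) (a := ⟨y, hy.2⟩) (hUE.subset hy.1)

/-- The closure of the bad times is covered by the `E n`, so by Baire one `E n` contains a portion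
of it; inside that portion, the last point `r ≤ t` of the closure is followed by good times only. -/
lemma forall_of_baire {J : Set ℝ} (hJ : ∀ t ∈ J, ∃ d, t < d ∧ Icc t d ⊆ J) {Good : ℝ → Prop}
    {E : ℕ → Set ℝ} (hclosed : ∀ n, IsClosed (Subtype.val ⁻¹' E n : Set J)) (hcover : J ⊆ ⋃ n, E n)
    (hstep : ∀ t₀ ∈ J, ∀ n d, t₀ < d → t₀ ∈ E n →
      (∀ t ∈ Ico t₀ d, ∃ r ∈ Icc t₀ t, r ∈ E n ∧ ∀ τ ∈ Ioo r t, Good τ) → Good t₀) :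
    ∀ t ∈ J, Good t := by
  intro s hs
  by_contra hbad
  obtain ⟨e, hse, heJ⟩ := hJ s hs
  set B : Set ℝ := {t ∈ Ico s e | ¬ Good t}
  have hsB : s ∈ closure B := subset_closure ⟨left_mem_Ico.2 hse, hbad⟩
  have hBJ : closure B ⊆ J :=
    (closure_minimal (fun t ht => Ico_subset_Icc_self ht.1) isClosed_Icc).trans heJ
  have : CompleteSpace (closure B) := isClosed_closure.completeSpace_coe
  obtain ⟨n, U, hU, ⟨t, htU, htB⟩, hUE⟩ := exists_isOpen_inter_subset_of_subset_iUnion ⟨s, hsB⟩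
    (fun n => (hclosed n).preimage (continuous_inclusion hBJ)) (hBJ.trans hcover)
  obtain ⟨t₁, ht₁U, ht₁, ht₁bad⟩ := mem_closure_iff.1 htB U hU htU
  have ht₁B : t₁ ∈ closure B := subset_closure ⟨ht₁, ht₁bad⟩
  obtain ⟨d₁, hd₁, hd₁U⟩ := exists_Ico_subset_of_mem_nhds (hU.mem_nhds ht₁U) (exists_gt t₁)
  refine ht₁bad (hstep t₁ (hBJ ht₁B) n (min d₁ e) (lt_min hd₁ ht₁.2) (hUE ⟨ht₁U, ht₁B⟩)
    fun t ht => ?_)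
  have hcomp : IsCompact (closure B ∩ Icc t₁ t) := isCompact_Icc.inter_left isClosed_closure
  have hlast := hcomp.sSup_mem ⟨t₁, ht₁B, left_mem_Icc.2 ht.1⟩
  have htd := lt_min_iff.1 ht.2
  refine ⟨_, hlast.2, hUE ⟨hd₁U ⟨hlast.2.1, hlast.2.2.trans_lt htd.1⟩, hlast.1⟩,
    fun τ hτ => ?_⟩
  by_contra hτbad
  have hτ₁ : t₁ ≤ τ := hlast.2.1.trans hτ.1.le
  have hτB : τ ∈ closure B :=
    subset_closure ⟨⟨ht₁.1.trans hτ₁, hτ.2.trans htd.2⟩, hτbad⟩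
  exact absurd (le_csSup hcomp.bddAbove ⟨hτB, hτ₁, hτ.2.le⟩) (not_le.2 hτ.1)

/-! ### Functions with separate parabolic regularity -/

/-- `z` is continuous separately in time and in space on `[a, b) × ℝ`, and on `(a, b) × ℝ` it has
time derivative `zt` and first and second space derivatives `zx` and `zxx`. -/
structure ParabolicOn (a b : ℝ) (z zt zx zxx : ℝ → ℝ → ℝ) : Prop where
  cont_time : ∀ x, ContinuousOn (fun t => z t x) (Ico a b)
  cont_space : ∀ t ∈ Ico a b, Continuous (z t)
  deriv_time : ∀ t ∈ Ioo a b, ∀ x, HasDerivAt (fun s => z s x) (zt t x) t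
  deriv_space : ∀ t ∈ Ioo a b, ∀ x, HasDerivAt (z t) (zx t x) x
  deriv_space₂ : ∀ t ∈ Ioo a b, ∀ x, HasDerivAt (zx t) (zxx t x) x

namespace ParabolicOn

variable {a b : ℝ} {z zt zx zxx w wt wx wxx : ℝ → ℝ → ℝ}

lemma mono (h : ParabolicOn a b z zt zx zxx) {a' b' : ℝ} (ha : a ≤ a') (hb : b' ≤ b) :
    ParabolicOn a' b' z zt zx zxx where
  cont_time x := (h.cont_time x).mono (Ico_subset_Ico ha hb)
  cont_space t ht := h.cont_space t (Ico_subset_Ico ha hb ht)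
  deriv_time t ht := h.deriv_time t (Ioo_subset_Ioo ha hb ht)
  deriv_space t ht := h.deriv_space t (Ioo_subset_Ioo ha hb ht)
  deriv_space₂ t ht := h.deriv_space₂ t (Ioo_subset_Ioo ha hb ht)

lemma add (hz : ParabolicOn a b z zt zx zxx) (hw : ParabolicOn a b w wt wx wxx) :
    ParabolicOn a b (fun t x => z t x + w t x) (fun t x => zt t x + wt t x)
      (fun t x => zx t x + wx t x) (fun t x => zxx t x + wxx t x) where
  cont_time x := (hz.cont_time x).add (hw.cont_time x)
  cont_space t ht := (hz.cont_space t ht).add (hw.cont_space t ht)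
  deriv_time t ht x := (hz.deriv_time t ht x).add (hw.deriv_time t ht x)
  deriv_space t ht x := (hz.deriv_space t ht x).add (hw.deriv_space t ht x)
  deriv_space₂ t ht x := (hz.deriv_space₂ t ht x).add (hw.deriv_space₂ t ht x)

lemma time_mul (hz : ParabolicOn a b z zt zx zxx) {c c' : ℝ → ℝ} (hc : ContinuousOn c (Ico a b))
    (hc' : ∀ t ∈ Ioo a b, HasDerivAt c (c' t) t) :
    ParabolicOn a b (fun t x => c t * z t x) (fun t x => c' t * z t x + c t * zt t x)
      (fun t x => c t * zx t x) (fun t x => c t * zxx t x) where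
  cont_time x := hc.mul (hz.cont_time x)
  cont_space t ht := (hz.cont_space t ht).const_mul (c t)
  deriv_time t ht x := (hc' t ht).mul (hz.deriv_time t ht x)
  deriv_space t ht x := (hz.deriv_space t ht x).const_mul (c t)
  deriv_space₂ t ht x := (hz.deriv_space₂ t ht x).const_mul (c t)

lemma sub (hz : ParabolicOn a b z zt zx zxx) (hw : ParabolicOn a b w wt wx wxx) :
    ParabolicOn a b (fun t x => z t x - w t x) (fun t x => zt t x - wt t x)
      (fun t x => zx t x - wx t x) (fun t x => zxx t x - wxx t x) where
  cont_time x := (hz.cont_time x).sub (hw.cont_time x)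
  cont_space t ht := (hz.cont_space t ht).sub (hw.cont_space t ht)
  deriv_time t ht x := (hz.deriv_time t ht x).sub (hw.deriv_time t ht x)
  deriv_space t ht x := (hz.deriv_space t ht x).sub (hw.deriv_space t ht x)
  deriv_space₂ t ht x := (hz.deriv_space₂ t ht x).sub (hw.deriv_space₂ t ht x)

end ParabolicOn

lemma parabolicOn_time {a b : ℝ} {c c' : ℝ → ℝ} (hc : ContinuousOn c (Ico a b))
    (hc' : ∀ t ∈ Ioo a b, HasDerivAt c (c' t) t) :
    ParabolicOn a b (fun t _ => c t) (fun t _ => c' t) (fun _ _ => 0) (fun _ _ => 0) where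
  cont_time _ := hc
  cont_space _ _ := continuous_const
  deriv_time t ht _ := hc' t ht
  deriv_space _ _ x := hasDerivAt_const x _
  deriv_space₂ _ _ x := hasDerivAt_const x _

lemma parabolicOn_heat {q : ℝ → ℝ} {C : ℝ} (hq : Continuous q) (hC : ∀ y, |q y| ≤ C) (a b : ℝ) :
    ParabolicOn a b (fun t x => heat q (t - a) x) (fun t x => heatXX q (t - a) x)
      (fun t x => heatX q (t - a) x) (fun t x => heatXX q (t - a) x) where
  cont_time x := ((continuous_heat hq hC).comp
    (by fun_prop : Continuous fun t : ℝ => (t - a, x))).continuousOn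
  cont_space t _ := (continuous_heat hq hC).comp
    (by fun_prop : Continuous fun x : ℝ => (t - a, x))
  deriv_time t ht x := (hasDerivAt_heat_time hq hC (sub_pos.2 ht.1) x).comp_sub_const t a
  deriv_space t ht x := hasDerivAt_heat_space hq hC (sub_pos.2 ht.1) x
  deriv_space₂ t ht x := hasDerivAt_heatX_space hq hC (sub_pos.2 ht.1) x

/-! ### The comparison principle under separate regularity -/

/-- A supersolution of the heat equation wherever it is negative, bounded below, and nonnegative
outside `[-R, R]`. Solutions are only separately continuous, so its minimum over `[-R, R]` need not
depend continuously on time. -/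
structure ConfinedSupersolution (a b R C : ℝ) (z zt zx zxx : ℝ → ℝ → ℝ) : Prop
    extends ParabolicOn a b z zt zx zxx where
  lower : ∀ t ∈ Ico a b, ∀ x, -C ≤ z t x
  outside : ∀ t ∈ Ico a b, ∀ x, R ≤ |x| → 0 ≤ z t x
  ineq : ∀ t ∈ Ioo a b, ∀ x, z t x < 0 → zxx t x ≤ zt t x

/-- Upper semicontinuity of `N` from the right at time `τ`, uniformly in space. -/
def UpperRight (N : ℝ → ℝ → ℝ) (τ : ℝ) : Prop :=
  ∀ ε > 0, ∀ᶠ t in 𝓝[>] τ, ∀ x, N t x ≤ N τ x + ε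

lemma eventually_le_add_of_lipschitzWith {N : ℝ → ℝ → ℝ} {t₀ ε : ℝ} {L : ℝ≥0} {K : Set ℝ}
    (hK : IsCompact K) (hN : ∀ x, ContinuousAt (fun t => N t x) t₀) (hL : LipschitzWith L (N t₀))
    (hε : 0 < ε) :
    ∀ᶠ t in 𝓝 t₀, ∀ x ∈ K, LipschitzWith L (N t) → N t x ≤ N t₀ x + ε := by
  refine hK.eventually_forall_of_forall_eventually
    (P := fun t x => LipschitzWith L (N t) → N t x ≤ N t₀ x + ε) fun x _ => ?_
  have h_time : ∀ᶠ t in 𝓝 t₀, N t x < N t₀ x + ε / 2 :=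
    (hN x).eventually (gt_mem_nhds (by linarith))
  have h_space : ∀ᶠ y in 𝓝 x, L * dist y x < ε / 4 :=
    (by fun_prop : Continuous fun y => L * dist y x).continuousAt.eventually
      (gt_mem_nhds (by simpa using hε))
  rw [nhds_prod_eq]
  filter_upwards [h_time.prod_mk h_space] with ⟨t, y⟩ ⟨ht, hy⟩ hLt
  have h_left := (le_abs_self _).trans (hLt.dist_le_mul y x)
  have h_right := (neg_abs_le _).trans' (neg_le_neg (hL.dist_le_mul y x))
  simp only at ht hy h_left h_right
  linarith

namespace ConfinedSupersolution

variable {a b R C s t : ℝ} {z zt zx zxx : ℝ → ℝ → ℝ}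

lemma continuous_negPart (h : ConfinedSupersolution a b R C z zt zx zxx) (ht : t ∈ Ico a b) :
    Continuous (z t)⁻ :=
  (h.cont_space t ht).neg.max continuous_const

lemma continuousOn_negPart (h : ConfinedSupersolution a b R C z zt zx zxx) (x : ℝ) :
    ContinuousOn (fun t => (z t)⁻ x) (Ico a b) :=
  (h.cont_time x).neg.sup continuousOn_const

lemma negPart_eq_zero (h : ConfinedSupersolution a b R C z zt zx zxx) (ht : t ∈ Ico a b) {x : ℝ}
    (hx : R ≤ |x|) : (z t)⁻ x = 0 :=
  negPart_of_nonneg (h.outside t ht x hx)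

lemma abs_negPart_le (h : ConfinedSupersolution a b R C z zt zx zxx) (ht : t ∈ Ico a b) (x : ℝ) :
    |(z t)⁻ x| ≤ |C| := by
  rw [abs_of_nonneg (show 0 ≤ (z t)⁻ x from negPart_nonneg (z t x))]
  exact max_le ((neg_le.1 (h.lower t ht x)).trans (le_abs_self C)) (abs_nonneg C)

lemma abs_lt_of_neg (h : ConfinedSupersolution a b R C z zt zx zxx) (ht : t ∈ Ico a b) {x : ℝ}
    (hx : z t x < 0) : |x| < R := by
  by_contra! hR
  exact (h.outside t ht x hR).not_gt hx

section Barrier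

variable {ψ ψt ψx ψxx : ℝ → ℝ → ℝ} {κ : ℝ}

lemma eventually_barrier_of_upperRight (h : ConfinedSupersolution a b R C z zt zx zxx)
    (hs : s ∈ Ico a b) (hψ : Continuous (Function.uncurry ψ)) (hψ0 : ∀ r ∈ Ico s b, ∀ x, 0 ≤ ψ r x)
    (hκ : 0 < κ) (hU : UpperRight (fun r => (z r)⁻) s) (hbar : ∀ x, -κ < z s x + ψ s x) :
    ∀ᶠ r in 𝓝[>] s, ∀ x, -κ < z r x + ψ r x := by
  have hψs : Continuous (ψ s) := hψ.comp (by fun_prop : Continuous fun x : ℝ => (s, x))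
  obtain ⟨c, hκc, hc⟩ := (isCompact_Icc (a := -R) (b := R)).exists_forall_le'
    ((h.cont_space s hs).add hψs).continuousOn fun x _ => hbar x
  obtain ⟨e, he, hec⟩ := exists_between (lt_min (half_pos hκ) (half_pos (neg_lt_iff_pos_add.1 hκc)))
  rw [lt_min_iff] at hec
  have hψ_near : ∀ᶠ r in 𝓝[>] s, ∀ x ∈ Icc (-R) R, ψ s x - e < ψ r x := by
    refine (isCompact_Icc.eventually_forall_of_forall_eventually
      (P := fun r x => ψ s x - e < ψ r x) fun x _ => ?_).filter_mono nhdsWithin_le_nhds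
    have hcont : Continuous fun p : ℝ × ℝ => Function.uncurry ψ p - ψ s p.2 := by fun_prop
    have h_at : -e < Function.uncurry ψ (s, x) - ψ s x := by simpa using he
    filter_upwards [hcont.continuousAt.eventually (lt_mem_nhds h_at)] with p hp
    simp only [Function.uncurry] at hp
    linarith
  filter_upwards [hU e he, hψ_near, Ioo_mem_nhdsGT hs.2] with r hN hψr hr x
  have hψrx := hψ0 r ⟨hr.1.le, hr.2⟩ x
  rcases le_or_gt 0 (z r x) with hz | hz
  · linarith
  have hx : x ∈ Icc (-R) R := abs_le.1 (h.abs_lt_of_neg ⟨hs.1.trans hr.1.le, hr.2⟩ hz).le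
  have hNx : -z r x ≤ (z s x)⁻ + e := (neg_le_negPart _).trans (hN x)
  rcases le_total 0 (z s x) with hzs | hzs
  · rw [negPart_of_nonneg hzs] at hNx
    linarith
  · rw [negPart_of_nonpos hzs] at hNx
    linarith [hψr x hx, show c ≤ z s x + ψ s x from hc x hx]

lemma barrier_of_frequently (h : ConfinedSupersolution a b R C z zt zx zxx) (hs : a ≤ s)
    (hψ : ParabolicOn s b ψ ψt ψx ψxx) (hψ0 : ∀ r ∈ Ico s b, ∀ x, 0 ≤ ψ r x)
    (hψ_super : ∀ r ∈ Ioo s b, ∀ x, ψxx r x < ψt r x) (hκ : 0 < κ) (ht : t ∈ Ioo s b)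
    (hfreq : ∃ᶠ r in 𝓝[<] t, ∀ x, -κ < z r x + ψ r x) (x : ℝ) : -κ < z t x + ψ t x := by
  by_contra! hx
  have htI : t ∈ Ico a b := ⟨hs.trans ht.1.le, ht.2⟩
  have hsum := (h.toParabolicOn.mono hs le_rfl).add hψ
  have hneg : ∀ y, z t y + ψ t y ≤ -κ → z t y < 0 := fun y hy => by
    linarith [hψ0 t (Ioo_subset_Ico_self ht) y]
  have hxR := abs_le.1 (h.abs_lt_of_neg htI (hneg x hx)).le
  obtain ⟨y, -, hmin⟩ := isCompact_Icc.exists_isMinOn (s := Icc (-R) R) ⟨x, hxR⟩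
    (hsum.cont_space t (Ioo_subset_Ico_self ht)).continuousOn
  have hy : z t y + ψ t y ≤ -κ := (hmin hxR).trans hx
  have hyR := abs_lt.1 (h.abs_lt_of_neg htI (hneg y hy))
  have h_space := second_deriv_nonneg_of_isLocalMin (hsum.deriv_space t ht)
    (hsum.deriv_space₂ t ht y) (hmin.isLocalMin (Icc_mem_nhds hyR.1 hyR.2))
  have h_time := eventually_lt_of_hasDerivAt_pos (hsum.deriv_time t ht y) (by
    linarith [h.ineq t ⟨hs.trans_lt ht.1, ht.2⟩ y (hneg y hy), hψ_super t ht y])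
  obtain ⟨r, hr, hrt⟩ := (hfreq.and_eventually h_time).exists
  linarith [hr y]

lemma neg_le_barrier (h : ConfinedSupersolution a b R C z zt zx zxx) (hs : a ≤ s) (hst : s ≤ t)
    (ht : t < b) (hψc : Continuous (Function.uncurry ψ)) (hψ : ParabolicOn s b ψ ψt ψx ψxx)
    (hψ0 : ∀ r ∈ Ico s b, ∀ x, 0 ≤ ψ r x) (hψ_super : ∀ r ∈ Ioo s b, ∀ x, ψxx r x < ψt r x)
    (hinit : ∀ x, -z s x ≤ ψ s x) (hU : ∀ τ ∈ Ico s t, UpperRight (fun r => (z r)⁻) τ) (x : ℝ) :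
    -z t x ≤ ψ t x := by
  refine le_of_forall_pos_le_add fun κ hκ => ?_
  have hbar := of_frequently_left_right (P := fun r => ∀ x, -κ < z r x + ψ r x) hst
    (fun x => by linarith [hinit x])
    (fun τ hτ hbar => (h.eventually_barrier_of_upperRight ⟨hs.trans hτ.1, hτ.2.trans ht⟩ hψc
      (fun r hr => hψ0 r ⟨hτ.1.trans hr.1, hr.2⟩) hκ (hU τ hτ) hbar).frequently)
    (fun τ hτ hfreq => h.barrier_of_frequently hs hψ hψ0 hψ_super hκ ⟨hτ.1, hτ.2.trans_lt ht⟩ hfreq)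
  linarith [hbar x]

end Barrier

lemma negPart_le_heat (h : ConfinedSupersolution a b R C z zt zx zxx) (hs : a ≤ s) (hst : s < t)
    (ht : t < b) (hU : ∀ τ ∈ Ico s t, UpperRight (fun r => (z r)⁻) τ) (x : ℝ) :
    (z t)⁻ x ≤ heat (z s)⁻ (t - s) x := by
  have hsI : s ∈ Ico a b := ⟨hs, hst.trans ht⟩
  have hNc := h.continuous_negPart hsI
  have hNb := h.abs_negPart_le hsI
  have hheat0 := heat_nonneg (q := (z s)⁻) fun y => negPart_nonneg (z s y)
  refine max_le (le_of_forall_pos_le_add fun δ hδ => ?_) (hheat0 _ _)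
  obtain ⟨ε, hε, hεδ⟩ : ∃ ε > 0, ε * (t - s) = δ :=
    ⟨δ / (t - s), div_pos hδ (sub_pos.2 hst), div_mul_cancel₀ _ (sub_pos.2 hst).ne'⟩
  rw [← hεδ]
  have hlin : ∀ r, HasDerivAt (fun r => ε * (r - s)) ε r := fun r => by
    simpa using ((hasDerivAt_id r).sub_const s).const_mul ε
  refine h.neg_le_barrier (ψ := fun r y => heat (z s)⁻ (r - s) y + ε * (r - s)) hs hst.le ht
    (((continuous_heat hNc hNb).comp (by fun_prop : Continuous fun p : ℝ × ℝ => (p.1 - s, p.2))).add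
      (by fun_prop))
    ((parabolicOn_heat hNc hNb s b).add (parabolicOn_time (by fun_prop) fun r _ => hlin r))
    (fun r hr y => ?_) (fun r _ y => ?_) (fun y => ?_) hU x
  · exact add_nonneg (hheat0 _ _) (mul_nonneg hε.le (sub_nonneg.2 hr.1))
  · linarith
  · rw [sub_self, heat_zero, mul_zero, add_zero]
    exact neg_le_negPart (z s y)

lemma tendsto_heat_negPart (h : ConfinedSupersolution a b R C z zt zx zxx) (hs : a ≤ s)
    (hst : s < t) (ht : t < b) (x : ℝ) :
    Tendsto (fun r => heat (z r)⁻ (t - r) x) (𝓝[>] s) (𝓝 (heat (z s)⁻ (t - s) x)) := by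
  have h_half : 0 < (t - s) / 2 := half_pos (sub_pos.2 hst)
  have h_near : ∀ᶠ r in 𝓝[>] s, r ∈ Ico a b ∧ (t - s) / 2 ≤ t - r := by
    filter_upwards [Ioo_mem_nhdsGT (show s < (s + t) / 2 by linarith)] with r hr
    exact ⟨⟨hs.trans hr.1.le, by linarith [hr.2]⟩, by linarith [hr.2]⟩
  have h_eq : (fun r => ∫ y, heatKernel (t - r) (x - y) * (z r)⁻ y)
      =ᶠ[𝓝[>] s] fun r => heat (z r)⁻ (t - r) x := by
    filter_upwards [h_near] with r hr
    rw [heat_eq_integral_heatKernel (h_half.trans_le hr.2)]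
  refine Tendsto.congr' h_eq ?_
  rw [heat_eq_integral_heatKernel (sub_pos.2 hst)]
  refine tendsto_integral_filter_of_dominated_convergence
    ((Icc (-R) R).indicator fun _ => (√(4 * Real.pi * ((t - s) / 2)))⁻¹ * |C|) ?_ ?_
    ((integrable_indicator_iff measurableSet_Icc).2 continuous_const.integrableOn_Icc)
    (Eventually.of_forall fun y => ?_)
  · filter_upwards [h_near] with r hr
    exact (((continuous_heatKernel (t - r)).comp (by fun_prop)).mul
      (h.continuous_negPart hr.1)).aestronglyMeasurable
  · filter_upwards [h_near] with r hr
    refine Eventually.of_forall fun y => ?_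
    by_cases hy : y ∈ Icc (-R) R
    · rw [indicator_of_mem hy, norm_mul, Real.norm_of_nonneg (heatKernel_nonneg _ _)]
      refine mul_le_mul ((heatKernel_le_inv_sqrt (h_half.le.trans hr.2) _).trans ?_)
        (h.abs_negPart_le hr.1 y) (norm_nonneg _) (by positivity)
      gcongr
      exact hr.2
    · rw [indicator_of_notMem hy, h.negPart_eq_zero hr.1 (not_lt.1 (mt (abs_le.1 ·.le) hy)),
        mul_zero, norm_zero]
  · refine Tendsto.mul ?_ ?_
    · exact ((continuousAt_heatKernel_time (sub_pos.2 hst) (x - y)).comp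
        (continuousAt_const.sub continuousAt_id)).tendsto.mono_left nhdsWithin_le_nhds
    · refine ((h.continuousOn_negPart y) s ⟨hs, hst.trans ht⟩).tendsto.mono_left ?_
      exact nhdsWithin_le_of_mem (h_near.mono fun r hr => hr.1)

lemma negPart_le_heat_of_gap (h : ConfinedSupersolution a b R C z zt zx zxx) (hs : a ≤ s)
    (hst : s < t) (ht : t < b) (hU : ∀ τ ∈ Ioo s t, UpperRight (fun r => (z r)⁻) τ) (x : ℝ) :
    (z t)⁻ x ≤ heat (z s)⁻ (t - s) x := by
  refine ge_of_tendsto (h.tendsto_heat_negPart hs hst ht x) ?_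
  filter_upwards [Ioo_mem_nhdsGT hst] with r hr
  exact h.negPart_le_heat (hs.trans hr.1.le) hr.2 ht (fun τ hτ => hU τ ⟨hr.1.trans_le hτ.1, hτ.2⟩) x

lemma exists_lipschitzWith_negPart (h : ConfinedSupersolution a b R C z zt zx zxx)
    (ht : t ∈ Ioo a b) : ∃ n : ℕ, LipschitzWith n (z t)⁻ := by
  have hR : -|R| ≤ |R| := neg_le_self (abs_nonneg R)
  have hzx : ContinuousOn (zx t) (Icc (-|R|) |R|) := fun x _ =>
    (h.deriv_space₂ t ht x).continuousAt.continuousWithinAt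
  obtain ⟨M, hM⟩ := isCompact_Icc.exists_bound_of_continuousOn hzx
  obtain ⟨n, hn⟩ := exists_nat_ge M
  have hz : LipschitzOnWith n (z t) (Icc (-|R|) |R|) :=
    (convex_Icc _ _).lipschitzOnWith_of_nnnorm_hasDerivWithin_le
      (fun x _ => (h.deriv_space t ht x).hasDerivWithinAt)
      fun x hx => by exact_mod_cast (hM x hx).trans hn
  have h_out : ∀ x ∉ Ioo (-|R|) |R|, (z t)⁻ x = 0 := fun x hx =>
    h.negPart_eq_zero (Ioo_subset_Ico_self ht)
      ((le_abs_self R).trans (not_lt.1 (mt abs_lt.1 hx)))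
  have h_ext : IccExtend hR ((Icc (-|R|) |R|).domRestrict (z t)⁻) = (z t)⁻ := by
    ext x
    rcases le_or_gt x (-|R|) with hx | hx
    · rw [IccExtend_of_le_left _ _ hx, h_out x (by simp [hx.not_gt])]
      exact h_out _ (by simp)
    rcases le_or_gt |R| x with hx' | hx'
    · rw [IccExtend_of_right_le _ _ hx', h_out x (by simp [hx'.not_gt])]
      exact h_out _ (by simp)
    · rw [IccExtend_of_mem _ _ ⟨hx.le, hx'.le⟩]
      rfl
  have h_lip : LipschitzWith n ((Icc (-|R|) |R|).domRestrict (z t)⁻) :=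
    (lipschitzOnWith_iff_restrict.1 hz).neg.max_const 0
  refine ⟨n, ?_⟩
  rw [← h_ext, ← mul_one (n : ℝ≥0)]
  exact h_lip.comp (LipschitzWith.projIcc hR)

lemma isClosed_lipschitzWith_negPart (h : ConfinedSupersolution a b R C z zt zx zxx) (n : ℕ) :
    IsClosed (Subtype.val ⁻¹' {t | LipschitzWith n (z t)⁻} : Set (Ioo a b)) := by
  simp only [lipschitzWith_iff_dist_le_mul, ofPred_forall, preimage_iInter]
  have hcont : ∀ x, Continuous fun t : Ioo a b => (z t)⁻ x := fun x =>
    ((h.continuousOn_negPart x).mono Ioo_subset_Ico_self).domRestrict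
  exact isClosed_iInter fun x => isClosed_iInter fun y =>
    isClosed_le ((hcont x).dist (hcont y)) continuous_const

lemma upperRight (h : ConfinedSupersolution a b R C z zt zx zxx) :
    ∀ τ ∈ Ioo a b, UpperRight (fun r => (z r)⁻) τ := by
  refine forall_of_baire (fun t ht => ?_) h.isClosed_lipschitzWith_negPart
    (fun t ht => mem_iUnion.2 (h.exists_lipschitzWith_negPart ht)) ?_
  · obtain ⟨d, htd, hdb⟩ := exists_between ht.2
    exact ⟨d, htd, fun r hr => ⟨ht.1.trans_le hr.1, hr.2.trans_lt hdb⟩⟩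
  intro t₀ ht₀ n d htd htn hgap ε hε
  have hcont : ∀ x, ContinuousAt (fun t => (z t)⁻ x) t₀ := fun x =>
    (h.continuousOn_negPart x).continuousAt (Ico_mem_nhds ht₀.1 ht₀.2)
  obtain ⟨e, hte, he⟩ := exists_Ico_subset_of_mem_nhds (eventually_le_add_of_lipschitzWith
    (isCompact_Icc (a := -R) (b := R)) hcont htn (half_pos hε)) (exists_gt t₀)
  set A := ∫ ξ, |ξ| ∂(gaussianReal 0 1)
  have h_small : ∀ᶠ t in 𝓝[>] t₀, n * √(2 * (t - t₀)) * A < ε / 2 :=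
    ((by fun_prop : Continuous fun t => n * √(2 * (t - t₀)) * A).continuousAt.eventually
      (gt_mem_nhds (by simpa using hε))).filter_mono nhdsWithin_le_nhds
  filter_upwards [h_small, Ioo_mem_nhdsGT (lt_min (lt_min htd hte) ht₀.2)] with t hsmall ht x
  obtain ⟨⟨htd', hte'⟩, htb⟩ := And.imp_left lt_min_iff.1 (lt_min_iff.1 ht.2)
  obtain ⟨r, hr, hrn, hgood⟩ := hgap t ⟨ht.1.le, htd'⟩
  have hrI : r ∈ Ico a b := ⟨ht₀.1.le.trans hr.1, hr.2.trans_lt htb⟩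
  have h_equi : (z r)⁻ x ≤ (z t₀)⁻ x + ε / 2 := by
    by_cases hx : R ≤ |x|
    · rw [h.negPart_eq_zero hrI hx]
      exact add_nonneg (negPart_nonneg (z t₀ x)) (half_pos hε).le
    · exact he ⟨hr.1, hr.2.trans_lt hte'⟩ x (abs_le.1 (not_le.1 hx).le) hrn
  rcases hr.2.eq_or_lt with rfl | hrt
  · linarith
  have h_heat := h.negPart_le_heat_of_gap hrI.1 hrt htb hgood x
  have h_lip := heat_le_add_of_lipschitzWith (h.abs_negPart_le hrI) hrn
    (t - r) x
  have h_mono : n * √(2 * (t - r)) * A ≤ n * √(2 * (t - t₀)) * A := by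
    have := hr.1
    gcongr
  rw [NNReal.coe_natCast] at h_lip
  linarith

theorem nonneg (h : ConfinedSupersolution a b R C z zt zx zxx) (h0 : ∀ x, 0 ≤ z a x)
    (ht : t ∈ Ico a b) (x : ℝ) : 0 ≤ z t x := by
  rcases ht.1.eq_or_lt with rfl | hat
  · exact h0 x
  have h_heat := h.negPart_le_heat_of_gap le_rfl hat ht.2
    (fun τ hτ => h.upperRight τ ⟨hτ.1, hτ.2.trans ht.2⟩) x
  rw [show (z a)⁻ = 0 from negPart_of_nonneg h0] at h_heat
  have h_zero : heat 0 (t - a) x = 0 := by simp [heat]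
  exact negPart_nonpos.1 (h_heat.trans h_zero.le)

end ConfinedSupersolution

lemma hasDerivAt_exp_neg_mul_sub (L a t : ℝ) :
    HasDerivAt (fun t => Real.exp (-L * (t - a))) (-L * Real.exp (-L * (t - a))) t := by
  simpa [mul_comm] using (((hasDerivAt_id t).sub_const a).const_mul (-L)).exp

lemma parabolicOn_quadratic (ε a b : ℝ) :
    ParabolicOn a b (fun t x => ε * (x ^ 2 + 2 * (t - a))) (fun _ _ => 2 * ε)
      (fun _ x => 2 * ε * x) (fun _ _ => 2 * ε) where
  cont_time x := by fun_prop
  cont_space t _ := by fun_prop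
  deriv_time t _ x := ((((hasDerivAt_id t).sub_const a).const_mul 2).const_add
    (x ^ 2)).const_mul ε |>.congr_deriv (by ring)
  deriv_space t _ x := ((hasDerivAt_pow 2 x).add_const (2 * (t - a))).const_mul ε
    |>.congr_deriv (by push_cast; ring)
  deriv_space₂ t _ x := ((hasDerivAt_id x).const_mul (2 * ε)).congr_deriv (by ring)

namespace ParabolicOn

variable {a b C L ε : ℝ} {z zt zx zxx : ℝ → ℝ → ℝ}

lemma confinedSupersolution (h : ParabolicOn a b z zt zx zxx) (hL : 0 ≤ L) (hC : 0 ≤ C)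
    (hε : 0 < ε) (hlow : ∀ t ∈ Ico a b, ∀ x, -C ≤ z t x)
    (hineq : ∀ t ∈ Ioo a b, ∀ x, z t x < 0 → zxx t x + L * z t x ≤ zt t x) :
    ConfinedSupersolution a b √(C / ε) C
      (fun t x => Real.exp (-L * (t - a)) * z t x + ε * (x ^ 2 + 2 * (t - a)))
      (fun t x => -L * Real.exp (-L * (t - a)) * z t x + Real.exp (-L * (t - a)) * zt t x + 2 * ε)
      (fun t x => Real.exp (-L * (t - a)) * zx t x + 2 * ε * x)
      (fun t x => Real.exp (-L * (t - a)) * zxx t x + 2 * ε) := by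
  have hsum := (h.time_mul (c := fun t => Real.exp (-L * (t - a))) (by fun_prop)
    (fun t _ => hasDerivAt_exp_neg_mul_sub L a t)).add (parabolicOn_quadratic ε a b)
  have hlow' : ∀ t ∈ Ico a b, ∀ x, -C ≤ Real.exp (-L * (t - a)) * z t x := fun t ht x => by
    have hexp : Real.exp (-L * (t - a)) ≤ 1 := by
      rw [Real.exp_le_one_iff, neg_mul]
      exact neg_nonpos.2 (mul_nonneg hL (sub_nonneg.2 ht.1))
    nlinarith [hlow t ht x, Real.exp_pos (-L * (t - a))]
  have htime : ∀ t ∈ Ico a b, 0 ≤ ε * (2 * (t - a)) := fun t ht => by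
    have := sub_nonneg.2 ht.1
    positivity
  refine { hsum with
    lower := fun t ht x => ?_
    outside := fun t ht x hx => ?_
    ineq := fun t ht x hx => ?_ }
  · nlinarith [hlow' t ht x, htime t ht, sq_nonneg x]
  · have hCx : C ≤ x ^ 2 * ε := by
      rw [← div_le_iff₀ hε, ← sq_abs]
      exact (Real.sqrt_le_iff.1 hx).2
    nlinarith [hlow' t ht x, htime t ht]
  · have hexp := Real.exp_pos (-L * (t - a))
    have hz : z t x < 0 := by
      by_contra! hz
      nlinarith [mul_nonneg hexp.le hz, htime t (Ioo_subset_Ico_self ht), sq_nonneg x]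
    nlinarith [mul_le_mul_of_nonneg_left (hineq t ht x hz) hexp.le]

theorem nonneg (h : ParabolicOn a b z zt zx zxx) (hlow : ∀ t ∈ Ico a b, ∀ x, -C ≤ z t x)
    (hineq : ∀ t ∈ Ioo a b, ∀ x, z t x < 0 → zxx t x + L * z t x ≤ zt t x)
    (h0 : ∀ x, 0 ≤ z a x) {t : ℝ} (ht : t ∈ Ico a b) (x : ℝ) : 0 ≤ z t x := by
  wlog hL : 0 ≤ L generalizing L
  · exact this (L := 0) (fun r hr y hy => by nlinarith [hineq r hr y hy]) le_rfl
  have h_lim : Tendsto (fun ε => Real.exp (-L * (t - a)) * z t x + ε * (x ^ 2 + 2 * (t - a)))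
      (𝓝[>] 0) (𝓝 (Real.exp (-L * (t - a)) * z t x)) := by
    refine ((by fun_prop : Continuous fun ε =>
      Real.exp (-L * (t - a)) * z t x + ε * (x ^ 2 + 2 * (t - a))).tendsto' 0 _ ?_).mono_left
      nhdsWithin_le_nhds
    simp
  refine nonneg_of_mul_nonneg_right (ge_of_tendsto h_lim ?_) (Real.exp_pos (-L * (t - a)))
  filter_upwards [self_mem_nhdsWithin] with ε (hε : 0 < ε)
  have hlow' : ∀ r ∈ Ico a b, ∀ y, -|C| ≤ z r y := fun r hr y =>
    (neg_le_neg (le_abs_self C)).trans (hlow r hr y)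
  refine (h.confinedSupersolution hL (abs_nonneg C) hε hlow' hineq).nonneg (fun y => ?_) ht x
  have := h0 y
  simp only [sub_self, mul_zero, Real.exp_zero, one_mul, add_zero]
  positivity

end ParabolicOn

/-! ### Nonnegative solutions of `v_t = v_xx - 2 f v + v²` -/

/-- A nonnegative solution of `v_t = v_xx - 2 f v + v²` on `[a, b) × ℝ`, bounded in space at each
time. -/
structure NonnegSolution (f : ℝ → ℝ) (a b : ℝ) (v vx vxx : ℝ → ℝ → ℝ) : Prop
    extends ParabolicOn a b v (fun t x => vxx t x - 2 * f x * v t x + v t x ^ 2) vx vxx where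
  nonneg : ∀ t ∈ Ico a b, ∀ x, 0 ≤ v t x
  bounded : ∀ t ∈ Ico a b, ∃ M, ∀ x, v t x ≤ M

/-- `v` is bounded on a right neighbourhood of `τ`, uniformly in space. -/
def RightBounded (v : ℝ → ℝ → ℝ) (τ : ℝ) : Prop :=
  ∃ K, ∀ᶠ t in 𝓝[≥] τ, ∀ x, v t x ≤ K

namespace NonnegSolution

variable {f : ℝ → ℝ} {F a b s t : ℝ} {v vx vxx : ℝ → ℝ → ℝ}

lemma mono (h : NonnegSolution f a b v vx vxx) {a' b' : ℝ} (ha : a ≤ a') (hb : b' ≤ b) :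
    NonnegSolution f a' b' v vx vxx where
  toParabolicOn := h.toParabolicOn.mono ha hb
  nonneg t ht := h.nonneg t (Ico_subset_Ico ha hb ht)
  bounded t ht := h.bounded t (Ico_subset_Ico ha hb ht)

lemma abs_le (h : NonnegSolution f a b v vx vxx) {M : ℝ} (ht : t ∈ Ico a b)
    (hM : ∀ x, v t x ≤ M) (x : ℝ) : |v t x| ≤ M := by
  rw [abs_of_nonneg (h.nonneg t ht x)]
  exact hM x

lemma heat_le (h : NonnegSolution f a b v vx vxx) (hf : ∀ x, 0 ≤ f x) (hF : ∀ x, f x ≤ F)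
    (hs : a ≤ s) (hst : s ≤ t) (ht : t < b) (x : ℝ) :
    heat (v s) (t - s) x ≤ Real.exp (2 * F * (t - s)) * v t x := by
  have hsI : s ∈ Ico a b := ⟨hs, hst.trans_lt ht⟩
  obtain ⟨M, hM⟩ := h.bounded s hsI
  have hc := h.cont_space s hsI
  have hb := h.abs_le hsI hM
  have hF0 : 0 ≤ F := (hf 0).trans (hF 0)
  have hsub := (h.toParabolicOn.mono hs le_rfl).sub ((parabolicOn_heat hc hb s b).time_mul
    (c := fun t => Real.exp (-(2 * F) * (t - s))) (by fun_prop)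
    fun t _ => hasDerivAt_exp_neg_mul_sub (2 * F) s t)
  have hle := sub_nonneg.1 (hsub.nonneg (C := M) (L := 0) (fun r hr y => ?_) (fun r hr y _ => ?_)
    (fun y => ?_) ⟨hst, ht⟩ x)
  · rwa [neg_mul, Real.exp_neg, inv_mul_le_iff₀ (Real.exp_pos _)] at hle
  · have h_exp : Real.exp (-(2 * F) * (r - s)) ≤ 1 := by
      rw [Real.exp_le_one_iff, neg_mul]
      exact neg_nonpos.2 (mul_nonneg (by positivity) (sub_nonneg.2 hr.1))
    have h_heat := mul_le_mul h_exp (SemilinearHeat.heat_le hc hb hM (r - s) y)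
      (heat_nonneg (h.nonneg s hsI) (r - s) y) zero_le_one
    linarith [h.nonneg r ⟨hs.trans hr.1, hr.2⟩ y]
  · nlinarith [mul_nonneg (sub_nonneg.2 (hF y)) (h.nonneg r ⟨hs.trans hr.1.le, hr.2⟩ y),
      sq_nonneg (v r y)]
  · simp [heat_zero]

lemma le_of_forall_lt (h : NonnegSolution f a b v vx vxx) (hs : a ≤ s) (hst : s < t) (ht : t < b)
    {κ : ℝ → ℝ} (hκ : ContinuousOn κ (Icc s t)) {x : ℝ} (hle : ∀ r ∈ Ioo s t, v r x ≤ κ r) :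
    v t x ≤ κ t := by
  refine ContinuousWithinAt.closure_le (s := Ioo s t) ?_
    ((h.cont_time x t ⟨hs.trans hst.le, ht⟩).mono fun r hr => ⟨hs.trans hr.1.le, hr.2.trans ht⟩)
    ((hκ t (right_mem_Icc.2 hst.le)).mono Ioo_subset_Icc_self) hle
  rw [closure_Ioo hst.ne]
  exact right_mem_Icc.2 hst.le

lemma le_exp_mul_heat (h : NonnegSolution f a b v vx vxx) (hf : ∀ x, 0 ≤ f x) (hs : a ≤ s)
    (hst : s ≤ t) (ht : t < b) {k Λ : ℝ → ℝ} {L : ℝ} (hΛc : ContinuousOn Λ (Icc s t))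
    (hΛ : ∀ r ∈ Ioo s t, HasDerivAt Λ (k r) r) (hkL : ∀ r ∈ Ioo s t, k r ≤ L)
    (hvk : ∀ r ∈ Ioo s t, ∀ x, v r x ≤ k r) (x : ℝ) :
    v t x ≤ Real.exp (Λ t - Λ s) * heat (v s) (t - s) x := by
  rcases hst.eq_or_lt with rfl | hst
  · simp [heat_zero]
  have hsI : s ∈ Ico a b := ⟨hs, hst.trans ht⟩
  obtain ⟨M, hM⟩ := h.bounded s hsI
  have hc := h.cont_space s hsI
  have hb := h.abs_le hsI hM
  have hexp : ContinuousOn (fun r => Real.exp (Λ r - Λ s)) (Icc s t) :=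
    Real.continuous_exp.comp_continuousOn (hΛc.sub continuousOn_const)
  have hsub := ((parabolicOn_heat hc hb s t).time_mul (hexp.mono Ico_subset_Icc_self)
    (fun r hr => ((hΛ r hr).sub_const (Λ s)).exp)).sub (h.toParabolicOn.mono hs ht.le)
  refine h.le_of_forall_lt (κ := fun r => Real.exp (Λ r - Λ s) * heat (v s) (r - s) x) hs hst ht
    (hexp.mul ((continuous_heat hc hb).comp
      (by fun_prop : Continuous fun r : ℝ => (r - s, x))).continuousOn)
    fun r hr => sub_nonneg.1 (hsub.nonneg (C := max M L) (L := L) (fun r hr y => ?_)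
      (fun r hr y _ => ?_) (fun y => ?_) (Ioo_subset_Ico_self hr) x)
  · have h_heat := mul_nonneg (Real.exp_pos (Λ r - Λ s)).le
      (heat_nonneg (h.nonneg s hsI) (r - s) y)
    have hv : v r y ≤ max M L := by
      rcases hr.1.eq_or_lt with rfl | hsr
      · exact (hM y).trans (le_max_left _ _)
      · exact ((hvk r ⟨hsr, hr.2⟩ y).trans (hkL r ⟨hsr, hr.2⟩)).trans (le_max_right _ _)
    linarith
  · have hv0 := h.nonneg r ⟨hs.trans hr.1.le, hr.2.trans ht⟩ y
    nlinarith [mul_nonneg (hf y) hv0, mul_nonneg hv0 (sub_nonneg.2 (hvk r hr y)), hkL r hr]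
  · simp [heat_zero]

lemma le_exp_mul_heat_const (h : NonnegSolution f a b v vx vxx) (hf : ∀ x, 0 ≤ f x) {K : ℝ}
    (hs : a ≤ s) (hst : s ≤ t) (ht : t < b) (hK : ∀ r ∈ Ioo s t, ∀ x, v r x ≤ K) (x : ℝ) :
    v t x ≤ Real.exp (K * (t - s)) * heat (v s) (t - s) x := by
  rw [mul_sub]
  exact h.le_exp_mul_heat hf hs hst ht (k := fun _ => K) (Λ := fun r => K * r) (by fun_prop)
    (fun r _ => by simpa using (hasDerivAt_id r).const_mul K) (fun _ _ => le_rfl) hK x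

lemma eventually_le_of_le_mul (h : NonnegSolution f a b v vx vxx) (hf : ∀ x, 0 ≤ f x) {τ θ : ℝ}
    (hτ : τ ∈ Ico a b) (hgood : RightBounded v τ) {κ : ℝ → ℝ}
    (hκ : ContinuousWithinAt κ (Ioi τ) τ) (hκ0 : 0 < κ τ) (hθ : θ < 1)
    (hle : ∀ x, v τ x ≤ θ * κ τ) : ∀ᶠ e in 𝓝[>] τ, ∀ r ∈ Ioo τ e, ∀ x, v r x ≤ κ r := by
  obtain ⟨K, hK⟩ := hgood
  obtain ⟨d, hτd, hd⟩ := mem_nhdsGE_iff_exists_Ico_subset.1 hK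
  have hlim : Tendsto (fun r => κ r - Real.exp (K * (r - τ)) * (θ * κ τ)) (𝓝[>] τ)
      (𝓝 (κ τ - Real.exp (K * (τ - τ)) * (θ * κ τ))) :=
    hκ.tendsto.sub ((by fun_prop : Continuous fun r =>
      Real.exp (K * (r - τ)) * (θ * κ τ)).tendsto τ |>.mono_left nhdsWithin_le_nhds)
  have hpos : 0 < κ τ - Real.exp (K * (τ - τ)) * (θ * κ τ) := by
    simp only [sub_self, mul_zero, Real.exp_zero, one_mul]
    nlinarith
  obtain ⟨d', hτd', hd'⟩ := mem_nhdsGT_iff_exists_Ioo_subset.1 (hlim.eventually (lt_mem_nhds hpos))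
  filter_upwards [Ioo_mem_nhdsGT (lt_min (lt_min hτd hτd') hτ.2)] with e he r hr x
  obtain ⟨⟨hed, hed'⟩, heb⟩ := And.imp_left lt_min_iff.1 (lt_min_iff.1 he.2)
  have h_exp := h.le_exp_mul_heat_const hf hτ.1 hr.1.le (hr.2.trans heb)
    (fun r' hr' => hd ⟨hr'.1.le, (hr'.2.trans hr.2).trans hed⟩) x
  have h_heat := mul_le_mul_of_nonneg_left (SemilinearHeat.heat_le (h.cont_space τ hτ)
    (h.abs_le hτ hle) hle (r - τ) x) (Real.exp_pos (K * (r - τ))).le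
  have hκr : 0 < κ r - Real.exp (K * (r - τ)) * (θ * κ τ) := hd' ⟨hr.1, hr.2.trans hed'⟩
  linarith

lemma le_of_induction (h : NonnegSolution f a b v vx vxx) (hf : ∀ x, 0 ≤ f x) {θ : ℝ}
    (hs : a ≤ s) (hst : s ≤ t) (ht : t < b) (hgood : ∀ τ ∈ Ico s t, RightBounded v τ) {κ : ℝ → ℝ}
    (hκ : ContinuousOn κ (Icc s t)) (hκ0 : ∀ r ∈ Icc s t, 0 < κ r) (hθ : θ < 1)
    (h0 : ∀ x, v s x ≤ κ s)
    (hind : ∀ τ ∈ Ico s t, (∀ r ∈ Icc s τ, ∀ x, v r x ≤ κ r) → ∀ x, v τ x ≤ θ * κ τ) :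
    ∀ r ∈ Icc s t, ∀ x, v r x ≤ κ r := by
  refine of_frequently_left_right (P := fun τ => ∀ r ∈ Icc s τ, ∀ x, v r x ≤ κ r) hst
    (fun r hr x => ?_) (fun τ hτ hle => ?_) (fun τ hτ hfreq r hr x => ?_)
  · rw [Icc_self, mem_singleton_iff] at hr
    exact hr ▸ h0 x
  · have hκτ : ContinuousWithinAt κ (Ioi τ) τ :=
      ((hκ τ (Ico_subset_Icc_self hτ)).mono (Icc_subset_Icc_left hτ.1)).mono_of_mem_nhdsWithin
        (Icc_mem_nhdsGT hτ.2)
    have hev := h.eventually_le_of_le_mul hf ⟨hs.trans hτ.1, hτ.2.trans ht⟩ (hgood τ hτ)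
      hκτ (hκ0 τ (Ico_subset_Icc_self hτ)) hθ (hind τ hτ hle)
    obtain ⟨e, he, hτe⟩ := (hev.and self_mem_nhdsWithin).exists
    refine Eventually.frequently ?_
    filter_upwards [Ioo_mem_nhdsGT hτe] with r' hr' r hr x
    rcases le_or_gt r τ with hrτ | hrτ
    · exact hle r ⟨hr.1, hrτ⟩ x
    · exact he r ⟨hrτ, hr.2.trans_lt hr'.2⟩ x
  · have hlt : ∀ r ∈ Ico s τ, ∀ x, v r x ≤ κ r := fun r hr x => by
      obtain ⟨r', hr', hrr'⟩ := (hfreq.and_eventually (Ioo_mem_nhdsLT hr.2)).exists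
      exact hr' r ⟨hr.1, hrr'.1.le⟩ x
    rcases hr.2.eq_or_lt with rfl | hrτ
    · exact h.le_of_forall_lt hs hτ.1 (hτ.2.trans_lt ht) (hκ.mono (Icc_subset_Icc_right hτ.2))
        fun r' hr' => hlt r' (Ioo_subset_Ico_self hr') x
    · exact hlt r ⟨hr.1, hrτ⟩ x

lemma le_two_mul (h : NonnegSolution f a b v vx vxx) (hf : ∀ x, 0 ≤ f x) {M : ℝ} (hs : a ≤ s)
    (hst : s ≤ t) (ht : t < b) (hM : 0 < M) (htM : t - s ≤ 1 / (8 * M))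
    (hgood : ∀ τ ∈ Ico s t, RightBounded v τ) (h0 : ∀ x, v s x ≤ M) (x : ℝ) : v t x ≤ 2 * M := by
  have hsI : s ∈ Ico a b := ⟨hs, hst.trans_lt ht⟩
  have h_exp : Real.exp (1 / 4) ≤ 3 / 2 := by
    have h_inv := Real.add_one_le_exp (-(1 / 4) : ℝ)
    rw [Real.exp_neg] at h_inv
    rw [← inv_le_inv₀ (by norm_num) (Real.exp_pos _)]
    linarith
  refine h.le_of_induction hf (θ := 3 / 4) hs hst ht hgood (κ := fun _ => 2 * M)
    continuousOn_const (fun _ _ => by positivity) (by norm_num) (fun x => by linarith [h0 x])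
    (fun τ hτ hle x => ?_) t (right_mem_Icc.2 hst) x
  have h_time : 2 * M * (τ - s) ≤ 1 / 4 := by
    calc 2 * M * (τ - s) ≤ 2 * M * (1 / (8 * M)) := by gcongr; linarith [hτ.2]
      _ = 1 / 4 := by field_simp; norm_num
  have h_heat := SemilinearHeat.heat_le (h.cont_space s hsI) (h.abs_le hsI h0) h0 (τ - s) x
  calc v τ x ≤ Real.exp (2 * M * (τ - s)) * heat (v s) (τ - s) x :=
        h.le_exp_mul_heat_const hf hs hτ.1 (hτ.2.trans ht)
          (fun r hr => hle r (Ioo_subset_Icc_self hr)) x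
    _ ≤ 3 / 2 * M := mul_le_mul ((Real.exp_le_exp.2 h_time).trans h_exp) h_heat
        (heat_nonneg (h.nonneg s hsI) _ _) (by norm_num)
    _ = 3 / 4 * (2 * M) := by ring

end NonnegSolution

/-! ### Local boundedness in time -/

lemma integral_mul_le_mul_integral {g w : ℝ → ℝ} (hg : Continuous g) (hw : Continuous w)
    (hg0 : ∀ y, 0 ≤ g y) {p q m D : ℝ} (hpq : p ≤ q) (hm : 0 ≤ m) (hD : 0 ≤ D)
    (hw_low : ∀ y ∈ Icc p q, m ≤ w y) (hw_up : ∀ y ∈ Icc p q, w y ≤ 2 * m)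
    (hint : ∫ y in p..q, g y ≤ D * (q - p)) :
    ∫ y in p..q, w y * g y ≤ 2 * D * ∫ y in p..q, w y := by
  have h_weight : m * (q - p) ≤ ∫ y in p..q, w y := by
    simpa [mul_comm] using intervalIntegral.integral_mono_on (f := fun _ => m) (μ := volume) hpq
      (continuous_const.intervalIntegrable p q) (hw.intervalIntegrable p q) hw_low
  calc ∫ y in p..q, w y * g y ≤ ∫ y in p..q, 2 * m * g y :=
        intervalIntegral.integral_mono_on hpq ((hw.mul hg).intervalIntegrable p q)
          ((hg.const_mul _).intervalIntegrable p q)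
          fun y hy => mul_le_mul_of_nonneg_right (hw_up y hy) (hg0 y)
    _ = 2 * m * ∫ y in p..q, g y := intervalIntegral.integral_const_mul _ _
    _ ≤ 2 * m * (D * (q - p)) := by gcongr
    _ = 2 * D * (m * (q - p)) := by ring
    _ ≤ 2 * D * ∫ y in p..q, w y := by gcongr

lemma exists_eventually_integral_mul_le {l : Filter ℝ} {g : ℝ → ℝ → ℝ} {w : ℝ → ℝ}
    (hw : Continuous w) (hw0 : ∀ y, 0 < w y) {D : ℝ} (hD : 0 ≤ D)
    (hg : ∀ᶠ s in l, Continuous (g s)) (hg0 : ∀ᶠ s in l, ∀ y, 0 ≤ g s y)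
    (hloc : ∀ x, ∀ᶠ r in 𝓝[>] (0 : ℝ), ∀ᶠ s in l, ∫ y in (x - r)..(x + r), g s y ≤ D * r)
    (p q : ℝ) : ∃ x, p ≤ x ∧ q ≤ x ∧
      ∀ᶠ s in l, ∫ y in p..x, w y * g s y ≤ 2 * D * ∫ y in p..x, w y := by
  set S : Set ℝ := {x | p ≤ x ∧ ∀ᶠ s in l, ∫ y in p..x, w y * g s y ≤ 2 * D * ∫ y in p..x, w y}
  have hpS : p ∈ S := ⟨le_rfl, Eventually.of_forall fun s => by simp⟩
  suffices hunb : ¬ BddAbove S by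
    obtain ⟨x, hx, hqx⟩ := not_bddAbove_iff.1 hunb q
    exact ⟨x, hx.1, hqx.le, hx.2⟩
  intro hbdd
  set x₀ := sSup S
  have hpx : p ≤ x₀ := le_csSup hbdd hpS
  have hw₀ := hw0 x₀
  have h_near : ∀ᶠ y in 𝓝 x₀, 2 / 3 * w x₀ < w y ∧ w y < 4 / 3 * w x₀ :=
    (hw.continuousAt.eventually (lt_mem_nhds (by linarith))).and
      (hw.continuousAt.eventually (gt_mem_nhds (by linarith)))
  obtain ⟨ρ, hρ, hball⟩ := Metric.eventually_nhds_iff.1 h_near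
  obtain ⟨r, hr, hr0, hrρ⟩ := ((hloc x₀).and (Ioo_mem_nhdsGT hρ)).exists
  obtain ⟨x₁, hx₁S, hx₁⟩ := exists_lt_of_lt_csSup ⟨p, hpS⟩ (sub_lt_self x₀ hr0)
  have hx₁x₀ : x₁ ≤ x₀ := le_csSup hbdd hx₁S
  have hmem : x₀ + r ∈ S := by
    refine ⟨by linarith, ?_⟩
    filter_upwards [hr, hx₁S.2, hg, hg0] with s hloc_s hx₁s hgc hg_nonneg
    have hwg : Continuous fun y => w y * g s y := hw.mul hgc
    have hw_near : ∀ y ∈ Icc x₁ (x₀ + r), 2 / 3 * w x₀ < w y ∧ w y < 4 / 3 * w x₀ := fun y hy =>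
      hball (by rw [Real.dist_eq, abs_lt]; exact ⟨by linarith [hy.1], by linarith [hy.2]⟩)
    have h_avg : ∫ y in x₁..(x₀ + r), g s y ≤ D * (x₀ + r - x₁) := calc
      ∫ y in x₁..(x₀ + r), g s y ≤ ∫ y in (x₀ - r)..(x₀ + r), g s y :=
        intervalIntegral.integral_mono_interval hx₁.le (by linarith) le_rfl
          (Eventually.of_forall hg_nonneg) (hgc.intervalIntegrable _ _)
      _ ≤ D * r := hloc_s
      _ ≤ D * (x₀ + r - x₁) := by gcongr; linarith
    have h_last := integral_mul_le_mul_integral hgc hw hg_nonneg (by linarith) (by positivity) hD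
      (fun y hy => (hw_near y hy).1.le) (fun y hy => by linarith [hw_near y hy]) h_avg
    rw [← intervalIntegral.integral_add_adjacent_intervals (hwg.intervalIntegrable p x₁)
      (hwg.intervalIntegrable x₁ (x₀ + r)), ← intervalIntegral.integral_add_adjacent_intervals
      (hw.intervalIntegrable p x₁) (hw.intervalIntegrable x₁ (x₀ + r)), mul_add]
    exact add_le_add hx₁s h_last
  linarith [le_csSup hbdd hmem]

lemma integral_heatKernel {t : ℝ} (ht : 0 < t) (x : ℝ) : ∫ y, heatKernel t (x - y) = 1 := by
  simpa [heat] using (heat_eq_integral_heatKernel ht (fun _ => 1) x).symm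

lemma heatKernel_le_heatKernel_of_far {τ h : ℝ} (hτ : 0 < τ) (hh : τ < h) :
    ∃ ρ > 0, ∀ z : ℝ, ρ ≤ |z| → heatKernel τ z ≤ heatKernel h z := by
  have hh0 : 0 < h := hτ.trans hh
  set c := (4 * τ)⁻¹ - (4 * h)⁻¹ with hc
  have hc0 : 0 < c := sub_pos.2 (inv_strictAnti₀ (by linarith) (by linarith))
  set ratio := √(4 * Real.pi * h) / √(4 * Real.pi * τ) with hratio
  refine ⟨√(ratio / c), by positivity, fun z hz => ?_⟩
  have h_ratio : ratio ≤ Real.exp (c * z ^ 2) := by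
    have hz_sq := (Real.sqrt_le_iff.1 hz).2
    rw [sq_abs, div_le_iff₀ hc0] at hz_sq
    linarith [Real.add_one_le_exp (c * z ^ 2)]
  have h_exp : Real.exp (-(4 * h)⁻¹ * z ^ 2) =
      Real.exp (c * z ^ 2) * Real.exp (-(4 * τ)⁻¹ * z ^ 2) := by
    rw [← Real.exp_add, hc]
    congr 1
    ring
  rw [heatKernel_eq, heatKernel_eq, h_exp, ← mul_assoc]
  refine mul_le_mul_of_nonneg_right ?_ (Real.exp_pos _).le
  calc (√(4 * Real.pi * τ))⁻¹ = (√(4 * Real.pi * h))⁻¹ * ratio := by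
        rw [hratio, div_eq_mul_inv, inv_mul_cancel_left₀ (by positivity)]
    _ ≤ _ := by gcongr

lemma inv_le_heatKernel {r τ z : ℝ} (hr : 0 < r) (hrτ : r ^ 2 / 2 ≤ τ) (hτr : τ ≤ r ^ 2)
    (hz : |z| ≤ r) : (√(4 * Real.pi) * r * Real.exp (1 / 2))⁻¹ ≤ heatKernel τ z := by
  have hτ : 0 < τ := hrτ.trans_lt' (by positivity)
  rw [heatKernel, mul_inv, ← Real.exp_neg]
  refine mul_le_mul (inv_anti₀ (by positivity) ?_) (Real.exp_le_exp.2 ?_) (Real.exp_pos _).le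
    (by positivity)
  · rw [Real.sqrt_mul (by positivity)]
    gcongr
    exact Real.sqrt_le_iff.2 ⟨hr.le, hτr⟩
  · rw [neg_div, neg_le_neg_iff, div_le_iff₀ (by positivity)]
    linarith [sq_le_sq.2 (hz.trans (le_abs_self r))]

section Heat

variable {q : ℝ → ℝ} {N h τ : ℝ}

lemma integral_le_mul_heat (hq : Continuous q) (hN : ∀ y, |q y| ≤ N) (h0 : ∀ y, 0 ≤ q y) {r : ℝ}
    (hr : 0 < r) (hrτ : r ^ 2 / 2 ≤ τ) (hτr : τ ≤ r ^ 2) (x : ℝ) :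
    ∫ y in (x - r)..(x + r), q y ≤ √(4 * Real.pi) * r * Real.exp (1 / 2) * heat q τ x := by
  have hτ : 0 < τ := hrτ.trans_lt' (by positivity)
  have hle : x - r ≤ x + r := by linarith
  have hint := integrable_heatKernel_mul hq hN hτ x
  rw [heat_eq_integral_heatKernel hτ, ← inv_mul_le_iff₀ (by positivity),
    ← intervalIntegral.integral_const_mul]
  calc _ ≤ ∫ y in (x - r)..(x + r), heatKernel τ (x - y) * q y :=
        intervalIntegral.integral_mono_on hle ((hq.const_mul _).intervalIntegrable _ _)
          hint.intervalIntegrable fun y hy => mul_le_mul_of_nonneg_right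
            (inv_le_heatKernel hr hrτ hτr (abs_le.2 ⟨by linarith [hy.2], by linarith [hy.1]⟩))
            (h0 y)
    _ ≤ _ := by
      rw [intervalIntegral.integral_of_le hle]
      exact setIntegral_le_integral hint (Eventually.of_forall fun y =>
        mul_nonneg (heatKernel_nonneg _ _) (h0 y))

lemma heat_le_integral_add_heat (hq : Continuous q) (hN : ∀ y, |q y| ≤ N) (h0 : ∀ y, 0 ≤ q y)
    (hτ : 0 < τ) (hh : 0 < h) {x p p' : ℝ} (hp : p ≤ p')
    (hfar : ∀ y ∉ Ioc p p', heatKernel τ (x - y) ≤ heatKernel h (x - y)) :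
    heat q τ x ≤ (∫ y in p..p', heatKernel τ (x - y) * q y) + heat q h x := by
  have hint := integrable_heatKernel_mul hq hN hτ x
  have hint' := integrable_heatKernel_mul hq hN hh x
  rw [heat_eq_integral_heatKernel hτ, heat_eq_integral_heatKernel hh,
    ← integral_add_compl (measurableSet_Ioc (a := p) (b := p')) hint,
    ← intervalIntegral.integral_of_le hp]
  gcongr
  refine (setIntegral_mono_on hint.integrableOn hint'.integrableOn measurableSet_Ioc.compl
    fun y hy => mul_le_mul_of_nonneg_right (hfar y hy) (h0 y)).trans ?_
  exact setIntegral_le_integral hint' (Eventually.of_forall fun y =>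
    mul_nonneg (heatKernel_nonneg _ _) (h0 y))

lemma heat_le_div_sqrt (hq : Continuous q) (hN : ∀ y, |q y| ≤ N) (h0 : ∀ y, 0 ≤ q y) {A M σ : ℝ}
    (hσ : 0 < σ) (hA : 0 ≤ A) (hNA : N * √(2 * σ) ≤ A) (hMA : √h * M ≤ A)
    (hM : ∀ x, heat q h x ≤ M) (hτ : 0 ≤ τ) (hτh : τ ≤ h) (x : ℝ) :
    heat q τ x ≤ √2 * A / √(τ + σ) := by
  have hheat0 := heat_nonneg h0
  rw [le_div_iff₀ (Real.sqrt_pos.2 (by positivity))]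
  rcases le_or_gt τ σ with hτσ | hτσ
  · calc heat q τ x * √(τ + σ) ≤ N * √(2 * σ) := by
          gcongr
          · exact (hheat0 τ x).trans (le_of_abs_le (abs_heat_le hN τ x))
          · exact le_of_abs_le (abs_heat_le hN τ x)
          · linarith
      _ ≤ A := hNA
      _ ≤ √2 * A := le_mul_of_one_le_left hA (Real.one_le_sqrt.2 one_le_two)
  · have hτ0 : 0 < τ := hσ.trans hτσ
    have h_sqrt : √(h / τ) * √(τ + σ) ≤ √2 * √h := by
      rw [← Real.sqrt_mul (div_nonneg (hτ.trans hτh) hτ), ← Real.sqrt_mul zero_le_two,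
        div_mul_eq_mul_div]
      refine Real.sqrt_le_sqrt ((div_le_iff₀ hτ0).2 ?_)
      nlinarith
    calc heat q τ x * √(τ + σ) ≤ √(h / τ) * heat q h x * √(τ + σ) := by
          gcongr
          exact heat_le_mul_heat hq hN h0 hτ0 hτh x
      _ = √(h / τ) * √(τ + σ) * heat q h x := by ring
      _ ≤ √2 * √h * M := mul_le_mul h_sqrt (hM x) (hheat0 h x) (by positivity)
      _ ≤ √2 * A := by rw [mul_assoc]; gcongr

end Heat

lemma eventually_heat_le_of_local {l : Filter ℝ} {g : ℝ → ℝ → ℝ} {τ h D M : ℝ} (hτ : 0 < τ)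
    (hh : τ < h) (hD : 0 ≤ D) (hg : ∀ᶠ s in l, Continuous (g s)) (hg0 : ∀ᶠ s in l, ∀ y, 0 ≤ g s y)
    (hbdd : ∀ᶠ s in l, ∃ N, ∀ y, |g s y| ≤ N) (hM : ∀ᶠ s in l, ∀ x, heat (g s) h x ≤ M)
    (hloc : ∀ x, ∀ᶠ r in 𝓝[>] (0 : ℝ), ∀ᶠ s in l, ∫ y in (x - r)..(x + r), g s y ≤ D * r)
    (x : ℝ) : ∀ᶠ s in l, heat (g s) τ x ≤ 2 * D + M := by
  obtain ⟨ρ, -, hfar⟩ := heatKernel_le_heatKernel_of_far hτ hh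
  have hw0 : ∀ y, 0 < heatKernel τ (x - y) := fun y => by
    unfold heatKernel
    positivity
  obtain ⟨q, hpq, hq, hev⟩ := exists_eventually_integral_mul_le (w := fun y => heatKernel τ (x - y))
    ((continuous_heatKernel τ).comp (by fun_prop)) hw0 hD hg hg0 hloc (x - ρ) (x + ρ)
  have h_mass : ∫ y in (x - ρ)..q, heatKernel τ (x - y) ≤ 1 := by
    rw [intervalIntegral.integral_of_le hpq, ← integral_heatKernel hτ x]
    exact setIntegral_le_integral (integrable_heatKernel hτ x)
      (Eventually.of_forall fun y => (hw0 y).le)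
  filter_upwards [hev, hg, hg0, hbdd, hM] with s h_near hgc hg_nonneg ⟨N, hN⟩ hMs
  refine (heat_le_integral_add_heat hgc hN hg_nonneg hτ (hτ.trans hh) hpq
    fun y hy => hfar _ ?_).trans (add_le_add (h_near.trans
      (mul_le_of_le_one_right (by positivity) h_mass)) (hMs x))
  by_contra! hy_near
  have := abs_lt.1 hy_near
  exact hy ⟨by linarith, by linarith⟩

namespace NonnegSolution

variable {f : ℝ → ℝ} {F a b s t : ℝ} {v vx vxx : ℝ → ℝ → ℝ}

lemma exists_eventually_heat_le (h : NonnegSolution f a b v vx vxx) (hf : ∀ x, 0 ≤ f x)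
    (hF : ∀ x, f x ≤ F) {τ : ℝ} (hτ : τ ∈ Ioo a b) (hgood : RightBounded v τ) :
    ∃ M > 0, ∀ᶠ s in 𝓝[>] a, ∀ x, heat (v s) (τ - a) x ≤ M := by
  obtain ⟨K, hK⟩ := hgood
  obtain ⟨d, hτd, hd⟩ := mem_nhdsGE_iff_exists_Ico_subset.1 hK
  have hK0 : 0 ≤ K :=
    (h.nonneg τ (Ioo_subset_Ico_self hτ) 0).trans (hd (left_mem_Ico.2 hτd) 0)
  refine ⟨Real.exp (2 * F * (τ - a)) * K + 1, by positivity, ?_⟩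
  filter_upwards [Ioo_mem_nhdsGT (show a < a + (min d b - τ) by
    linarith [lt_min hτd hτ.2])] with s hs x
  have hsd : s + (τ - a) < min d b := by linarith [hs.2]
  have h_heat := h.heat_le hf hF hs.1.le (le_add_of_nonneg_right (sub_pos.2 hτ.1).le)
    (hsd.trans_le (min_le_right d b)) x
  have hvK : v (s + (τ - a)) x ≤ K :=
    hd ⟨by linarith [hs.1], hsd.trans_le (min_le_left d b)⟩ x
  rw [add_sub_cancel_left] at h_heat
  linarith [mul_le_mul_of_nonneg_left hvK (Real.exp_pos (2 * F * (τ - a))).le]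

lemma le_exp_one_mul_heat_of_le_div_sqrt (h : NonnegSolution f a b v vx vxx) (hf : ∀ x, 0 ≤ f x)
    (hs : a ≤ s) (hst : s ≤ t) (ht : t < b) {B σ : ℝ} (hσ : 0 < σ) (hB : 0 ≤ B)
    (hsmall : 2 * B * √(t - s + σ) ≤ 1) (hle : ∀ r ∈ Ioo s t, ∀ x, v r x ≤ B / √(r - s + σ))
    (x : ℝ) : v t x ≤ Real.exp 1 * heat (v s) (t - s) x := by
  have hΛ : ∀ r ∈ Ioo s t,
      HasDerivAt (fun r => 2 * B * √(r - s + σ)) (B / √(r - s + σ)) r := fun r hr => by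
    have hpos : 0 < r - s + σ := by linarith [hr.1]
    refine (((((hasDerivAt_id r).sub_const s).add_const σ).sqrt hpos.ne').const_mul
      (2 * B)).congr_deriv ?_
    simp only [id]
    field_simp
  refine (h.le_exp_mul_heat hf hs hst ht (L := B / √σ) (by fun_prop) hΛ (fun r hr => ?_) hle
    x).trans ?_
  · gcongr
    linarith [hr.1]
  · refine mul_le_mul_of_nonneg_right (Real.exp_le_exp.2 ?_)
      (heat_nonneg (h.nonneg s ⟨hs, hst.trans_lt ht⟩) _ _)
    linarith [show 0 ≤ 2 * B * √(s - s + σ) by positivity]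

lemma le_exp_one_mul_heat_of_heat_le_div_sqrt (h : NonnegSolution f a b v vx vxx)
    (hf : ∀ x, 0 ≤ f x) (hs : a ≤ s) (hst : s ≤ t) (ht : t < b)
    (hgood : ∀ τ ∈ Ico s t, RightBounded v τ) {A σ : ℝ} (hσ : 0 < σ) (hA : 0 < A)
    (hsmall : 12 * A * √(t - s + σ) ≤ 1)
    (hheat : ∀ r ∈ Icc s t, ∀ x, heat (v s) (r - s) x ≤ √2 * A / √(r - s + σ)) (x : ℝ) :
    v t x ≤ Real.exp 1 * heat (v s) (t - s) x := by
  have hpos : ∀ r ∈ Icc s t, 0 < √(r - s + σ) := fun r hr =>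
    Real.sqrt_pos.2 (by linarith [hr.1])
  have hsqrt2 : √2 ≤ 3 / 2 := Real.sqrt_le_iff.2 ⟨by norm_num, by norm_num⟩
  have h_upto : ∀ τ ∈ Icc s t, (∀ r ∈ Ioo s τ, ∀ x, v r x ≤ 6 * A / √(r - s + σ)) →
      ∀ x, v τ x ≤ Real.exp 1 * heat (v s) (τ - s) x := fun τ hτ hle =>
    h.le_exp_one_mul_heat_of_le_div_sqrt hf hs hτ.1 (hτ.2.trans_lt ht) hσ (B := 6 * A)
      (by positivity) (by
        calc 2 * (6 * A) * √(τ - s + σ) = 12 * A * √(τ - s + σ) := by ring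
          _ ≤ 12 * A * √(t - s + σ) := by gcongr; exact hτ.2
          _ ≤ 1 := hsmall) hle
  have hle := h.le_of_induction hf (θ := 3 / 4) hs hst ht hgood (κ := fun r => 6 * A / √(r - s + σ))
    (continuousOn_const.div (by fun_prop) fun r hr => (hpos r hr).ne')
    (fun r hr => div_pos (by positivity) (hpos r hr)) (by norm_num) (fun x => ?_)
    fun τ hτ hle x => ?_
  · exact h_upto t (right_mem_Icc.2 hst) (fun r hr => hle r (Ioo_subset_Icc_self hr)) x
  · have h_init := hheat s (left_mem_Icc.2 hst) x
    rw [sub_self, heat_zero] at h_init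
    rw [sub_self]
    refine h_init.trans ?_
    gcongr
    linarith
  · calc v τ x ≤ Real.exp 1 * heat (v s) (τ - s) x :=
          h_upto τ (Ico_subset_Icc_self hτ) (fun r hr => hle r (Ioo_subset_Icc_self hr)) x
      _ ≤ 3 * (3 / 2 * A / √(τ - s + σ)) := by
          refine mul_le_mul Real.exp_one_lt_three.le ((hheat τ (Ico_subset_Icc_self hτ) x).trans ?_)
            (heat_nonneg (h.nonneg s ⟨hs, hst.trans_lt ht⟩) _ _) (by norm_num)
          gcongr
      _ = 3 / 4 * (6 * A / √(τ - s + σ)) := by ring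

lemma le_exp_one_mul_heat (h : NonnegSolution f a b v vx vxx) (hf : ∀ x, 0 ≤ f x) (hs : a ≤ s)
    (hst : s ≤ t) (ht : t < b) (hgood : ∀ τ ∈ Ico s t, RightBounded v τ) {M h₀ : ℝ} (hM : 0 < M)
    (hh₀ : 0 < h₀) (hheat : ∀ x, heat (v s) h₀ x ≤ M) (hth : t - s ≤ h₀)
    (hsmall : 12 * (√h₀ * M) * √(t - s) < 1) (x : ℝ) :
    v t x ≤ Real.exp 1 * heat (v s) (t - s) x := by
  have hsI : s ∈ Ico a b := ⟨hs, hst.trans_lt ht⟩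
  obtain ⟨N, hN⟩ := h.bounded s hsI
  have hA : 0 < √h₀ * M := mul_pos (Real.sqrt_pos.2 hh₀) hM
  have h_small : ∀ᶠ σ in 𝓝[>] (0 : ℝ), 12 * (√h₀ * M) * √(t - s + σ) < 1 :=
    ((by fun_prop : Continuous fun σ => 12 * (√h₀ * M) * √(t - s + σ)).continuousAt.eventually
      (gt_mem_nhds (by simpa using hsmall))).filter_mono nhdsWithin_le_nhds
  have h_init : ∀ᶠ σ in 𝓝[>] (0 : ℝ), N * √(2 * σ) < √h₀ * M :=
    ((by fun_prop : Continuous fun σ => N * √(2 * σ)).continuousAt.eventually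
      (gt_mem_nhds (by simpa using hA))).filter_mono nhdsWithin_le_nhds
  obtain ⟨σ, ⟨hσt, hσN⟩, hσ⟩ := ((h_small.and h_init).and self_mem_nhdsWithin).exists
  exact h.le_exp_one_mul_heat_of_heat_le_div_sqrt hf hs hst ht hgood hσ hA hσt.le
    (fun r hr => heat_le_div_sqrt (h.cont_space s hsI) (h.abs_le hsI hN) (h.nonneg s hsI) hσ hA.le
      hσN.le le_rfl hheat (sub_nonneg.2 hr.1) (by linarith [hr.2])) x

lemma eventually_integral_le (h : NonnegSolution f a b v vx vxx) (hf : ∀ x, 0 ≤ f x)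
    (hF : ∀ x, f x ≤ F) (hab : a < b) {n : ℝ} (hn : ∀ x, v a x ≤ n) (x : ℝ) :
    ∀ᶠ r in 𝓝[>] (0 : ℝ), ∀ᶠ s in 𝓝[>] a, ∫ y in (x - r)..(x + r), v s y ≤
      √(4 * Real.pi) * Real.exp (1 / 2) * Real.exp 1 * (n + 1) * r := by
  have hF0 : 0 ≤ F := (hf 0).trans (hF 0)
  have : 0 ≤ n := (h.nonneg a ⟨le_rfl, hab⟩ 0).trans (hn 0)
  have h_time : Tendsto (fun r : ℝ => a + r ^ 2) (𝓝[>] 0) (𝓝[Ico a b] a) := by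
    refine tendsto_nhdsWithin_iff.2 ⟨((by fun_prop : Continuous fun r : ℝ => a + r ^ 2).tendsto' 0 a
      (by simp)).mono_left nhdsWithin_le_nhds, ?_⟩
    filter_upwards [((by fun_prop : Continuous fun r : ℝ => a + r ^ 2).continuousAt.eventually
      (gt_mem_nhds (show a + (0 : ℝ) ^ 2 < b by simpa using hab))).filter_mono nhdsWithin_le_nhds]
      with r hr using ⟨by nlinarith, hr⟩
  have h_value : ∀ᶠ r in 𝓝[>] (0 : ℝ), v (a + r ^ 2) x < n + 1 :=
    (((h.cont_time x) a ⟨le_rfl, hab⟩).tendsto.comp h_time).eventually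
      (gt_mem_nhds ((hn x).trans_lt (lt_add_one n)))
  have h_exp : ∀ᶠ r in 𝓝[>] (0 : ℝ), 2 * F * r ^ 2 < 1 :=
    ((by fun_prop : Continuous fun r => 2 * F * r ^ 2).continuousAt.eventually
      (gt_mem_nhds (by simp))).filter_mono nhdsWithin_le_nhds
  filter_upwards [self_mem_nhdsWithin, h_time.eventually self_mem_nhdsWithin, h_value, h_exp]
    with r (hr : 0 < r) hrI hvr hFr
  filter_upwards [Ioo_mem_nhdsGT (show a < a + r ^ 2 / 2 by linarith [sq_pos_of_pos hr])] with s hs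
  have hsr : s ≤ a + r ^ 2 := by linarith [hs.2, sq_nonneg r]
  have hsI : s ∈ Ico a b := ⟨hs.1.le, hsr.trans_lt hrI.2⟩
  obtain ⟨N, hN⟩ := h.bounded s hsI
  have h_factor : Real.exp (2 * F * (a + r ^ 2 - s)) ≤ Real.exp 1 := by
    rw [Real.exp_le_exp]
    refine le_trans ?_ hFr.le
    gcongr
    linarith [hs.1]
  calc ∫ y in (x - r)..(x + r), v s y
      ≤ √(4 * Real.pi) * r * Real.exp (1 / 2) * heat (v s) (a + r ^ 2 - s) x :=
        integral_le_mul_heat (h.cont_space s hsI) (h.abs_le hsI hN) (h.nonneg s hsI) hr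
          (by linarith [hs.2]) (by linarith [hs.1]) x
    _ ≤ √(4 * Real.pi) * r * Real.exp (1 / 2) * (Real.exp 1 * (n + 1)) := by
        gcongr
        exact (h.heat_le hf hF hs.1.le hsr hrI.2 x).trans
          (mul_le_mul h_factor hvr.le (h.nonneg _ hrI x) (Real.exp_pos _).le)
    _ = _ := by ring

lemma rightBounded_of_gap (h : NonnegSolution f a b v vx vxx) (hf : ∀ x, 0 ≤ f x)
    (hF : ∀ x, f x ≤ F) (hab : a < b) (hgood : ∀ τ ∈ Ioo a b, RightBounded v τ) :
    RightBounded v a := by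
  obtain ⟨m, hm⟩ := exists_between hab
  obtain ⟨M, hM, hheat⟩ := h.exists_eventually_heat_le hf hF hm (hgood m hm)
  obtain ⟨n, hn⟩ := h.bounded a ⟨le_rfl, hab⟩
  have : 0 ≤ n := (h.nonneg a ⟨le_rfl, hab⟩ 0).trans (hn 0)
  set D := √(4 * Real.pi) * Real.exp (1 / 2) * Real.exp 1 * (n + 1)
  have h_small : ∀ᶠ t in 𝓝[≥] a, 12 * (√(m - a) * M) * √(t - a) < 1 :=
    ((by fun_prop : Continuous fun t => 12 * (√(m - a) * M) * √(t - a)).continuousAt.eventually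
      (gt_mem_nhds (by simp))).filter_mono nhdsWithin_le_nhds
  have h_sol : ∀ᶠ s in 𝓝[>] a, s ∈ Ico a b :=
    mem_of_superset (Ioo_mem_nhdsGT hab) Ioo_subset_Ico_self
  refine ⟨max n (Real.exp 1 * (2 * (2 * D + M))), ?_⟩
  filter_upwards [h_small, Ico_mem_nhdsGE hm.1] with t ht_small ht x
  rcases ht.1.eq_or_lt with rfl | hat
  · exact (hn x).trans (le_max_left _ _)
  have hta : 0 < t - a := sub_pos.2 hat
  have h_unif := eventually_heat_le_of_local hta (sub_lt_sub_right ht.2 a) (by positivity)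
    (h_sol.mono fun s hs => h.cont_space s hs) (h_sol.mono fun s hs => h.nonneg s hs)
    (h_sol.mono fun s hs => (h.bounded s hs).imp fun N hN => h.abs_le hs hN) hheat
    (h.eventually_integral_le hf hF hab hn) x
  obtain ⟨s, ⟨⟨hsD, hsM⟩, hsI⟩, hs⟩ := (((h_unif.and hheat).and h_sol).and
    (Ioo_mem_nhdsGT (show a < a + 3 / 4 * (t - a) by linarith))).exists
  have hst : 0 < t - s := by linarith [hs.2]
  have hst_le : t - s ≤ t - a := by linarith [hs.1]
  obtain ⟨N, hN⟩ := h.bounded s hsI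
  have h_heat : heat (v s) (t - s) x ≤ 2 * (2 * D + M) := by
    refine (heat_le_mul_heat (h.cont_space s hsI) (h.abs_le hsI hN) (h.nonneg s hsI) hst hst_le
      x).trans (mul_le_mul ?_ hsD (heat_nonneg (h.nonneg s hsI) _ _) zero_le_two)
    refine Real.sqrt_le_iff.2 ⟨zero_le_two, (div_le_iff₀ hst).2 ?_⟩
    linarith [hs.2]
  refine le_trans ?_ (le_max_right _ _)
  refine (h.le_exp_one_mul_heat hf hsI.1 (sub_pos.1 hst).le (ht.2.trans hm.2)
    (fun τ hτ => hgood τ ⟨hs.1.trans_le hτ.1, (hτ.2.trans ht.2).trans hm.2⟩) hM (sub_pos.2 hm.1) hsM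
    (by linarith [ht.2, hs.1]) (ht_small.trans_le' ?_) x).trans ?_ <;> gcongr

lemma isClosed_forall_le (h : NonnegSolution f a b v vx vxx) (M : ℝ) :
    IsClosed (Subtype.val ⁻¹' {t | ∀ x, v t x ≤ M} : Set (Ico a b)) := by
  simp only [ofPred_forall, preimage_iInter]
  exact isClosed_iInter fun x => isClosed_le (h.cont_time x).domRestrict continuous_const

theorem rightBounded (h : NonnegSolution f a b v vx vxx) (hf : ∀ x, 0 ≤ f x)
    (hF : ∀ x, f x ≤ F) : ∀ τ ∈ Ico a b, RightBounded v τ := by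
  refine forall_of_baire (E := fun n => {t | ∀ x, v t x ≤ n}) (fun t ht => ?_)
    (fun n => h.isClosed_forall_le n) (fun t ht => ?_) fun t₀ ht₀ n d htd _ hgap => ?_
  · obtain ⟨d, htd, hdb⟩ := exists_between ht.2
    exact ⟨d, htd, fun r hr => ⟨ht.1.trans hr.1, hr.2.trans_lt hdb⟩⟩
  · obtain ⟨M, hM⟩ := h.bounded t ht
    obtain ⟨n, hn⟩ := exists_nat_ge M
    exact mem_iUnion.2 ⟨n, fun x => (hM x).trans hn⟩
  refine ⟨2 * (n + 1), ?_⟩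
  have h_time : t₀ < t₀ + 1 / (8 * (n + 1)) := lt_add_of_pos_right _ (by positivity)
  filter_upwards [Ico_mem_nhdsGE (lt_min (lt_min htd ht₀.2) h_time)] with t ht x
  obtain ⟨⟨htd', htb⟩, ht_time⟩ := And.imp_left lt_min_iff.1 (lt_min_iff.1 ht.2)
  obtain ⟨r, hr, hrn, hgood⟩ := hgap t ⟨ht.1, htd'⟩
  have har : a ≤ r := ht₀.1.trans hr.1
  rcases hr.2.eq_or_lt with rfl | hrt
  · linarith [hrn x, (n.cast_nonneg : (0 : ℝ) ≤ n)]
  have hgood_r := (h.mono har htb.le).rightBounded_of_gap hf hF hrt hgood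
  exact h.le_two_mul hf har hr.2 htb (by positivity) (by linarith [hr.1])
    (fun τ hτ => hτ.1.eq_or_lt.elim (fun hrτ => hrτ ▸ hgood_r) fun hrτ => hgood τ ⟨hrτ, hτ.2⟩)
    (fun y => (hrn y).trans (by linarith)) x

end NonnegSolution

/-! ### Duhamel integrals -/

/-- The Gaussian average with weight `p` of the slice `g s`, rescaled to time `r`. -/
noncomputable def gaussAverage (p : ℝ → ℝ) (g : ℝ → ℝ → ℝ) (r s x : ℝ) : ℝ :=
  ∫ ξ, p ξ * g s (x + √(2 * r) * ξ) ∂(gaussianReal 0 1)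

lemma continuous_gaussAverage {p : ℝ → ℝ} {g : ℝ → ℝ → ℝ} {B : ℝ} (hp : Continuous p)
    (hpi : Integrable p (gaussianReal 0 1)) (hg : Continuous (Function.uncurry g))
    (hB : ∀ s x, |g s x| ≤ B) :
    Continuous (fun y : ℝ × ℝ × ℝ => gaussAverage p g y.1 y.2.1 y.2.2) := by
  have hc : Continuous fun z : (ℝ × ℝ × ℝ) × ℝ =>
      p z.2 * g z.1.2.1 (z.1.2.2 + √(2 * z.1.1) * z.2) :=
    (hp.comp continuous_snd).mul (hg.comp (by fun_prop : Continuous fun z : (ℝ × ℝ × ℝ) × ℝ =>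
      (z.1.2.1, z.1.2.2 + √(2 * z.1.1) * z.2)))
  refine continuous_of_dominated (bound := fun ξ => |p ξ| * B)
    (fun y => (hc.comp (by fun_prop : Continuous fun ξ : ℝ => (y, ξ))).aestronglyMeasurable)
    (fun y => Eventually.of_forall fun ξ => ?_) (hpi.abs.mul_const B)
    (Eventually.of_forall fun ξ => hc.comp (by fun_prop : Continuous fun y : ℝ × ℝ × ℝ => (y, ξ)))
  rw [norm_mul]
  exact mul_le_mul_of_nonneg_left (hB _ _) (abs_nonneg _)

lemma integrable_id_gaussianReal : Integrable (fun ξ : ℝ => ξ) (gaussianReal 0 1) := by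
  simpa using integrable_pow_gaussianReal 1

lemma integrable_sq_sub_one_gaussianReal :
    Integrable (fun ξ : ℝ => ξ ^ 2 - 1) (gaussianReal 0 1) :=
  (integrable_pow_gaussianReal 2).sub (integrable_const 1)

lemma integral_sq_sub_one_gaussianReal : ∫ ξ : ℝ, (ξ ^ 2 - 1) ∂(gaussianReal 0 1) = 0 := by
  have h_var : Var[id; gaussianReal 0 1] = 1 := by simp
  rw [variance_of_integral_eq_zero (by fun_prop) (by simp)] at h_var
  rw [integral_sub (integrable_pow_gaussianReal 2) (integrable_const 1)]
  simpa [sub_eq_zero] using h_var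

lemma integrable_abs_sq_sub_one_mul_abs_gaussianReal :
    Integrable (fun ξ : ℝ => |ξ ^ 2 - 1| * |ξ|) (gaussianReal 0 1) := by
  refine ((integrable_pow_gaussianReal 3).sub integrable_id_gaussianReal).abs.congr
    (Eventually.of_forall fun ξ => ?_)
  simp only [Pi.sub_apply, ← abs_mul]
  ring_nf

lemma abs_heatX_le {q : ℝ → ℝ} {C : ℝ} (hC : ∀ y, |q y| ≤ C) (r x : ℝ) :
    |heatX q r x| ≤ (√(2 * r))⁻¹ * (C * ∫ ξ, |ξ| ∂(gaussianReal 0 1)) := by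
  rw [heatX, abs_mul, abs_of_nonneg (by positivity)]
  refine mul_le_mul_of_nonneg_left ?_ (by positivity)
  rw [← integral_const_mul]
  refine norm_integral_le_of_norm_le (G := ℝ) (integrable_abs_gaussianReal.const_mul C)
    (Eventually.of_forall fun ξ => ?_)
  rw [norm_mul, mul_comm]
  exact mul_le_mul_of_nonneg_right (hC _) (abs_nonneg _)

lemma integral_sq_sub_one_mul_sub {q : ℝ → ℝ} {C : ℝ} (hq : Continuous q) (hC : ∀ y, |q y| ≤ C)
    (r x : ℝ) : ∫ ξ, (ξ ^ 2 - 1) * (q (x + √(2 * r) * ξ) - q x) ∂(gaussianReal 0 1) =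
      ∫ ξ, (ξ ^ 2 - 1) * q (x + √(2 * r) * ξ) ∂(gaussianReal 0 1) := by
  simp only [mul_sub]
  rw [integral_sub (integrable_sq_sub_one_gaussianReal.mul_bdd (c := C) (by fun_prop)
    (Eventually.of_forall fun ξ => hC _)) (integrable_sq_sub_one_gaussianReal.mul_const _),
    integral_mul_const, integral_sq_sub_one_gaussianReal, zero_mul, sub_zero]

lemma abs_heatXX_le {q : ℝ → ℝ} {C n : ℝ} (hq : Continuous q) (hC : ∀ y, |q y| ≤ C)
    (hn : ∀ x y, |q x - q y| ≤ n * |x - y|) {r : ℝ} (hr : 0 < r) (x : ℝ) :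
    |heatXX q r x| ≤ (√(2 * r))⁻¹ * (n * ∫ ξ, |ξ ^ 2 - 1| * |ξ| ∂(gaussianReal 0 1)) := by
  have hs : 0 < √(2 * r) := Real.sqrt_pos.2 (by positivity)
  have h_integral : |∫ ξ, (ξ ^ 2 - 1) * (q (x + √(2 * r) * ξ) - q x) ∂(gaussianReal 0 1)| ≤
      ∫ ξ, √(2 * r) * n * (|ξ ^ 2 - 1| * |ξ|) ∂(gaussianReal 0 1) := by
    refine norm_integral_le_of_norm_le (G := ℝ)
      (integrable_abs_sq_sub_one_mul_abs_gaussianReal.const_mul _)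
      (Eventually.of_forall fun ξ => ?_)
    have h_lip := hn (x + √(2 * r) * ξ) x
    rw [add_sub_cancel_left, abs_mul, abs_of_pos hs] at h_lip
    rw [norm_mul, Real.norm_eq_abs, Real.norm_eq_abs]
    calc |ξ ^ 2 - 1| * |q (x + √(2 * r) * ξ) - q x| ≤ |ξ ^ 2 - 1| * (n * (√(2 * r) * |ξ|)) := by
          gcongr
      _ = √(2 * r) * n * (|ξ ^ 2 - 1| * |ξ|) := by ring
  rw [integral_const_mul] at h_integral
  rw [heatXX, ← integral_sq_sub_one_mul_sub hq hC, abs_mul, abs_of_nonneg (by positivity)]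
  calc _ ≤ (2 * r)⁻¹ * (√(2 * r) * n * ∫ ξ, |ξ ^ 2 - 1| * |ξ| ∂(gaussianReal 0 1)) := by gcongr
    _ = (2 * r)⁻¹ * √(2 * r) * (n * ∫ ξ, |ξ ^ 2 - 1| * |ξ| ∂(gaussianReal 0 1)) := by ring
    _ = _ := by rw [inv_mul_eq_div, Real.sqrt_div_self]

lemma integrableOn_inv_sqrt (t : ℝ) : IntegrableOn (fun s : ℝ => (√s)⁻¹) (Ioo 0 t) := by
  have h_rpow := (intervalIntegral.intervalIntegrable_rpow' (a := 0) (b := t) (r := -(1 / 2))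
    (by norm_num)).1
  refine (h_rpow.mono_set Ioo_subset_Ioc_self).congr_fun (fun s hs => ?_) measurableSet_Ioo
  simp only
  rw [Real.rpow_neg hs.1.le, ← Real.sqrt_eq_rpow]

lemma integrableOn_inv_sqrt_one_sub :
    IntegrableOn (fun θ : ℝ => (√(1 - θ))⁻¹) (Ioo 0 1) := by
  have h_rpow := (intervalIntegral.intervalIntegrable_rpow' (a := 0) (b := 1) (r := -(1 / 2))
    (by norm_num)).comp_sub_left 1
  simp only [sub_zero, sub_self] at h_rpow
  refine (h_rpow.2.mono_set Ioo_subset_Ioc_self).congr_fun (fun s hs => ?_) measurableSet_Ioo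
  simp only
  rw [Real.rpow_neg (by linarith [hs.2]), ← Real.sqrt_eq_rpow]

lemma integrableOn_inv_sqrt_mul :
    IntegrableOn (fun θ : ℝ => (√(1 - θ))⁻¹ * (√θ)⁻¹) (Ioo 0 1) := by
  refine Integrable.mono'
      ((integrableOn_inv_sqrt_one_sub.add (integrableOn_inv_sqrt 1)).const_mul 2)
    (by fun_prop) ((ae_restrict_iff' measurableSet_Ioo).2 (Eventually.of_forall fun θ _ => ?_))
  have h_half : ∀ z : ℝ, 1 / 2 ≤ z → (√z)⁻¹ ≤ 2 := fun z hz => by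
    rw [inv_le_comm₀ (Real.sqrt_pos.2 (by linarith)) (by norm_num)]
    exact Real.le_sqrt_of_sq_le (by norm_num; linarith)
  have h_left : 0 ≤ (√(1 - θ))⁻¹ := by positivity
  have h_right : 0 ≤ (√θ)⁻¹ := by positivity
  rw [Real.norm_of_nonneg (by positivity)]
  simp only [Pi.add_apply]
  rcases le_total (1 / 2) θ with h | h
  · nlinarith [h_half θ h]
  · nlinarith [h_half (1 - θ) (by linarith)]

/-- The Duhamel integral `∫₀ᵗ heat (g s) (t - s) x ds`, parametrized by `s = t θ`. -/
noncomputable def duhamel (g : ℝ → ℝ → ℝ) (t x : ℝ) : ℝ :=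
  ∫ θ in Ioo (0 : ℝ) 1, t * heat (g (t * θ)) (t * (1 - θ)) x

/-- The first space derivative of `duhamel g`. -/
noncomputable def duhamelX (g : ℝ → ℝ → ℝ) (t x : ℝ) : ℝ :=
  ∫ θ in Ioo (0 : ℝ) 1, t * heatX (g (t * θ)) (t * (1 - θ)) x

/-- The second space derivative of `duhamel g`. -/
noncomputable def duhamelXX (g : ℝ → ℝ → ℝ) (t x : ℝ) : ℝ :=
  ∫ θ in Ioo (0 : ℝ) 1, t * heatXX (g (t * θ)) (t * (1 - θ)) x

section Duhamel

variable {g : ℝ → ℝ → ℝ} {B δ Λ : ℝ}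

lemma continuous_heat_param (hg : Continuous (Function.uncurry g)) (hB : ∀ s x, |g s x| ≤ B) :
    Continuous (fun y : ℝ × ℝ × ℝ => heat (g y.2.1) y.1 y.2.2) := by
  have h := continuous_gaussAverage (p := fun _ => 1) continuous_const (integrable_const 1) hg hB
  simpa only [gaussAverage, one_mul, heat] using h

lemma measurable_heatX_param (hg : Continuous (Function.uncurry g)) (hB : ∀ s x, |g s x| ≤ B) :
    Measurable (fun y : ℝ × ℝ × ℝ => heatX (g y.2.1) y.1 y.2.2) := by
  have h := continuous_gaussAverage continuous_id integrable_id_gaussianReal hg hB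
  exact (by fun_prop : Measurable fun y : ℝ × ℝ × ℝ => (√(2 * y.1))⁻¹).mul h.measurable

lemma measurable_heatXX_param (hg : Continuous (Function.uncurry g)) (hB : ∀ s x, |g s x| ≤ B) :
    Measurable (fun y : ℝ × ℝ × ℝ => heatXX (g y.2.1) y.1 y.2.2) := by
  have h := continuous_gaussAverage (p := fun ξ => ξ ^ 2 - 1) (by fun_prop)
    integrable_sq_sub_one_gaussianReal hg hB
  exact (by fun_prop : Measurable fun y : ℝ × ℝ × ℝ => (2 * y.1)⁻¹).mul h.measurable

lemma continuousAt_heatXX_param (hg : Continuous (Function.uncurry g))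
    (hB : ∀ s x, |g s x| ≤ B) {y : ℝ × ℝ × ℝ} (hy : 0 < y.1) :
    ContinuousAt (fun y : ℝ × ℝ × ℝ => heatXX (g y.2.1) y.1 y.2.2) y := by
  have h := continuous_gaussAverage (p := fun ξ => ξ ^ 2 - 1) (by fun_prop)
    integrable_sq_sub_one_gaussianReal hg hB
  refine ContinuousAt.mul (ContinuousAt.inv₀ (by fun_prop) (by positivity)) h.continuousAt

lemma integrableOn_duhamel (hg : Continuous (Function.uncurry g))
    (hB : ∀ s x, |g s x| ≤ B) (t x : ℝ) :
    IntegrableOn (fun θ : ℝ => t * heat (g (t * θ)) (t * (1 - θ)) x) (Ioo 0 1) := by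
  have hc : Continuous fun θ : ℝ => t * heat (g (t * θ)) (t * (1 - θ)) x :=
    continuous_const.mul ((continuous_heat_param hg hB).comp
      (by fun_prop : Continuous fun θ : ℝ => (t * (1 - θ), t * θ, x)))
  exact hc.integrableOn_Icc.mono_set Ioo_subset_Icc_self

lemma abs_duhamel_le (hB : ∀ s x, |g s x| ≤ B) {t : ℝ} (ht : 0 ≤ t) (x : ℝ) :
    |duhamel g t x| ≤ t * B := by
  have h := norm_setIntegral_le_of_norm_le_const (μ := volume) (s := Ioo (0 : ℝ) 1) (C := t * B)
    (f := fun θ : ℝ => t * heat (g (t * θ)) (t * (1 - θ)) x) (by simp) fun θ _ => by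
      rw [norm_mul, Real.norm_of_nonneg ht]
      exact mul_le_mul_of_nonneg_left (abs_heat_le (hB _) _ _) ht
  simpa [duhamel] using h

lemma duhamel_sub {g' : ℝ → ℝ → ℝ} {B' : ℝ} (hg : Continuous (Function.uncurry g))
    (hB : ∀ s x, |g s x| ≤ B) (hg' : Continuous (Function.uncurry g'))
    (hB' : ∀ s x, |g' s x| ≤ B') (t x : ℝ) :
    duhamel g t x - duhamel g' t x = duhamel (fun s x => g s x - g' s x) t x := by
  rw [duhamel, duhamel, duhamel, ← integral_sub (integrableOn_duhamel hg hB t x)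
    (integrableOn_duhamel hg' hB' t x)]
  congr 1 with θ
  rw [← mul_sub, heat, heat, heat, ← integral_sub
    (integrable_heat (hg.uncurry_left _) (hB _) _ _)
    (integrable_heat (hg'.uncurry_left _) (hB' _) _ _)]

lemma continuous_duhamel (hg : Continuous (Function.uncurry g))
    (hB : ∀ s x, |g s x| ≤ B) : Continuous (Function.uncurry (duhamel g)) := by
  have hc : Continuous fun z : (ℝ × ℝ) × ℝ =>
      z.1.1 * heat (g (z.1.1 * z.2)) (z.1.1 * (1 - z.2)) z.1.2 :=
    (by fun_prop : Continuous fun z : (ℝ × ℝ) × ℝ => z.1.1).mul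
      ((continuous_heat_param hg hB).comp (by fun_prop : Continuous fun z : (ℝ × ℝ) × ℝ =>
        (z.1.1 * (1 - z.2), z.1.1 * z.2, z.1.2)))
  have h := continuous_parametric_integral_of_continuous (μ := volume) (s := Icc (0 : ℝ) 1)
    (f := fun (y : ℝ × ℝ) θ => y.1 * heat (g (y.1 * θ)) (y.1 * (1 - θ)) y.2) hc isCompact_Icc
  simpa only [Function.uncurry_def, duhamel, integral_Icc_eq_integral_Ioo] using h

lemma mul_inv_sqrt_le {t θ : ℝ} (ht : 0 < t) (hθ : θ ∈ Ioo (0 : ℝ) 1) :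
    t * (√(2 * (t * (1 - θ))))⁻¹ ≤ √t * (√(1 - θ))⁻¹ := by
  have hpos : 0 < t * (1 - θ) := mul_pos ht (sub_pos.2 hθ.2)
  calc t * (√(2 * (t * (1 - θ))))⁻¹ ≤ t * (√(t * (1 - θ)))⁻¹ := by
        refine mul_le_mul_of_nonneg_left (inv_anti₀ (Real.sqrt_pos.2 hpos) ?_) ht.le
        exact Real.sqrt_le_sqrt (by linarith)
    _ = √t * (√(1 - θ))⁻¹ := by
        rw [Real.sqrt_mul ht.le, mul_inv, ← mul_assoc, ← div_eq_mul_inv t, Real.div_sqrt]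

lemma abs_mul_heatX_le {q : ℝ → ℝ} (hB : ∀ y, |q y| ≤ B) {t θ : ℝ} (ht : 0 < t)
    (hθ : θ ∈ Ioo (0 : ℝ) 1) (x : ℝ) : |t * heatX q (t * (1 - θ)) x| ≤
      √t * (√(1 - θ))⁻¹ * (B * ∫ ξ, |ξ| ∂(gaussianReal 0 1)) := by
  have hB0 : 0 ≤ B := (abs_nonneg _).trans (hB 0)
  rw [abs_mul, abs_of_pos ht]
  calc t * |heatX q (t * (1 - θ)) x|
      ≤ t * ((√(2 * (t * (1 - θ))))⁻¹ * (B * ∫ ξ, |ξ| ∂(gaussianReal 0 1))) := by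
        gcongr
        exact abs_heatX_le hB _ _
    _ = t * (√(2 * (t * (1 - θ))))⁻¹ * (B * ∫ ξ, |ξ| ∂(gaussianReal 0 1)) := by ring
    _ ≤ _ := mul_le_mul_of_nonneg_right (mul_inv_sqrt_le ht hθ)
        (mul_nonneg hB0 (integral_nonneg fun _ => abs_nonneg _))

lemma hasDerivAt_duhamel_space (hg : Continuous (Function.uncurry g))
    (hB : ∀ s x, |g s x| ≤ B) {t : ℝ} (ht : 0 < t) (x : ℝ) :
    HasDerivAt (duhamel g t) (duhamelX g t x) x := by
  refine (hasDerivAt_integral_of_dominated_loc_of_deriv_le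
    (μ := volume.restrict (Ioo (0 : ℝ) 1))
    (F := fun x θ => t * heat (g (t * θ)) (t * (1 - θ)) x)
    (F' := fun x θ => t * heatX (g (t * θ)) (t * (1 - θ)) x)
    (bound := fun θ => (√t * (√(1 - θ))⁻¹) * (B * ∫ ξ, |ξ| ∂(gaussianReal 0 1)))
    (s := univ) univ_mem (Eventually.of_forall fun y =>
      (integrableOn_duhamel hg hB t y).aestronglyMeasurable) (integrableOn_duhamel hg hB t x)
    ?_ ?_ ((integrableOn_inv_sqrt_one_sub.const_mul _).mul_const _) ?_).2
  · exact (((measurable_heatX_param hg hB).comp (by fun_prop : Measurable fun θ : ℝ =>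
      (t * (1 - θ), t * θ, x))).const_mul t).aestronglyMeasurable
  · exact (ae_restrict_iff' measurableSet_Ioo).2 (Eventually.of_forall fun θ hθ y _ =>
      abs_mul_heatX_le (hB _) ht hθ y)
  · refine (ae_restrict_iff' measurableSet_Ioo).2 (Eventually.of_forall fun θ hθ y _ => ?_)
    exact (hasDerivAt_heat_space (hg.uncurry_left _) (hB _)
      (mul_pos ht (sub_pos.2 hθ.2)) y).const_mul t

lemma exists_abs_duhamelX_le (hB : ∀ s x, |g s x| ≤ B) :
    ∃ K, 0 ≤ K ∧ ∀ t, 0 < t → ∀ x, |duhamelX g t x| ≤ K * √t := by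
  have hB0 : 0 ≤ B := (abs_nonneg _).trans (hB 0 0)
  refine ⟨(∫ θ in Ioo (0 : ℝ) 1, (√(1 - θ))⁻¹) * (B * ∫ ξ, |ξ| ∂(gaussianReal 0 1)),
    mul_nonneg (integral_nonneg fun _ => by positivity)
      (mul_nonneg hB0 (integral_nonneg fun _ => abs_nonneg _)),
    fun t ht x => ?_⟩
  have h := norm_integral_le_of_norm_le (μ := volume.restrict (Ioo (0 : ℝ) 1))
    (f := fun θ => t * heatX (g (t * θ)) (t * (1 - θ)) x)
    (g := fun θ => (√t * (√(1 - θ))⁻¹) * (B * ∫ ξ, |ξ| ∂(gaussianReal 0 1)))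
    ((integrableOn_inv_sqrt_one_sub.const_mul _).mul_const _)
    ((ae_restrict_iff' measurableSet_Ioo).2 (Eventually.of_forall fun θ hθ =>
      abs_mul_heatX_le (hB _) ht hθ x))
  rw [integral_mul_const, integral_const_mul (√t)] at h
  exact h.trans_eq (by ring)

lemma abs_mul_heatXX_le (hg : Continuous (Function.uncurry g)) (hB : ∀ s x, |g s x| ≤ B)
    (hΛ : ∀ s ∈ Ioo 0 δ, ∀ x y, |g s x - g s y| ≤ Λ * (√s)⁻¹ * |x - y|) {t θ : ℝ}
    (ht : t ∈ Ioo 0 δ) (hθ : θ ∈ Ioo (0 : ℝ) 1) (x : ℝ) :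
    |t * heatXX (g (t * θ)) (t * (1 - θ)) x| ≤
      ((√(1 - θ))⁻¹ * (√θ)⁻¹) * (Λ * ∫ ξ, |ξ ^ 2 - 1| * |ξ| ∂(gaussianReal 0 1)) := by
  have htθ : t * θ ∈ Ioo 0 δ := ⟨mul_pos ht.1 hθ.1, by nlinarith [hθ.1, hθ.2, ht.1, ht.2]⟩
  have hΛ0 : 0 ≤ Λ * (√(t * θ))⁻¹ := by
    simpa using (abs_nonneg _).trans (hΛ _ htθ 1 0)
  have h_sqrt := Real.sqrt_pos.2 ht.1
  rw [abs_mul, abs_of_pos ht.1]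
  calc t * |heatXX (g (t * θ)) (t * (1 - θ)) x| ≤ t * ((√(2 * (t * (1 - θ))))⁻¹ *
        ((Λ * (√(t * θ))⁻¹) * ∫ ξ, |ξ ^ 2 - 1| * |ξ| ∂(gaussianReal 0 1))) :=
        mul_le_mul_of_nonneg_left (abs_heatXX_le (hg.uncurry_left _) (hB _) (hΛ _ htθ)
          (mul_pos ht.1 (sub_pos.2 hθ.2)) _) ht.1.le
    _ = (t * (√(2 * (t * (1 - θ))))⁻¹) *
        ((Λ * (√(t * θ))⁻¹) * ∫ ξ, |ξ ^ 2 - 1| * |ξ| ∂(gaussianReal 0 1)) := by ring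
    _ ≤ (√t * (√(1 - θ))⁻¹) *
        ((Λ * (√(t * θ))⁻¹) * ∫ ξ, |ξ ^ 2 - 1| * |ξ| ∂(gaussianReal 0 1)) :=
        mul_le_mul_of_nonneg_right (mul_inv_sqrt_le ht.1 hθ)
          (mul_nonneg hΛ0 (integral_nonneg fun _ => by positivity))
    _ = (√t / √t) * ((√(1 - θ))⁻¹ * (√θ)⁻¹ *
        (Λ * ∫ ξ, |ξ ^ 2 - 1| * |ξ| ∂(gaussianReal 0 1))) := by
      rw [Real.sqrt_mul ht.1.le]
      ring
    _ = _ := by rw [div_self h_sqrt.ne', one_mul]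

lemma hasDerivAt_duhamelX_space (hg : Continuous (Function.uncurry g)) (hB : ∀ s x, |g s x| ≤ B)
    (hΛ : ∀ s ∈ Ioo 0 δ, ∀ x y, |g s x - g s y| ≤ Λ * (√s)⁻¹ * |x - y|) {t : ℝ}
    (ht : t ∈ Ioo 0 δ) (x : ℝ) :
    HasDerivAt (duhamelX g t) (duhamelXX g t x) x := by
  have hmeas : ∀ y, AEStronglyMeasurable (fun θ => t * heatX (g (t * θ)) (t * (1 - θ)) y)
      (volume.restrict (Ioo (0 : ℝ) 1)) := fun y =>
    (((measurable_heatX_param hg hB).comp (by fun_prop : Measurable fun θ : ℝ =>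
      (t * (1 - θ), t * θ, y))).const_mul t).aestronglyMeasurable
  refine (hasDerivAt_integral_of_dominated_loc_of_deriv_le
    (μ := volume.restrict (Ioo (0 : ℝ) 1))
    (F := fun x θ => t * heatX (g (t * θ)) (t * (1 - θ)) x)
    (F' := fun x θ => t * heatXX (g (t * θ)) (t * (1 - θ)) x)
    (bound := fun θ => ((√(1 - θ))⁻¹ * (√θ)⁻¹) *
      (Λ * ∫ ξ, |ξ ^ 2 - 1| * |ξ| ∂(gaussianReal 0 1)))
    (s := univ) univ_mem (Eventually.of_forall hmeas) ?_
    ?_ ?_ (integrableOn_inv_sqrt_mul.mul_const _) ?_).2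
  · exact ((integrableOn_inv_sqrt_one_sub.const_mul (√t)).mul_const
      (B * ∫ ξ, |ξ| ∂(gaussianReal 0 1))).mono' (hmeas x)
      ((ae_restrict_iff' measurableSet_Ioo).2 (Eventually.of_forall fun θ hθ =>
        abs_mul_heatX_le (hB _) ht.1 hθ x))
  · exact (((measurable_heatXX_param hg hB).comp (by fun_prop : Measurable fun θ : ℝ =>
      (t * (1 - θ), t * θ, x))).const_mul t).aestronglyMeasurable
  · exact (ae_restrict_iff' measurableSet_Ioo).2 (Eventually.of_forall fun θ hθ y _ =>
      abs_mul_heatXX_le hg hB hΛ ht hθ y)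
  · refine (ae_restrict_iff' measurableSet_Ioo).2 (Eventually.of_forall fun θ hθ y _ => ?_)
    exact (hasDerivAt_heatX_space (hg.uncurry_left _) (hB _)
      (mul_pos ht.1 (sub_pos.2 hθ.2)) y).const_mul t

lemma continuousAt_duhamelXX (hg : Continuous (Function.uncurry g)) (hB : ∀ s x, |g s x| ≤ B)
    (hΛ : ∀ s ∈ Ioo 0 δ, ∀ x y, |g s x - g s y| ≤ Λ * (√s)⁻¹ * |x - y|) {y : ℝ × ℝ}
    (hy : y.1 ∈ Ioo 0 δ) :
    ContinuousAt (Function.uncurry (duhamelXX g)) y := by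
  refine continuousAt_of_dominated (μ := volume.restrict (Ioo (0 : ℝ) 1))
    (F := fun (y : ℝ × ℝ) θ => y.1 * heatXX (g (y.1 * θ)) (y.1 * (1 - θ)) y.2)
    (bound := fun θ => ((√(1 - θ))⁻¹ * (√θ)⁻¹) *
      (Λ * ∫ ξ, |ξ ^ 2 - 1| * |ξ| ∂(gaussianReal 0 1)))
    (Eventually.of_forall fun z => ?_) ?_ (integrableOn_inv_sqrt_mul.mul_const _) ?_
  · exact (((measurable_heatXX_param hg hB).comp (by fun_prop : Measurable fun θ : ℝ =>
      (z.1 * (1 - θ), z.1 * θ, z.2))).const_mul z.1).aestronglyMeasurable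
  · filter_upwards [continuous_fst.continuousAt.preimage_mem_nhds (Ioo_mem_nhds hy.1 hy.2)]
      with z hz
    exact (ae_restrict_iff' measurableSet_Ioo).2 (Eventually.of_forall fun θ hθ =>
      abs_mul_heatXX_le hg hB hΛ hz hθ z.2)
  · refine (ae_restrict_iff' measurableSet_Ioo).2 (Eventually.of_forall fun θ hθ => ?_)
    refine continuous_fst.continuousAt.mul ?_
    have hpos : 0 < y.1 * (1 - θ) := mul_pos hy.1 (sub_pos.2 hθ.2)
    exact ContinuousAt.comp (f := fun z : ℝ × ℝ => (z.1 * (1 - θ), z.1 * θ, z.2)) (x := y)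
      (continuousAt_heatXX_param hg hB (y := (y.1 * (1 - θ), y.1 * θ, y.2)) hpos) (by fun_prop)

lemma setIntegral_mul_comp_mul {t : ℝ} (ht : 0 < t) (k : ℝ → ℝ) :
    ∫ θ in Ioo (0 : ℝ) 1, t * k (t * θ) = ∫ s in Ioo 0 t, k s := by
  rw [integral_const_mul, ← integral_Ioc_eq_integral_Ioo, ← integral_Ioc_eq_integral_Ioo,
    ← intervalIntegral.integral_of_le zero_le_one, ← intervalIntegral.integral_of_le ht.le,
    intervalIntegral.integral_comp_mul_left _ ht.ne']
  simp [ht.ne']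

lemma duhamel_eq {t : ℝ} (ht : 0 < t) (x : ℝ) :
    duhamel g t x = ∫ s in Ioo 0 t, heat (g s) (t - s) x := by
  rw [← setIntegral_mul_comp_mul ht, duhamel]
  simp only [mul_sub, mul_one]

lemma duhamelXX_eq {t : ℝ} (ht : 0 < t) (x : ℝ) :
    duhamelXX g t x = ∫ s in Ioo 0 t, heatXX (g s) (t - s) x := by
  rw [← setIntegral_mul_comp_mul ht, duhamelXX]
  simp only [mul_sub, mul_one]

/-- The triangle `0 < s < τ < t`, with coordinates `(τ, s)`. -/
def triangle (t : ℝ) : Set (ℝ × ℝ) := {p | 0 < p.2 ∧ p.2 < p.1 ∧ p.1 < t}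

lemma measurableSet_triangle (t : ℝ) : MeasurableSet (triangle t) :=
  (measurableSet_lt measurable_const measurable_snd).inter
    ((measurableSet_lt measurable_snd measurable_fst).inter
      (measurableSet_lt measurable_fst measurable_const))

lemma integrable_triangle_heatXX (hg : Continuous (Function.uncurry g)) (hB : ∀ s x, |g s x| ≤ B)
    (hΛ : ∀ s ∈ Ioo 0 δ, ∀ x y, |g s x - g s y| ≤ Λ * (√s)⁻¹ * |x - y|) {t : ℝ}
    (ht : t ∈ Ioo 0 δ) (x : ℝ) :
    Integrable ((triangle t).indicator fun p => heatXX (g p.2) (p.1 - p.2) x)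
      (volume.prod volume) := by
  set k : ℝ → ℝ := (Ioo 0 t).indicator fun s => (√s)⁻¹ with hk
  set m := ∫ ξ, |ξ ^ 2 - 1| * |ξ| ∂(gaussianReal 0 1)
  have hki : Integrable k :=
    (integrable_indicator_iff measurableSet_Ioo).2 (integrableOn_inv_sqrt t)
  refine ((hki.convolution_integrand (ContinuousLinearMap.mul ℝ ℝ) hki).mul_const (Λ * m)).mono'
    ?_ (Eventually.of_forall fun p => ?_)
  · exact (((measurable_heatXX_param hg hB).comp (by fun_prop : Measurable fun p : ℝ × ℝ =>
      (p.1 - p.2, p.2, x))).indicator (measurableSet_triangle t)).aestronglyMeasurable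
  have hm : 0 ≤ m := integral_nonneg fun _ => by positivity
  have hk0 : ∀ s, 0 ≤ k s := fun s => indicator_nonneg (fun _ _ => by positivity) s
  have hΛ0 : 0 ≤ Λ := nonneg_of_mul_nonneg_left
    (by simpa using (abs_nonneg _).trans (hΛ t ht 1 0)) (inv_pos.2 (Real.sqrt_pos.2 ht.1))
  simp only [ContinuousLinearMap.mul_apply']
  by_cases hp : p ∈ triangle t
  · have hp2 : p.2 ∈ Ioo 0 t := ⟨hp.1, hp.2.1.trans hp.2.2⟩
    have hp1 : p.1 - p.2 ∈ Ioo 0 t := ⟨sub_pos.2 hp.2.1, by linarith [hp.1, hp.2.2]⟩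
    rw [indicator_of_mem hp, hk, indicator_of_mem hp2, indicator_of_mem hp1]
    refine (abs_heatXX_le (hg.uncurry_left _) (hB _) (hΛ _ ⟨hp2.1, hp2.2.trans ht.2⟩)
      hp1.1 x).trans ?_
    have h_sqrt : (√(2 * (p.1 - p.2)))⁻¹ ≤ (√(p.1 - p.2))⁻¹ :=
      inv_anti₀ (Real.sqrt_pos.2 hp1.1) (Real.sqrt_le_sqrt (by linarith [hp1.1]))
    calc _ ≤ (√(p.1 - p.2))⁻¹ * (Λ * (√p.2)⁻¹ * m) := by gcongr
      _ = _ := by ring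
  · rw [indicator_of_notMem hp, norm_zero]
    exact mul_nonneg (mul_nonneg (hk0 _) (hk0 _)) (mul_nonneg hΛ0 hm)

lemma integral_triangle_fst (t x τ : ℝ) :
    ∫ s, (triangle t).indicator (fun p => heatXX (g p.2) (p.1 - p.2) x) (τ, s)
      = (Ioo 0 t).indicator (fun τ => duhamelXX g τ x) τ := by
  by_cases hτ : τ ∈ Ioo 0 t
  · rw [indicator_of_mem hτ, duhamelXX_eq hτ.1, ← integral_indicator measurableSet_Ioo]
    congr 1 with s
    by_cases hs : s ∈ Ioo 0 τ
    · rw [indicator_of_mem hs, indicator_of_mem (show (τ, s) ∈ triangle t from ⟨hs.1, hs.2, hτ.2⟩)]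
    · rw [indicator_of_notMem hs, indicator_of_notMem]
      exact fun h => hs ⟨h.1, h.2.1⟩
  · rw [indicator_of_notMem hτ, ← integral_zero ℝ ℝ (μ := volume)]
    congr 1 with s
    rw [indicator_of_notMem]
    exact fun h => hτ ⟨h.1.trans h.2.1, h.2.2⟩

lemma integral_triangle_snd (hg : Continuous (Function.uncurry g))
    (hB : ∀ s x, |g s x| ≤ B) {t s x : ℝ} (hi : Integrable fun τ =>
      (triangle t).indicator (fun p => heatXX (g p.2) (p.1 - p.2) x) (τ, s)) :
    ∫ τ, (triangle t).indicator (fun p => heatXX (g p.2) (p.1 - p.2) x) (τ, s)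
      = (Ioo 0 t).indicator (fun s => heat (g s) (t - s) x - g s x) s := by
  by_cases hs : s ∈ Ioo 0 t
  · have h_slice : (fun τ => (triangle t).indicator (fun p => heatXX (g p.2) (p.1 - p.2) x) (τ, s))
        = (Ioo s t).indicator fun τ => heatXX (g s) (τ - s) x := by
      funext τ
      by_cases hτ : τ ∈ Ioo s t
      · rw [indicator_of_mem hτ, indicator_of_mem (show (τ, s) ∈ triangle t from
          ⟨hs.1, hτ.1, hτ.2⟩)]
      · rw [indicator_of_notMem hτ, indicator_of_notMem]
        exact fun h => hτ ⟨h.2.1, h.2.2⟩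
    rw [h_slice, integrable_indicator_iff measurableSet_Ioo] at hi
    rw [h_slice, indicator_of_mem hs, integral_indicator measurableSet_Ioo,
      ← integral_Ioc_eq_integral_Ioo, ← intervalIntegral.integral_of_le hs.2.le]
    have h_ftc := intervalIntegral.integral_eq_sub_of_hasDerivAt_of_le hs.2.le
      (f := fun τ => heat (g s) (τ - s) x) (f' := fun τ => heatXX (g s) (τ - s) x)
      ((continuous_heat (hg.uncurry_left s) (hB s)).comp
        (by fun_prop : Continuous fun τ : ℝ => (τ - s, x))).continuousOn
      (fun τ hτ => (hasDerivAt_heat_time (hg.uncurry_left s) (hB s)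
        (sub_pos.2 hτ.1) x).comp_sub_const τ s)
      ((intervalIntegrable_iff_integrableOn_Ioo_of_le hs.2.le).2 hi)
    rw [h_ftc, sub_self, heat_zero]
  · rw [indicator_of_notMem hs, ← integral_zero ℝ ℝ (μ := volume)]
    congr 1 with τ
    rw [indicator_of_notMem]
    exact fun h => hs ⟨h.1, h.2.1.trans h.2.2⟩

lemma integrableOn_duhamelXX (hg : Continuous (Function.uncurry g)) (hB : ∀ s x, |g s x| ≤ B)
    (hΛ : ∀ s ∈ Ioo 0 δ, ∀ x y, |g s x - g s y| ≤ Λ * (√s)⁻¹ * |x - y|) {t : ℝ}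
    (ht : t ∈ Ioo 0 δ) (x : ℝ) : IntegrableOn (fun τ => duhamelXX g τ x) (Ioo 0 t) := by
  have h := (integrable_triangle_heatXX hg hB hΛ ht x).integral_prod_left
  simp only [integral_triangle_fst] at h
  exact (integrable_indicator_iff measurableSet_Ioo).1 h

lemma setIntegral_duhamelXX (hg : Continuous (Function.uncurry g)) (hB : ∀ s x, |g s x| ≤ B)
    (hΛ : ∀ s ∈ Ioo 0 δ, ∀ x y, |g s x - g s y| ≤ Λ * (√s)⁻¹ * |x - y|) {t : ℝ}
    (ht : t ∈ Ioo 0 δ) (x : ℝ) :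
    ∫ τ in Ioo 0 t, duhamelXX g τ x = ∫ s in Ioo 0 t, (heat (g s) (t - s) x - g s x) := by
  have h_int := integrable_triangle_heatXX hg hB hΛ ht x
  rw [← integral_indicator measurableSet_Ioo, ← integral_indicator measurableSet_Ioo]
  calc _ = ∫ τ, ∫ s, (triangle t).indicator (fun p => heatXX (g p.2) (p.1 - p.2) x) (τ, s) := by
        simp only [integral_triangle_fst]
    _ = ∫ s, ∫ τ, (triangle t).indicator (fun p => heatXX (g p.2) (p.1 - p.2) x) (τ, s) :=
        integral_integral_swap (f := fun τ s =>
          (triangle t).indicator (fun p => heatXX (g p.2) (p.1 - p.2) x) (τ, s)) h_int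
    _ = _ := by
        refine integral_congr_ae ?_
        filter_upwards [h_int.prod_left_ae] with s hs using integral_triangle_snd hg hB hs

lemma duhamel_eq_integral (hg : Continuous (Function.uncurry g)) (hB : ∀ s x, |g s x| ≤ B)
    (hΛ : ∀ s ∈ Ioo 0 δ, ∀ x y, |g s x - g s y| ≤ Λ * (√s)⁻¹ * |x - y|) {t : ℝ}
    (ht : t ∈ Ioo 0 δ) (x : ℝ) :
    duhamel g t x = ∫ τ in (0 : ℝ)..t, (duhamelXX g τ x + g τ x) := by
  have hgi : IntegrableOn (fun s => g s x) (Ioo 0 t) :=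
    (hg.uncurry_right x).integrableOn_Icc.mono_set Ioo_subset_Icc_self
  have hhi : IntegrableOn (fun s => heat (g s) (t - s) x) (Ioo 0 t) :=
    (((continuous_heat_param hg hB).comp (by fun_prop : Continuous fun s : ℝ =>
      (t - s, s, x))).integrableOn_Icc).mono_set Ioo_subset_Icc_self
  rw [intervalIntegral.integral_of_le ht.1.le, integral_Ioc_eq_integral_Ioo,
    integral_add (integrableOn_duhamelXX hg hB hΛ ht x) hgi, setIntegral_duhamelXX hg hB hΛ ht,
    integral_sub hhi hgi, duhamel_eq ht.1]
  ring

lemma hasDerivAt_duhamel_time (hg : Continuous (Function.uncurry g)) (hB : ∀ s x, |g s x| ≤ B)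
    (hΛ : ∀ s ∈ Ioo 0 δ, ∀ x y, |g s x - g s y| ≤ Λ * (√s)⁻¹ * |x - y|) {t : ℝ}
    (ht : t ∈ Ioo 0 δ) (x : ℝ) :
    HasDerivAt (fun t => duhamel g t x) (duhamelXX g t x + g t x) t := by
  have hgc : Continuous fun s => g s x := hg.uncurry_right x
  have hcont : ∀ τ ∈ Ioo 0 δ, ContinuousAt (fun τ => duhamelXX g τ x + g τ x) τ := fun τ hτ =>
    (ContinuousAt.comp (f := fun τ : ℝ => (τ, x)) (x := τ)
      (continuousAt_duhamelXX hg hB hΛ (y := (τ, x)) hτ) (by fun_prop)).add hgc.continuousAt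
  have hint : IntervalIntegrable (fun τ => duhamelXX g τ x + g τ x) volume 0 t :=
    ((intervalIntegrable_iff_integrableOn_Ioo_of_le ht.1.le).2
      (integrableOn_duhamelXX hg hB hΛ ht x)).add (hgc.intervalIntegrable _ _)
  have h := intervalIntegral.integral_hasDerivAt_right hint
    (ContinuousAt.stronglyMeasurableAtFilter isOpen_Ioo hcont t ht) (hcont t ht)
  refine h.congr_of_eventuallyEq ?_
  filter_upwards [Ioo_mem_nhds ht.1 ht.2] with τ hτ using duhamel_eq_integral hg hB hΛ hτ x

lemma parabolicOn_duhamel (hg : Continuous (Function.uncurry g)) (hB : ∀ s x, |g s x| ≤ B)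
    (hΛ : ∀ s ∈ Ioo 0 δ, ∀ x y, |g s x - g s y| ≤ Λ * (√s)⁻¹ * |x - y|) :
    ParabolicOn 0 δ (duhamel g) (fun t x => duhamelXX g t x + g t x) (duhamelX g)
      (duhamelXX g) where
  cont_time x := ((continuous_duhamel hg hB).uncurry_right x).continuousOn
  cont_space t _ := (continuous_duhamel hg hB).uncurry_left t
  deriv_time _ ht x := hasDerivAt_duhamel_time hg hB hΛ ht x
  deriv_space _ ht x := hasDerivAt_duhamel_space hg hB ht.1 x
  deriv_space₂ _ ht x := hasDerivAt_duhamelX_space hg hB hΛ ht x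

end Duhamel

/-! ### Local existence -/

/-- The truncation of `w` to the interval `[0, 2 * M]`, which makes the reaction term globally
bounded and Lipschitz. -/
noncomputable def clip (M w : ℝ) : ℝ := max 0 (min w (2 * M))

/-- The reaction term `-2 f w + w ^ 2` at the point `x`, with `w` truncated to `[0, 2 * M]`. -/
noncomputable def reaction (f : ℝ → ℝ) (M x w : ℝ) : ℝ := -2 * f x * clip M w + clip M w ^ 2

/-- The truncated reaction term along the space-time function `w`. -/
noncomputable def source (f : ℝ → ℝ) (M : ℝ) (w : ℝ → ℝ → ℝ) (s y : ℝ) : ℝ :=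
  reaction f M y (w s y)

section Reaction

variable {f : ℝ → ℝ} {F M w : ℝ}

lemma clip_nonneg (M w : ℝ) : 0 ≤ clip M w := le_max_left _ _

lemma clip_le (hM : 0 ≤ M) (w : ℝ) : clip M w ≤ 2 * M :=
  max_le (by positivity) (min_le_right _ _)

lemma clip_of_nonpos (hw : w ≤ 0) : clip M w = 0 :=
  max_eq_left ((min_le_left _ _).trans hw)

lemma clip_of_mem (hw : w ∈ Icc 0 (2 * M)) : clip M w = w := by
  rw [clip, min_eq_left hw.2, max_eq_right hw.1]

lemma abs_clip_sub_clip_le (M a b : ℝ) : |clip M a - clip M b| ≤ |a - b| := by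
  refine (abs_max_sub_max_le_max 0 _ 0 _).trans ?_
  rw [sub_self, abs_zero, max_eq_right (abs_nonneg _)]
  refine (abs_min_sub_min_le_max _ _ _ _).trans ?_
  rw [sub_self, abs_zero, max_eq_left (abs_nonneg _)]

lemma reaction_of_nonpos (f : ℝ → ℝ) (M x : ℝ) (hw : w ≤ 0) : reaction f M x w = 0 := by
  simp [reaction, clip_of_nonpos hw]

lemma continuous_reaction (hfc : Continuous f) :
    Continuous fun p : ℝ × ℝ => reaction f M p.1 p.2 := by
  unfold reaction clip
  fun_prop

lemma continuous_source (hfc : Continuous f) {w : ℝ → ℝ → ℝ}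
    (hw : Continuous (Function.uncurry w)) : Continuous (Function.uncurry (source f M w)) :=
  (continuous_reaction hfc).comp (continuous_snd.prodMk hw)

lemma abs_reaction_le (hf : ∀ x, 0 ≤ f x) (hF : ∀ x, f x ≤ F) (hM : 0 ≤ M) (x w : ℝ) :
    |reaction f M x w| ≤ 4 * M * F + 4 * M ^ 2 := by
  have h_nonneg := clip_nonneg M w
  have h_le := clip_le hM w
  have h_linear : f x * clip M w ≤ F * (2 * M) :=
    mul_le_mul (hF x) h_le h_nonneg ((hf x).trans (hF x))
  have h_linear_nonneg := mul_nonneg (hf x) h_nonneg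
  unfold reaction
  rw [abs_le]
  constructor <;> nlinarith

lemma reaction_le (hf : ∀ x, 0 ≤ f x) (hM : 0 ≤ M) (x w : ℝ) :
    reaction f M x w ≤ 4 * M ^ 2 := by
  have h_nonneg := clip_nonneg M w
  have h_le := clip_le hM w
  have h_linear_nonneg := mul_nonneg (hf x) h_nonneg
  unfold reaction
  nlinarith

lemma abs_reaction_sub_le (hf : ∀ x, 0 ≤ f x) (hF : ∀ x, f x ≤ F) (hM : 0 ≤ M) (x a b : ℝ) :
    |reaction f M x a - reaction f M x b| ≤ (2 * F + 4 * M) * |a - b| := by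
  have h_factor : reaction f M x a - reaction f M x b
      = (-2 * f x + (clip M a + clip M b)) * (clip M a - clip M b) := by
    unfold reaction
    ring
  rw [h_factor, abs_mul]
  refine mul_le_mul ?_ (abs_clip_sub_clip_le M a b) (abs_nonneg _)
    (by linarith [(hf x).trans (hF x)])
  rw [abs_le]
  have := hf x
  have := hF x
  constructor <;> linarith [clip_nonneg M a, clip_nonneg M b, clip_le hM a, clip_le hM b]

lemma abs_reaction_sub_le_space {N : ℝ≥0} (hN : LipschitzWith N f) (hM : 0 ≤ M) (x y a : ℝ) :
    |reaction f M x a - reaction f M y a| ≤ 4 * M * N * |x - y| := by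
  have h_factor : reaction f M x a - reaction f M y a = -(2 * clip M a) * (f x - f y) := by
    unfold reaction
    ring
  rw [h_factor, abs_mul, abs_neg, abs_of_nonneg (by linarith [clip_nonneg M a])]
  calc _ ≤ (4 * M) * (N * |x - y|) := mul_le_mul (by linarith [clip_le hM a])
        (hN.dist_le_mul x y) (abs_nonneg _) (by positivity)
    _ = _ := by ring

end Reaction

lemma exists_isFixedPt_of_contracting {X : Type*} [TopologicalSpace X] {Φ : (X → ℝ) → X → ℝ}
    {C : ℝ} {k : ℝ≥0} (hk : k < 1) (hcont : ∀ w, Continuous w → Continuous (Φ w))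
    (hC : ∀ w p, |Φ w p| ≤ C)
    (hΦ : ∀ w w' D, Continuous w → Continuous w' → (∀ p, |w p - w' p| ≤ D) →
      ∀ p, |Φ w p - Φ w' p| ≤ k * D) :
    ∃ w, Continuous w ∧ Function.IsFixedPt Φ w := by
  let Ψ : BoundedContinuousFunction X ℝ → BoundedContinuousFunction X ℝ := fun w =>
    BoundedContinuousFunction.ofNormedAddCommGroup (Φ w) (hcont w w.continuous) C (hC w)
  have hΨ : ContractingWith k Ψ := by
    refine ⟨hk, LipschitzWith.of_dist_le_mul fun w w' => ?_⟩
    rw [BoundedContinuousFunction.dist_le (by positivity)]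
    exact hΦ w w' _ w.continuous w'.continuous
      (BoundedContinuousFunction.dist_coe_le_dist (f := w) (g := w'))
  exact ⟨hΨ.fixedPoint, hΨ.fixedPoint.continuous,
    congrArg DFunLike.coe hΨ.fixedPoint_isFixedPt⟩

/-- `w` solves on `[0, δ]` the integral form
`w t = e^{t ∂ₓ²} q + ∫₀ᵗ e^{(t - s) ∂ₓ²} (source f M w s) ds` of the equation with truncated
reaction term and initial datum `q`. Continuity is required on the whole plane; the values at
other times are irrelevant. -/
structure IsMildSolution (f q : ℝ → ℝ) (M δ : ℝ) (w : ℝ → ℝ → ℝ) : Prop where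
  continuous : Continuous (Function.uncurry w)
  eq_heat_add_duhamel : ∀ t ∈ Icc 0 δ, ∀ x, w t x = heat q t x + duhamel (source f M w) t x

lemma abs_duhamel_source_sub_le {f : ℝ → ℝ} {F M D t : ℝ} {w w' : ℝ → ℝ → ℝ}
    (hfc : Continuous f) (hf : ∀ x, 0 ≤ f x) (hF : ∀ x, f x ≤ F) (hM : 0 ≤ M)
    (hw : Continuous (Function.uncurry w)) (hw' : Continuous (Function.uncurry w'))
    (hD : ∀ s x, |w s x - w' s x| ≤ D) (ht : 0 ≤ t) (x : ℝ) :
    |duhamel (source f M w) t x - duhamel (source f M w') t x| ≤ t * ((2 * F + 4 * M) * D) := by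
  have hF0 : 0 ≤ F := (hf 0).trans (hF 0)
  rw [duhamel_sub (continuous_source hfc hw) (fun s y => abs_reaction_le hf hF hM y (w s y))
    (continuous_source hfc hw') (fun s y => abs_reaction_le hf hF hM y (w' s y))]
  exact abs_duhamel_le (fun s y => (abs_reaction_sub_le hf hF hM y _ _).trans
    (mul_le_mul_of_nonneg_left (hD s y) (by positivity))) ht x

section Mild

variable {f q : ℝ → ℝ} {F M δ : ℝ} {N : ℝ≥0} {w : ℝ → ℝ → ℝ}

theorem exists_isMildSolution (hfc : Continuous f) (hf : ∀ x, 0 ≤ f x) (hF : ∀ x, f x ≤ F)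
    (hM : 0 ≤ M) (hδ : 0 ≤ δ) (hδF : δ * (2 * F + 4 * M) ≤ 1 / 2) (hq : Continuous q)
    (hqM : ∀ x, |q x| ≤ M) : ∃ w, IsMildSolution f q M δ w := by
  have hF0 : 0 ≤ F := (hf 0).trans (hF 0)
  let τ : ℝ → ℝ := fun s => projIcc 0 δ hδ s
  have hτ : ∀ s, τ s ∈ Icc 0 δ := fun s => (projIcc 0 δ hδ s).2
  have hτc : Continuous fun p : ℝ × ℝ => (τ p.1, p.2) :=
    (continuous_subtype_val.comp (continuous_projIcc.comp continuous_fst)).prodMk continuous_snd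
  have hB : ∀ w s y, |source f M w s y| ≤ 4 * M * F + 4 * M ^ 2 := fun w s y =>
    abs_reaction_le hf hF hM y (w s y)
  obtain ⟨w, hw, hfix⟩ := exists_isFixedPt_of_contracting (X := ℝ × ℝ)
    (Φ := fun w p => heat q (τ p.1) p.2 + duhamel (source f M (Function.curry w)) (τ p.1) p.2)
    (C := M + δ * (4 * M * F + 4 * M ^ 2)) (k := 1 / 2) (by norm_num)
    (fun w hw => ((continuous_heat hq hqM).comp hτc).add
      ((continuous_duhamel (continuous_source hfc (w := Function.curry w) hw) (hB _)).comp hτc))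
    (fun w p => (abs_add_le _ _).trans (add_le_add (abs_heat_le hqM _ _)
      ((abs_duhamel_le (hB _) (hτ p.1).1 _).trans
        (mul_le_mul_of_nonneg_right (hτ p.1).2 (by positivity)))))
    (fun w w' D hw hw' hD p => by
      have hD0 : 0 ≤ D := (abs_nonneg _).trans (hD p)
      have h_sub := abs_duhamel_source_sub_le (w := Function.curry w) (w' := Function.curry w')
        hfc hf hF hM hw hw' (fun s y => hD (s, y)) (hτ p.1).1 p.2
      rw [add_sub_add_left_eq_sub]
      calc _ ≤ τ p.1 * ((2 * F + 4 * M) * D) := h_sub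
        _ ≤ δ * ((2 * F + 4 * M) * D) := mul_le_mul_of_nonneg_right (hτ p.1).2 (by positivity)
        _ = δ * (2 * F + 4 * M) * D := (mul_assoc _ _ _).symm
        _ ≤ 1 / 2 * D := mul_le_mul_of_nonneg_right hδF hD0
        _ = _ := by simp)
  refine ⟨Function.curry w, hw, fun t ht x => ?_⟩
  have h := congrFun hfix (t, x)
  simp only [τ, projIcc_of_mem hδ ht] at h
  exact h.symm

namespace IsMildSolution

lemma apply_zero (hw : IsMildSolution f q M δ w) (hδ : 0 ≤ δ) (x : ℝ) : w 0 x = q x := by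
  rw [hw.eq_heat_add_duhamel 0 ⟨le_rfl, hδ⟩, heat_zero]
  simp [duhamel]

lemma abs_apply_le (hw : IsMildSolution f q M δ w) (hf : ∀ x, 0 ≤ f x) (hF : ∀ x, f x ≤ F)
    (hM : 0 ≤ M) (hqM : ∀ x, |q x| ≤ M) {t : ℝ} (ht : t ∈ Icc 0 δ) (x : ℝ) :
    |w t x| ≤ M + δ * (4 * M * F + 4 * M ^ 2) := by
  have hF0 : 0 ≤ F := (hf 0).trans (hF 0)
  rw [hw.eq_heat_add_duhamel t ht]
  exact (abs_add_le _ _).trans (add_le_add (abs_heat_le hqM _ _)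
    ((abs_duhamel_le (fun s y => abs_reaction_le hf hF hM y (w s y)) ht.1 _).trans
      (mul_le_mul_of_nonneg_right ht.2 (by positivity))))

lemma hasDerivAt_space (hw : IsMildSolution f q M δ w) (hfc : Continuous f)
    (hf : ∀ x, 0 ≤ f x) (hF : ∀ x, f x ≤ F) (hM : 0 ≤ M) (hq : Continuous q)
    (hqM : ∀ x, |q x| ≤ M) {t : ℝ} (ht : t ∈ Ioo 0 δ) (x : ℝ) :
    HasDerivAt (w t) (heatX q t x + duhamelX (source f M w) t x) x := by
  rw [funext (hw.eq_heat_add_duhamel t (Ioo_subset_Icc_self ht))]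
  exact (hasDerivAt_heat_space hq hqM ht.1 x).add (hasDerivAt_duhamel_space
    (continuous_source hfc hw.continuous) (fun s y => abs_reaction_le hf hF hM y (w s y)) ht.1 x)

lemma exists_abs_sub_le (hw : IsMildSolution f q M δ w) (hfc : Continuous f)
    (hf : ∀ x, 0 ≤ f x) (hF : ∀ x, f x ≤ F) (hM : 0 ≤ M) (hq : Continuous q)
    (hqM : ∀ x, |q x| ≤ M) :
    ∃ Λ, 0 ≤ Λ ∧ ∀ s ∈ Ioo 0 δ, ∀ x y, |w s x - w s y| ≤ Λ * (√s)⁻¹ * |x - y| := by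
  obtain ⟨K, hK0, hK⟩ :=
    exists_abs_duhamelX_le fun s y => abs_reaction_le hf hF hM y (w s y)
  set m := ∫ ξ, |ξ| ∂(gaussianReal 0 1)
  have : 0 ≤ m := integral_nonneg fun _ => abs_nonneg _
  refine ⟨M * m + K * max δ 0, by positivity, fun s hs x y => ?_⟩
  have hs0 := Real.sqrt_pos.2 hs.1
  refine (convex_univ (𝕜 := ℝ)).norm_image_sub_le_of_norm_hasDerivWithin_le
    (fun z _ => (hw.hasDerivAt_space hfc hf hF hM hq hqM hs z).hasDerivWithinAt)
    (fun z _ => ?_) (mem_univ y) (mem_univ x)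
  have h_heat : |heatX q s z| ≤ M * m * (√s)⁻¹ := by
    refine (abs_heatX_le hqM s z).trans ?_
    rw [mul_comm]
    gcongr
    linarith [hs.1]
  have h_duhamel : |duhamelX (source f M w) s z| ≤ K * max δ 0 * (√s)⁻¹ := by
    refine (hK s hs.1 z).trans ?_
    rw [mul_assoc]
    gcongr
    rw [← div_eq_mul_inv, le_div_iff₀ hs0, Real.mul_self_sqrt hs.1.le]
    exact hs.2.le.trans (le_max_left _ _)
  rw [add_mul]
  exact (abs_add_le _ _).trans (add_le_add h_heat h_duhamel)

lemma exists_abs_source_sub_le (hw : IsMildSolution f q M δ w) (hf : ∀ x, 0 ≤ f x)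
    (hF : ∀ x, f x ≤ F) (hN : LipschitzWith N f) (hM : 0 ≤ M) (hq : Continuous q)
    (hqM : ∀ x, |q x| ≤ M) :
    ∃ Λ, ∀ s ∈ Ioo 0 δ, ∀ x y,
      |source f M w s x - source f M w s y| ≤ Λ * (√s)⁻¹ * |x - y| := by
  have hF0 : 0 ≤ F := (hf 0).trans (hF 0)
  obtain ⟨Λ, _, hΛ⟩ := hw.exists_abs_sub_le hN.continuous hf hF hM hq hqM
  refine ⟨4 * M * N * √δ + (2 * F + 4 * M) * Λ, fun s hs x y => ?_⟩
  have h_sqrt : 1 ≤ √δ * (√s)⁻¹ := by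
    rw [← div_eq_mul_inv, one_le_div (Real.sqrt_pos.2 hs.1)]
    exact Real.sqrt_le_sqrt hs.2.le
  calc |reaction f M x (w s x) - reaction f M y (w s y)|
      ≤ |reaction f M x (w s x) - reaction f M y (w s x)|
        + |reaction f M y (w s x) - reaction f M y (w s y)| := abs_sub_le _ _ _
    _ ≤ 4 * M * N * |x - y| + (2 * F + 4 * M) * (Λ * (√s)⁻¹ * |x - y|) := by
      refine add_le_add (abs_reaction_sub_le_space hN hM x y _)
        ((abs_reaction_sub_le hf hF hM y _ _).trans ?_)
      gcongr
      exact hΛ s hs x y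
    _ ≤ 4 * M * N * |x - y| * (√δ * (√s)⁻¹)
        + (2 * F + 4 * M) * (Λ * (√s)⁻¹ * |x - y|) := by
      exact add_le_add_left (le_mul_of_one_le_right (by positivity) h_sqrt) _
    _ = _ := by ring

lemma parabolicOn (hw : IsMildSolution f q M δ w) (hf : ∀ x, 0 ≤ f x) (hF : ∀ x, f x ≤ F)
    (hN : LipschitzWith N f) (hM : 0 ≤ M) (hq : Continuous q) (hqM : ∀ x, |q x| ≤ M) :
    ParabolicOn 0 δ w
      (fun t x => heatXX q t x + duhamelXX (source f M w) t x + source f M w t x)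
      (fun t x => heatX q t x + duhamelX (source f M w) t x)
      (fun t x => heatXX q t x + duhamelXX (source f M w) t x) := by
  obtain ⟨Λ, hΛ⟩ := hw.exists_abs_source_sub_le hf hF hN hM hq hqM
  have hpar := (parabolicOn_heat hq hqM 0 δ).add (parabolicOn_duhamel
    (continuous_source hN.continuous hw.continuous)
    (fun s y => abs_reaction_le hf hF hM y (w s y)) hΛ)
  simp only [sub_zero, ← add_assoc] at hpar
  refine ⟨fun x => (hw.continuous.uncurry_right x).continuousOn,
    fun t _ => hw.continuous.uncurry_left t, fun t ht x => ?_,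
    fun t ht => hw.hasDerivAt_space hN.continuous hf hF hM hq hqM ht, hpar.deriv_space₂⟩
  refine (hpar.deriv_time t ht x).congr_of_eventuallyEq ?_
  filter_upwards [Ioo_mem_nhds ht.1 ht.2] with s hs
    using hw.eq_heat_add_duhamel s (Ioo_subset_Icc_self hs) x

lemma continuous_deriv_space₂ (hw : IsMildSolution f q M δ w) (hf : ∀ x, 0 ≤ f x)
    (hF : ∀ x, f x ≤ F) (hN : LipschitzWith N f) (hM : 0 ≤ M) (hq : Continuous q)
    (hqM : ∀ x, |q x| ≤ M) {t : ℝ} (ht : t ∈ Ioo 0 δ) :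
    Continuous fun x => heatXX q t x + duhamelXX (source f M w) t x := by
  obtain ⟨Λ, hΛ⟩ := hw.exists_abs_source_sub_le hf hF hN hM hq hqM
  refine continuous_iff_continuousAt.2 fun x => ContinuousAt.add ?_ ?_
  · exact ContinuousAt.comp (f := fun x : ℝ => (t, (0 : ℝ), x))
      (continuousAt_heatXX_param (g := fun _ => q) (hq.comp continuous_snd) (fun _ => hqM) ht.1)
      (by fun_prop)
  · exact ContinuousAt.comp (f := fun x : ℝ => (t, x)) (continuousAt_duhamelXX
      (continuous_source hN.continuous hw.continuous)
      (fun s y => abs_reaction_le hf hF hM y (w s y)) hΛ ht) (by fun_prop)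

lemma nonneg (hw : IsMildSolution f q M δ w) (hf : ∀ x, 0 ≤ f x) (hF : ∀ x, f x ≤ F)
    (hN : LipschitzWith N f) (hM : 0 ≤ M) (hq : Continuous q) (hqM : ∀ x, q x ∈ Icc 0 M)
    {t : ℝ} (ht : t ∈ Ico 0 δ) (x : ℝ) : 0 ≤ w t x := by
  have h_abs : ∀ x, |q x| ≤ M := fun x => abs_le.2 ⟨by linarith [(hqM x).1], (hqM x).2⟩
  refine (hw.parabolicOn hf hF hN hM hq h_abs).nonneg (L := 0)
    (fun t ht x => (abs_le.1 (hw.abs_apply_le hf hF hM h_abs (Ico_subset_Icc_self ht) x)).1)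
    (fun t _ x hneg => ?_) (fun x => ?_) ht x
  · rw [zero_mul, source, reaction_of_nonpos f M x hneg.le]
  · rw [hw.apply_zero (ht.1.trans ht.2.le)]
    exact (hqM x).1

lemma le_add_mul (hw : IsMildSolution f q M δ w) (hf : ∀ x, 0 ≤ f x) (hF : ∀ x, f x ≤ F)
    (hN : LipschitzWith N f) (hM : 0 ≤ M) (hq : Continuous q) (hqM : ∀ x, |q x| ≤ M)
    {t : ℝ} (ht : t ∈ Ico 0 δ) (x : ℝ) : w t x ≤ M + 4 * M ^ 2 * t := by
  have hlin : ∀ t, HasDerivAt (fun t : ℝ => M + 4 * M ^ 2 * t) (4 * M ^ 2) t := fun t =>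
    (((hasDerivAt_id t).const_mul (4 * M ^ 2)).const_add M).congr_deriv (mul_one _)
  refine sub_nonneg.1 (((parabolicOn_time (by fun_prop) fun t _ => hlin t).sub
    (hw.parabolicOn hf hF hN hM hq hqM)).nonneg (L := 0)
    (C := M + δ * (4 * M * F + 4 * M ^ 2)) (fun t ht x => ?_) (fun t _ x _ => ?_) (fun x => ?_)
    ht x)
  · have h_nonneg : 0 ≤ 4 * M ^ 2 * t := mul_nonneg (by positivity) ht.1
    linarith [(abs_le.1 (hw.abs_apply_le hf hF hM hqM (Ico_subset_Icc_self ht) x)).2]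
  · linarith [show source f M w t x ≤ 4 * M ^ 2 from reaction_le hf hM x _]
  · rw [hw.apply_zero (ht.1.trans ht.2.le)]
    linarith [(abs_le.1 (hqM x)).2]

lemma le_two_mul (hw : IsMildSolution f q M δ w) (hf : ∀ x, 0 ≤ f x) (hF : ∀ x, f x ≤ F)
    (hN : LipschitzWith N f) (hM : 0 ≤ M) (hδF : δ * (2 * F + 4 * M) ≤ 1 / 2)
    (hq : Continuous q) (hqM : ∀ x, |q x| ≤ M) {t : ℝ} (ht : t ∈ Ico 0 δ) (x : ℝ) :
    w t x ≤ 2 * M := by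
  have hF0 : 0 ≤ δ * F := mul_nonneg (ht.1.trans ht.2.le) ((hf 0).trans (hF 0))
  have h_time : 4 * M * t ≤ 1 := by nlinarith [mul_le_mul_of_nonneg_left ht.2.le hM]
  calc w t x ≤ M + 4 * M ^ 2 * t := hw.le_add_mul hf hF hN hM hq hqM ht x
    _ = M + M * (4 * M * t) := by ring
    _ ≤ M + M * 1 := by gcongr
    _ = 2 * M := by ring

end IsMildSolution

/-- The comparison principle keeps the mild solution in the range where the truncation is
inactive. -/
theorem exists_nonnegSolution (hf : ∀ x, 0 ≤ f x) (hF : ∀ x, f x ≤ F) (hN : LipschitzWith N f)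
    (hM : 0 < M) : ∃ δ > 0, ∀ q : ℝ → ℝ, Continuous q → (∀ x, q x ∈ Icc 0 M) →
      ∃ w wx wxx : ℝ → ℝ → ℝ, NonnegSolution f 0 δ w wx wxx ∧ (∀ x, w 0 x = q x) ∧
        (∀ t ∈ Ico 0 δ, ∀ x, w t x ≤ 2 * M) ∧ ∀ t ∈ Ioo 0 δ, Continuous (wxx t) := by
  have hF0 : 0 ≤ F := (hf 0).trans (hF 0)
  have : 0 < 2 * (2 * F + 4 * M) := by positivity
  refine ⟨(2 * (2 * F + 4 * M))⁻¹, by positivity, fun q hq hqM => ?_⟩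
  set δ := (2 * (2 * F + 4 * M))⁻¹ with hδ
  have hδF : δ * (2 * F + 4 * M) ≤ 1 / 2 := by
    rw [hδ]
    field_simp
    norm_num
  have h_abs : ∀ x, |q x| ≤ M := fun x => abs_le.2 ⟨by linarith [(hqM x).1], (hqM x).2⟩
  obtain ⟨w, hw⟩ := exists_isMildSolution hN.continuous hf hF hM.le (by positivity) hδF hq h_abs
  have hpar := hw.parabolicOn hf hF hN hM.le hq h_abs
  have hnonneg := fun t => hw.nonneg hf hF hN hM.le hq hqM (t := t)
  have hle := fun t => hw.le_two_mul hf hF hN hM.le hδF hq h_abs (t := t)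
  refine ⟨w, _, _,
    { cont_time := hpar.cont_time, cont_space := hpar.cont_space, deriv_space := hpar.deriv_space,
      deriv_space₂ := hpar.deriv_space₂, nonneg := hnonneg,
      bounded := fun t ht => ⟨2 * M, hle t ht⟩, deriv_time := fun t ht x => ?_ },
    hw.apply_zero (by positivity), hle,
    fun t ht => hw.continuous_deriv_space₂ hf hF hN hM.le hq h_abs ht⟩
  have ht' := Ioo_subset_Ico_self ht
  refine (hpar.deriv_time t ht x).congr_deriv ?_
  rw [source, reaction, clip_of_mem ⟨hnonneg t ht' x, hle t ht' x⟩]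
  ring

end Mild

/-! ### Continuation of bounded solutions -/

lemma ParabolicOn.shift {a b : ℝ} {z zt zx zxx : ℝ → ℝ → ℝ} (h : ParabolicOn a b z zt zx zxx)
    (c : ℝ) : ParabolicOn (c + a) (c + b) (fun t => z (t - c)) (fun t => zt (t - c))
      (fun t => zx (t - c)) (fun t => zxx (t - c)) where
  cont_time x := (h.cont_time x).comp (f := fun t => t - c) (by fun_prop)
    fun t ht => ⟨by linarith [ht.1], by linarith [ht.2]⟩
  cont_space t ht := h.cont_space _ ⟨by linarith [ht.1], by linarith [ht.2]⟩
  deriv_time t ht x :=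
    (h.deriv_time (t - c) ⟨by linarith [ht.1], by linarith [ht.2]⟩ x).comp_sub_const t c
  deriv_space t ht := h.deriv_space _ ⟨by linarith [ht.1], by linarith [ht.2]⟩
  deriv_space₂ t ht := h.deriv_space₂ _ ⟨by linarith [ht.1], by linarith [ht.2]⟩

lemma piecewise_Iio_eventuallyEq_left {t T : ℝ} {v w : ℝ → ℝ → ℝ} (ht : t < T) (x : ℝ) :
    (fun r => (Iio T).piecewise v w r x) =ᶠ[𝓝 t] fun r => v r x := by
  filter_upwards [Iio_mem_nhds ht] with r hr
  rw [piecewise_eq_of_mem (Iio T) _ _ hr]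

lemma piecewise_Iio_eventuallyEq_right {s t T : ℝ} {v w : ℝ → ℝ → ℝ} (hs : s < T)
    (hvw : ∀ r ∈ Ico s T, v r = w r) (ht : T ≤ t) (x : ℝ) :
    (fun r => (Iio T).piecewise v w r x) =ᶠ[𝓝 t] fun r => w r x := by
  filter_upwards [Ioi_mem_nhds (hs.trans_le ht)] with r hr
  rcases lt_or_ge r T with hrT | hrT
  · rw [piecewise_eq_of_mem (Iio T) _ _ hrT, hvw r ⟨le_of_lt hr, hrT⟩]
  · rw [piecewise_eq_of_notMem (Iio T) _ _ (notMem_Iio.2 hrT)]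

namespace NonnegSolution

variable {f : ℝ → ℝ} {a b s t T K : ℝ} {v vx vxx w wx wxx : ℝ → ℝ → ℝ}

lemma shift (h : NonnegSolution f a b v vx vxx) (c : ℝ) :
    NonnegSolution f (c + a) (c + b) (fun t => v (t - c)) (fun t => vx (t - c))
      (fun t => vxx (t - c)) where
  toParabolicOn := h.toParabolicOn.shift c
  nonneg t ht := h.nonneg _ ⟨by linarith [ht.1], by linarith [ht.2]⟩
  bounded t ht := h.bounded _ ⟨by linarith [ht.1], by linarith [ht.2]⟩

lemma le_of_initial_le (hv : NonnegSolution f a b v vx vxx)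
    (hw : NonnegSolution f a b w wx wxx) (hf : ∀ x, 0 ≤ f x)
    (hwK : ∀ t ∈ Ico a b, ∀ x, w t x ≤ K) (h0 : ∀ x, w a x ≤ v a x) (ht : t ∈ Ico a b) (x : ℝ) :
    w t x ≤ v t x := by
  refine sub_nonneg.1 ((hv.toParabolicOn.sub hw.toParabolicOn).nonneg (L := 2 * K) (C := K)
    (fun t ht x => by linarith [hv.nonneg t ht x, hwK t ht x]) (fun t ht x hneg => ?_)
    (fun x => sub_nonneg.2 (h0 x)) ht x)
  have h_factor : v t x + w t x - 2 * f x ≤ 2 * K := by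
    linarith [hwK t (Ioo_subset_Ico_self ht) x, hf x]
  nlinarith [mul_le_mul_of_nonneg_right h_factor (neg_nonneg.2 hneg.le)]

lemma eq_of_initial_eq (hv : NonnegSolution f a b v vx vxx)
    (hw : NonnegSolution f a b w wx wxx) (hf : ∀ x, 0 ≤ f x)
    (hvK : ∀ t ∈ Ico a b, ∀ x, v t x ≤ K) (hwK : ∀ t ∈ Ico a b, ∀ x, w t x ≤ K)
    (h0 : ∀ x, v a x = w a x) (ht : t ∈ Ico a b) : v t = w t :=
  funext fun x => le_antisymm (hw.le_of_initial_le hv hf hvK (fun y => (h0 y).le) ht x)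
    (hv.le_of_initial_le hw hf hwK (fun y => (h0 y).ge) ht x)

lemma piecewise (hv : NonnegSolution f a T v vx vxx) (hw : NonnegSolution f s b w wx wxx)
    (hsT : s < T) (hvw : ∀ t ∈ Ico s T, v t = w t) :
    NonnegSolution f a b ((Iio T).piecewise v w) ((Iio T).piecewise vx wx)
      ((Iio T).piecewise vxx wxx) := by
  have h_lt : ∀ {t}, t < T → ∀ v w : ℝ → ℝ → ℝ, (Iio T).piecewise v w t = v t :=
    fun ht v w => piecewise_eq_of_mem _ v w ht
  have h_ge : ∀ {t}, T ≤ t → ∀ v w : ℝ → ℝ → ℝ, (Iio T).piecewise v w t = w t :=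
    fun ht v w => piecewise_eq_of_notMem _ v w (notMem_Iio.2 ht)
  refine { cont_time := fun x t ht => ?_, cont_space := fun t ht => ?_,
           deriv_time := fun t ht x => ?_, deriv_space := fun t ht x => ?_,
           deriv_space₂ := fun t ht x => ?_, nonneg := fun t ht x => ?_,
           bounded := fun t ht => ?_ }
  all_goals rcases lt_or_ge t T with htT | htT
  · refine ((hv.cont_time x t ⟨ht.1, htT⟩).mono_of_mem_nhdsWithin ?_).congr_of_eventuallyEq
      ((piecewise_Iio_eventuallyEq_left htT x).filter_mono nhdsWithin_le_nhds) (by rw [h_lt htT])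
    filter_upwards [self_mem_nhdsWithin, mem_nhdsWithin_of_mem_nhds (Iio_mem_nhds htT)]
      with r hr hrT using ⟨hr.1, hrT⟩
  · exact (((hw.cont_time x).continuousAt (Ico_mem_nhds (hsT.trans_le htT) ht.2)).congr
      (piecewise_Iio_eventuallyEq_right hsT hvw htT x).symm).continuousWithinAt
  · exact h_lt htT v w ▸ hv.cont_space t ⟨ht.1, htT⟩
  · exact h_ge htT v w ▸ hw.cont_space t ⟨hsT.le.trans htT, ht.2⟩
  · simpa only [h_lt htT] using (hv.deriv_time t ⟨ht.1, htT⟩ x).congr_of_eventuallyEq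
      (piecewise_Iio_eventuallyEq_left htT x)
  · simpa only [h_ge htT] using (hw.deriv_time t ⟨hsT.trans_le htT, ht.2⟩ x).congr_of_eventuallyEq
      (piecewise_Iio_eventuallyEq_right hsT hvw htT x)
  · simpa only [h_lt htT] using hv.deriv_space t ⟨ht.1, htT⟩ x
  · simpa only [h_ge htT] using hw.deriv_space t ⟨hsT.trans_le htT, ht.2⟩ x
  · simpa only [h_lt htT] using hv.deriv_space₂ t ⟨ht.1, htT⟩ x
  · simpa only [h_ge htT] using hw.deriv_space₂ t ⟨hsT.trans_le htT, ht.2⟩ x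
  · simpa only [h_lt htT] using hv.nonneg t ⟨ht.1, htT⟩ x
  · simpa only [h_ge htT] using hw.nonneg t ⟨hsT.le.trans htT, ht.2⟩ x
  · simpa only [h_lt htT] using hv.bounded t ⟨ht.1, htT⟩
  · simpa only [h_ge htT] using hw.bounded t ⟨hsT.le.trans htT, ht.2⟩

end NonnegSolution

lemma contDiff_two_iff_deriv {q : ℝ → ℝ} : ContDiff ℝ 2 q ↔
    Differentiable ℝ q ∧ Differentiable ℝ (deriv q) ∧ Continuous (deriv (deriv q)) := by
  rw [show (2 : WithTop ℕ∞) = 1 + 1 by norm_num, contDiff_succ_iff_deriv, contDiff_one_iff_deriv]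
  simp

/-- A classical solution on `[0, T)` that is nonpositive and bounded at each time; the bound need
not be locally uniform in time. -/
def IsBoundedNonposSolution (f h : ℝ → ℝ) (T : ℝ) (u : ℝ → ℝ → ℝ) : Prop :=
  IsClassicalSolution f h T u ∧ (∀ t ∈ Ico 0 T, ∀ x, u t x ≤ 0) ∧
    ∀ t ∈ Ico 0 T, ∃ M : ℝ, ∀ x, |u t x| ≤ M

/-- `u` extends beyond time `T` to a bounded nonpositive solution with initial datum `h`. -/
def IsExtendable (f h : ℝ → ℝ) (T : ℝ) (u : ℝ → ℝ → ℝ) : Prop :=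
  ∃ T' : ℝ, T < T' ∧ ∃ u' : ℝ → ℝ → ℝ, IsClassicalSolution f h T' u' ∧
    (∀ t ∈ Ico 0 T, ∀ x, u' t x = u t x) ∧ (∀ t ∈ Ico 0 T', ∀ x, u' t x ≤ 0) ∧
    ∀ t ∈ Ico 0 T', ∃ M : ℝ, ∀ x, |u' t x| ≤ M

section Continuation

variable {f h : ℝ → ℝ} {F T M : ℝ} {N : ℝ≥0} {u v vx vxx : ℝ → ℝ → ℝ}

lemma IsBoundedNonposSolution.nonnegSolution (hu : IsBoundedNonposSolution f h T u)
    (hh : Continuous h) :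
    NonnegSolution f 0 T (fun t x => -u t x) (fun t x => -deriv (u t) x)
      (fun t x => -deriv (deriv (u t)) x) := by
  obtain ⟨⟨h_init, h_cont, h_diff, h_eq⟩, h_nonpos, h_bdd⟩ := hu
  refine ⟨⟨fun x => (h_cont x).neg, fun t ht => ?_, fun t ht x => ?_, fun t ht x => ?_,
    fun t ht x => ?_⟩, fun t ht x => neg_nonneg.2 (h_nonpos t ht x), fun t ht => ?_⟩
  · rcases ht.1.eq_or_lt with rfl | h_pos
    · simp only [h_init]
      exact hh.neg
    · exact (h_diff t ⟨h_pos, ht.2⟩).continuous.neg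
  · exact (h_eq t ht x).neg.congr_deriv (by ring)
  · exact ((contDiff_two_iff_deriv.1 (h_diff t ht)).1 x).hasDerivAt.neg
  · exact ((contDiff_two_iff_deriv.1 (h_diff t ht)).2.1 x).hasDerivAt.neg
  · obtain ⟨M, hM⟩ := h_bdd t ht
    exact ⟨M, fun x => (neg_le_abs _).trans (hM x)⟩

lemma NonnegSolution.isBoundedNonposSolution (hv : NonnegSolution f 0 T v vx vxx)
    (hc : ∀ t ∈ Ioo 0 T, Continuous (vxx t)) (h0 : ∀ x, v 0 x = -h x) :
    IsBoundedNonposSolution f h T fun t x => -v t x := by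
  have h_deriv : ∀ t ∈ Ioo 0 T, deriv (fun x => -v t x) = fun x => -vx t x := fun t ht =>
    funext fun x => (hv.deriv_space t ht x).neg.deriv
  have h_deriv₂ : ∀ t ∈ Ioo 0 T, deriv (fun x => -vx t x) = fun x => -vxx t x := fun t ht =>
    funext fun x => (hv.deriv_space₂ t ht x).neg.deriv
  refine ⟨⟨fun x => by simp only [h0, neg_neg], fun x => (hv.cont_time x).neg, fun t ht => ?_,
    fun t ht x => ?_⟩, fun t ht x => neg_nonpos.2 (hv.nonneg t ht x), fun t ht => ?_⟩
  · rw [contDiff_two_iff_deriv, h_deriv t ht, h_deriv₂ t ht]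
    exact ⟨fun x => (hv.deriv_space t ht x).neg.differentiableAt,
      fun x => (hv.deriv_space₂ t ht x).neg.differentiableAt, (hc t ht).neg⟩
  · rw [h_deriv t ht, h_deriv₂ t ht]
    exact (hv.deriv_time t ht x).neg.congr_deriv (by ring)
  · obtain ⟨M, hM⟩ := hv.bounded t ht
    exact ⟨M, fun x => by simpa only [abs_neg] using hv.abs_le ht hM x⟩

/-- The local existence time depends only on the bound `M`, so restarting close enough to `T`
overshoots `T`; the two solutions agree on the overlap by uniqueness. -/
theorem IsBoundedNonposSolution.isExtendable (hu : IsBoundedNonposSolution f h T u)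
    (hf : ∀ x, 0 ≤ f x) (hF : ∀ x, f x ≤ F) (hN : LipschitzWith N f) (hh : Continuous h)
    (hT : 0 < T) (hM : 0 < M) (hfreq : ∃ᶠ t in 𝓝[<] T, ∀ x, |u t x| ≤ M) :
    IsExtendable f h T u := by
  have hv := hu.nonnegSolution hh
  obtain ⟨δ, hδ, hex⟩ := exists_nonnegSolution hf hF hN hM
  have hη : 0 < min δ (1 / (8 * M)) := lt_min hδ (by positivity)
  obtain ⟨s, hsM, hs⟩ := (hfreq.and_eventually (Ioo_mem_nhdsLT
    (show max 0 (T - min δ (1 / (8 * M))) < T from max_lt hT (by linarith)))).exists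
  obtain ⟨hs0, hsη⟩ := max_lt_iff.1 hs.1
  have hTδ : T < s + δ := by linarith [min_le_left δ (1 / (8 * M))]
  have hvM : ∀ x, -u s x ≤ M := fun x => (neg_le_abs _).trans (hsM x)
  have hv_le : ∀ t ∈ Ico s T, ∀ x, -u t x ≤ 2 * M := fun t ht =>
    hv.le_two_mul hf hs0.le ht.1 ht.2 hM (by linarith [ht.2, min_le_right δ (1 / (8 * M))])
      (fun τ hτ => hv.rightBounded hf hF τ ⟨hs0.le.trans hτ.1, hτ.2.trans ht.2⟩) hvM
  obtain ⟨w, wx, wxx, hw, hw_init, hw_le, hw_cont⟩ := hex (fun x => -u s x)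
    (hv.cont_space s ⟨hs0.le, hs.2⟩) fun x => ⟨hv.nonneg s ⟨hs0.le, hs.2⟩ x, hvM x⟩
  have hws := hw.shift s
  rw [add_zero] at hws
  have h_agree : ∀ t ∈ Ico s T, (fun x => -u t x) = w (t - s) := fun t ht =>
    (hv.mono hs0.le le_rfl).eq_of_initial_eq (hws.mono le_rfl hTδ.le) hf hv_le
      (fun t ht => hw_le _ ⟨by linarith [ht.1], by linarith [ht.2]⟩)
      (fun x => by rw [sub_self, hw_init]) ht
  have hp := hv.piecewise hws hs.2 h_agree
  have hu' : IsBoundedNonposSolution f h (s + δ) _ :=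
    hp.isBoundedNonposSolution (fun t ht => ?_) fun x => ?_
  · refine ⟨s + δ, hTδ, _, hu'.1, fun t ht x => ?_, hu'.2⟩
    rw [piecewise_eq_of_mem (Iio T) _ _ ht.2, neg_neg]
  · rcases lt_or_ge t T with htT | htT
    · rw [piecewise_eq_of_mem (Iio T) _ _ htT]
      exact (contDiff_two_iff_deriv.1 (hu.1.2.2.1 t ⟨ht.1, htT⟩)).2.2.neg
    · rw [piecewise_eq_of_notMem (Iio T) _ _ (notMem_Iio.2 htT)]
      exact hw_cont _ ⟨by linarith [hs.2], by linarith [ht.2]⟩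
  · rw [piecewise_eq_of_mem (Iio T) _ _ (mem_Iio.2 hT), hu.1.1 x]

theorem IsBoundedNonposSolution.tendsto_iSup_abs_atTop (hu : IsBoundedNonposSolution f h T u)
    (hf : ∀ x, 0 ≤ f x) (hF : ∀ x, f x ≤ F) (hN : LipschitzWith N f) (hh : Continuous h)
    (hT : 0 < T) (hmax : ¬ IsExtendable f h T u) :
    Tendsto (fun t : ℝ => ⨆ x : ℝ, |u t x|) (𝓝[<] T) atTop := by
  rw [tendsto_atTop]
  by_contra! hcon
  obtain ⟨C, hC⟩ := hcon
  refine hmax (hu.isExtendable hf hF hN hh hT (M := max C 1) (by positivity) ?_)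
  refine (hC.and_eventually (Ioo_mem_nhdsLT hT)).mono fun t ht x => ?_
  obtain ⟨M, hM⟩ := hu.2.2 t (Ioo_subset_Ico_self ht.2)
  calc |u t x| ≤ ⨆ x : ℝ, |u t x| := le_ciSup (f := fun x => |u t x|) ⟨M, forall_mem_range.2 hM⟩ x
    _ ≤ C := ht.1.le
    _ ≤ max C 1 := le_max_left _ _

end Continuation

/-! ### Blow-up -/

/-- The solution `α` of `α' = α² / 4`, `α 0 = a`, which blows up at time `4 / a`; it is the height
of the parabola that stays below the solution. -/
noncomputable def amplitude (a t : ℝ) : ℝ := 4 * a / (4 - a * t)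

section Amplitude

variable {a s t : ℝ}

lemma amplitude_zero (a : ℝ) : amplitude a 0 = a := by simp [amplitude]

lemma amplitude_four_div_sub {K : ℝ} (ha : a ≠ 0) (hK : K ≠ 0) :
    amplitude a (4 / a - 4 / K) = K := by
  have h_gap : 4 - a * (4 / a - 4 / K) = 4 * a / K := by field_simp; ring
  rw [amplitude, h_gap]
  field_simp

lemma hasDerivAt_amplitude (ht : a * t < 4) :
    HasDerivAt (amplitude a) (amplitude a t ^ 2 / 4) t := by
  have h_gap : 4 - a * t ≠ 0 := by linarith
  have h_denom : HasDerivAt (fun s => 4 - a * s) (-(a * 1)) t :=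
    ((hasDerivAt_id t).const_mul a).const_sub 4
  refine ((hasDerivAt_const t (4 * a)).div h_denom h_gap).congr_deriv ?_
  unfold amplitude
  field_simp
  ring

lemma amplitude_le_amplitude (ha : 0 ≤ a) (hst : s ≤ t) (ht : a * t < 4) :
    amplitude a s ≤ amplitude a t := by
  unfold amplitude
  have : 0 < 4 - a * t := sub_pos.2 ht
  gcongr

lemma le_amplitude (ha : 0 ≤ a) (h0 : 0 ≤ t) (ht : a * t < 4) : a ≤ amplitude a t := by
  simpa only [amplitude_zero] using amplitude_le_amplitude ha h0 ht

end Amplitude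

lemma parabolicOn_parabola {a b x₀ : ℝ} {α : ℝ → ℝ}
    (hα : ∀ t ∈ Ico a b, HasDerivAt α (α t ^ 2 / 4) t) :
    ParabolicOn a b (fun t x => α t - α t ^ 2 / 32 * (x - x₀) ^ 2)
      (fun t x => α t ^ 2 / 4 - α t ^ 3 / 64 * (x - x₀) ^ 2)
      (fun t x => -(α t ^ 2 / 16 * (x - x₀))) (fun t _ => -(α t ^ 2 / 16)) where
  cont_time x := by
    have hα_cont : ContinuousOn α (Ico a b) :=
      fun t ht => (hα t ht).continuousAt.continuousWithinAt
    fun_prop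
  cont_space t _ := by fun_prop
  deriv_time t ht x := by
    have hα' := hα t (Ioo_subset_Ico_self ht)
    refine (hα'.sub (((hα'.pow 2).div_const 32).mul_const ((x - x₀) ^ 2))).congr_deriv ?_
    push_cast
    ring
  deriv_space t _ x := by
    refine (((((hasDerivAt_id x).sub_const x₀).pow 2).const_mul
      (α t ^ 2 / 32)).const_sub (α t)).congr_deriv ?_
    push_cast
    simp only [id]
    ring
  deriv_space₂ t _ x :=
    (((hasDerivAt_id x).sub_const x₀).const_mul (α t ^ 2 / 16)).neg.congr_deriv (by ring)

lemma parabola_subsolution {α φ y : ℝ} (hφ : φ ≤ α / 8) (hy : 0 < α - α ^ 2 / 32 * y) :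
    α ^ 2 / 4 - α ^ 3 / 64 * y + α ^ 2 / 16 ≤
      (α - α ^ 2 / 32 * y) ^ 2 - 2 * φ * (α - α ^ 2 / 32 * y) := by
  set w := α - α ^ 2 / 32 * y with hw
  have h_cubic : α ^ 3 / 64 * y = (α ^ 2 - α * w) / 2 := by rw [hw]; ring
  rw [h_cubic]
  nlinarith [mul_le_mul_of_nonneg_right hφ hy.le, sq_nonneg (w - 3 / 8 * α), sq_nonneg α]

lemma mul_le_of_parabola_pos {a α y : ℝ} (ha : 0 < a) (haα : a ≤ α) (hy : 0 ≤ y)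
    (h : 0 < α - α ^ 2 / 32 * y) : a * y ≤ 32 := by
  have hα : 0 < α := ha.trans_le haα
  have h_factor : 0 < α * (32 - α * y) := by linarith
  linarith [pos_of_mul_pos_right h_factor hα.le, mul_le_mul_of_nonneg_right haα hy]

section BlowUp

variable {f : ℝ → ℝ} {a b t T x₀ : ℝ} {v vx vxx : ℝ → ℝ → ℝ}

/-- Where `f ≤ a / 8` the parabola is a subsolution as long as it is positive; where it is
negative the comparison is trivial. -/
lemma NonnegSolution.parabola_le (hv : NonnegSolution f 0 b v vx vxx) (ha : 0 < a)
    (hf : ∀ x, 0 ≤ f x) (hfa : ∀ x, a * (x - x₀) ^ 2 ≤ 32 → f x ≤ a / 8)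
    (h0 : ∀ x, a - a ^ 2 / 32 * (x - x₀) ^ 2 ≤ v 0 x) (hb : a * b < 4) (ht : t ∈ Ico 0 b)
    (x : ℝ) : amplitude a t - amplitude a t ^ 2 / 32 * (x - x₀) ^ 2 ≤ v t x := by
  have h_lt : ∀ s ∈ Ico 0 b, a * s < 4 := fun s hs =>
    (mul_le_mul_of_nonneg_left hs.2.le ha.le).trans_lt hb
  have hp_le : ∀ s ∈ Ico 0 b, ∀ x,
      amplitude a s - amplitude a s ^ 2 / 32 * (x - x₀) ^ 2 ≤ amplitude a b := fun s hs x =>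
    (sub_le_self _ (by positivity)).trans (amplitude_le_amplitude ha.le hs.2.le hb)
  have hp : ParabolicOn 0 b _ _ _ _ :=
    parabolicOn_parabola (x₀ := x₀) fun s hs => hasDerivAt_amplitude (h_lt s hs)
  refine sub_nonneg.1 ((hv.toParabolicOn.sub hp).nonneg (C := amplitude a b)
    (L := 2 * amplitude a b) (fun s hs x => ?_) (fun s hs x hneg => ?_) (fun x => ?_) ht x)
  · linarith [hp_le s hs x, hv.nonneg s hs x]
  · have hs' := Ioo_subset_Ico_self hs
    have hv_nonneg := hv.nonneg s hs' x
    have hα := le_amplitude ha.le hs.1.le (h_lt s hs')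
    have hp_pos : 0 < amplitude a s - amplitude a s ^ 2 / 32 * (x - x₀) ^ 2 := by linarith
    have hfx := hfa x (mul_le_of_parabola_pos ha hα (sq_nonneg _) hp_pos)
    have h_sub := parabola_subsolution (hfx.trans (by linarith)) hp_pos
    have h_factor : v s x + (amplitude a s - amplitude a s ^ 2 / 32 * (x - x₀) ^ 2) - 2 * f x ≤
      2 * amplitude a b := by linarith [hf x, hp_le s hs' x]
    nlinarith [mul_le_mul_of_nonneg_right h_factor (neg_nonneg.2 hneg.le)]
  · simpa only [amplitude_zero] using sub_nonneg.2 (h0 x)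

/-- The solution stays above the parabola of height `amplitude a`, which blows up at `4 / a`. -/
theorem NonnegSolution.le_four_div (hv : NonnegSolution f 0 T v vx vxx) (ha : 0 < a)
    (hf : ∀ x, 0 ≤ f x) (hfa : ∀ x, a * (x - x₀) ^ 2 ≤ 32 → f x ≤ a / 8)
    (h0 : ∀ x, a - a ^ 2 / 32 * (x - x₀) ^ 2 ≤ v 0 x) : T ≤ 4 / a := by
  by_contra! hT
  obtain ⟨M, hM⟩ := isCompact_Icc.bddAbove_image ((hv.cont_time x₀).mono
    fun t (ht : t ∈ Icc 0 (4 / a)) => ⟨ht.1, ht.2.trans_lt hT⟩)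
  set K := max M a + 1
  have hMK : M < K := (le_max_left M a).trans_lt (lt_add_one _)
  have haK : a < K := (le_max_right M a).trans_lt (lt_add_one _)
  have hK : 0 < K := ha.trans haK
  have ht0 : 0 ≤ 4 / a - 4 / K := sub_nonneg.2 (by gcongr)
  have ht4 : 4 / a - 4 / K < 4 / a := sub_lt_self _ (by positivity)
  obtain ⟨b, htb, hb⟩ := exists_between ht4
  have h_below := (hv.mono le_rfl (hb.trans hT).le).parabola_le ha hf hfa h0
    ((lt_div_iff₀' ha).1 hb) ⟨ht0, htb⟩ x₀
  rw [amplitude_four_div_sub ha.ne' hK.ne', sub_self, zero_pow two_ne_zero, mul_zero,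
    sub_zero] at h_below
  exact (hMK.trans_le h_below).not_ge (hM ⟨_, ⟨ht0, ht4.le⟩, rfl⟩)

end BlowUp

/-! ### The Gaussian initial datum -/

lemma eLpNorm_le_of_enorm_le {α E : Type*} [MeasurableSpace α] [TopologicalSpace E]
    [ContinuousENorm E] {μ : Measure α} {g : α → E} {C p : ℝ≥0∞} (hp : 1 ≤ p) (hC : C ≠ ∞)
    (hg : ∀ x, ‖g x‖ₑ ≤ C) (hg₁ : eLpNorm g 1 μ ≤ C) : eLpNorm g p μ ≤ C := by
  have hp0 : p ≠ 0 := (zero_lt_one.trans_le hp).ne'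
  rcases eq_or_ne p ∞ with rfl | hp_top
  · rw [eLpNorm_exponent_top]
    exact essSup_le_of_ae_le _ (Eventually.of_forall hg)
  have hp1 : 1 ≤ p.toReal := by
    simpa only [ENNReal.toReal_one] using ENNReal.toReal_mono hp_top hp
  have h_split : ∀ y : ℝ≥0∞, y ^ p.toReal = y ^ (p.toReal - 1) * y := fun y => by
    nth_rw 3 [← ENNReal.rpow_one y]
    rw [← ENNReal.rpow_add_of_nonneg _ _ (by linarith) zero_le_one, sub_add_cancel]
  rw [eLpNorm_one_eq_lintegral_enorm] at hg₁
  rw [eLpNorm_eq_lintegral_rpow_enorm_toReal hp0 hp_top, one_div,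
    ENNReal.rpow_inv_le_iff (by linarith), h_split C]
  calc ∫⁻ x, ‖g x‖ₑ ^ p.toReal ∂μ ≤ ∫⁻ x, C ^ (p.toReal - 1) * ‖g x‖ₑ ∂μ :=
        lintegral_mono fun x => by
          rw [h_split]
          gcongr
          exact hg x
    _ = C ^ (p.toReal - 1) * ∫⁻ x, ‖g x‖ₑ ∂μ :=
        lintegral_const_mul' _ _ (ENNReal.rpow_ne_top_of_nonneg (by linarith) hC)
    _ ≤ C ^ (p.toReal - 1) * C := by gcongr

/-- The initial datum `-β e^{-γ (x - x₀)²}`. -/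
noncomputable def gaussianDatum (β γ x₀ x : ℝ) : ℝ := -β * Real.exp (-γ * (x - x₀) ^ 2)

section GaussianDatum

variable {β γ x₀ : ℝ}

lemma continuous_gaussianDatum : Continuous (gaussianDatum β γ x₀) := by
  unfold gaussianDatum
  fun_prop

lemma enorm_gaussianDatum (hβ : 0 ≤ β) (x : ℝ) :
    ‖gaussianDatum β γ x₀ x‖ₑ = ENNReal.ofReal (β * Real.exp (-γ * (x - x₀) ^ 2)) := by
  rw [gaussianDatum, neg_mul, enorm_neg, Real.enorm_of_nonneg (by positivity)]

lemma enorm_gaussianDatum_le (hβ : 0 ≤ β) (hγ : 0 ≤ γ) (x : ℝ) :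
    ‖gaussianDatum β γ x₀ x‖ₑ ≤ ENNReal.ofReal β := by
  rw [enorm_gaussianDatum hβ]
  refine ENNReal.ofReal_le_ofReal (mul_le_of_le_one_right hβ (Real.exp_le_one_iff.2 ?_))
  exact mul_nonpos_of_nonpos_of_nonneg (neg_nonpos.2 hγ) (sq_nonneg _)

lemma eLpNorm_one_gaussianDatum (hβ : 0 ≤ β) (hγ : 0 < γ) :
    eLpNorm (gaussianDatum β γ x₀) 1 volume = ENNReal.ofReal (β * √(Real.pi / γ)) := by
  have h_int : Integrable fun x : ℝ => Real.exp (-γ * (x - x₀) ^ 2) :=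
    (integrable_exp_neg_mul_sq hγ).comp_sub_right x₀
  simp only [eLpNorm_one_eq_lintegral_enorm, enorm_gaussianDatum hβ]
  rw [← ofReal_integral_eq_lintegral_ofReal (h_int.const_mul _)
    (Eventually.of_forall fun x => by positivity), integral_const_mul,
    integral_sub_right_eq_self (fun x => Real.exp (-γ * x ^ 2)) x₀, integral_gaussian]

lemma pow_four_rpow {s : ℝ} (hs : 0 ≤ s) : (s ^ 4) ^ ((3 : ℝ) / 2) = s ^ 6 := by
  rw [← Real.rpow_natCast_mul hs, ← Real.rpow_natCast s 6]
  norm_num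

lemma eLpNorm_gaussianDatum_pow_le {s : ℝ} (hs : 0 < s) (hs1 : s ≤ 1) {p : ℝ≥0∞} (hp : 1 ≤ p) :
    eLpNorm (gaussianDatum (s ^ 4) (s ^ 6) x₀) p volume ≤ ENNReal.ofReal (2 * s) := by
  refine eLpNorm_le_of_enorm_le hp ENNReal.ofReal_ne_top (fun x => ?_) ?_
  · have h_pow : s ^ 4 ≤ s := pow_le_of_le_one hs.le hs1 (by norm_num)
    exact (enorm_gaussianDatum_le (by positivity) (by positivity) x).trans
      (ENNReal.ofReal_le_ofReal (by linarith))
  · rw [eLpNorm_one_gaussianDatum (by positivity) (by positivity)]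
    refine ENNReal.ofReal_le_ofReal ?_
    have h_sqrt : √(Real.pi / s ^ 6) ≤ 2 / s ^ 3 :=
      Real.sqrt_le_iff.2 ⟨by positivity, by
        rw [div_pow, ← pow_mul]
        gcongr
        linarith [Real.pi_lt_four]⟩
    calc s ^ 4 * √(Real.pi / s ^ 6) ≤ s ^ 4 * (2 / s ^ 3) := by gcongr
      _ = 2 * s := by field_simp

lemma parabola_le_neg_gaussianDatum (hβ : 0 ≤ β) (hγ : 128 * γ ≤ β) (x : ℝ) :
    β / 2 - (β / 2) ^ 2 / 32 * (x - x₀) ^ 2 ≤ -gaussianDatum β γ x₀ x := by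
  have h_exp := Real.add_one_le_exp (-γ * (x - x₀) ^ 2)
  have hγ' := mul_le_mul_of_nonneg_right hγ (sq_nonneg (x - x₀))
  calc β / 2 - (β / 2) ^ 2 / 32 * (x - x₀) ^ 2 = β * (1 / 2 - β * (x - x₀) ^ 2 / 128) := by ring
    _ ≤ β * Real.exp (-γ * (x - x₀) ^ 2) := by gcongr; linarith
    _ = -gaussianDatum β γ x₀ x := by rw [gaussianDatum, neg_mul β, neg_neg]

theorem IsBoundedNonposSolution.le_eight_div {f : ℝ → ℝ} {T : ℝ} {u : ℝ → ℝ → ℝ}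
    (hu : IsBoundedNonposSolution f (gaussianDatum β γ x₀) T u) (hf : ∀ x, 0 ≤ f x)
    (hfβ : ∀ x, β * (x - x₀) ^ 2 ≤ 64 → f x ≤ β / 16) (hβ : 0 < β) (hγ : 128 * γ ≤ β) :
    T ≤ 8 / β := by
  have hv := hu.nonnegSolution continuous_gaussianDatum
  refine (hv.le_four_div (x₀ := x₀) (half_pos hβ) hf
    (fun x hx => (hfβ x (by linarith)).trans_eq (by ring)) fun x => ?_).trans_eq ?_
  · rw [hu.1.1 x]
    exact parabola_le_neg_gaussianDatum hβ.le hγ x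
  · field_simp
    norm_num

end GaussianDatum

section VanishingPotential

variable {f : ℝ → ℝ}

lemma exists_forall_abs_sub_le_of_tendsto_cocompact (hf : Tendsto f (cocompact ℝ) (𝓝 0)) {c : ℝ}
    (hc : 0 < c) (r : ℝ) : ∃ x₀, ∀ x, |x - x₀| ≤ r → f x ≤ c := by
  have h_le : ∀ᶠ x in atTop, f x ≤ c :=
    (hf.mono_left atTop_le_cocompact).eventually_le_const hc
  obtain ⟨R, hR⟩ := eventually_atTop.1 h_le
  exact ⟨R + r, fun x hx => hR x (by linarith [(abs_le.1 hx).1])⟩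

lemma exists_forall_le_of_tendsto_cocompact (hfc : Continuous f)
    (hf : Tendsto f (cocompact ℝ) (𝓝 0)) : ∃ F, ∀ x, f x ≤ F := by
  obtain ⟨K, hK, hKf⟩ := mem_cocompact.1 (hf.eventually_le_const zero_lt_one)
  obtain ⟨M, hM⟩ := hK.bddAbove_image hfc.continuousOn
  refine ⟨max M 1, fun x => ?_⟩
  by_cases hx : x ∈ K
  · exact (hM ⟨x, hx, rfl⟩).trans (le_max_left _ _)
  · exact (hKf hx : f x ≤ 1).trans (le_max_right _ _)

end VanishingPotential

/-- For `β = s⁴` the exponent is `β^{3/2} = s⁶` and all the norms are at most `2 s`. -/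
theorem instability_of_zero_equilibrium_general {f : ℝ → ℝ} {N : ℝ≥0} (hN : LipschitzWith N f)
    (hf : ∀ x, 0 ≤ f x) (hf_decay : Tendsto f (cocompact ℝ) (𝓝 0)) {ε : ℝ} (hε : 0 < ε) :
    ∃ β : ℝ, 0 < β ∧ ∃ x₀ : ℝ,
      (∀ p : ℝ≥0∞, 1 ≤ p →
        eLpNorm (gaussianDatum β (β ^ ((3 : ℝ) / 2)) x₀) p volume < ENNReal.ofReal ε) ∧
      (¬ ∃ u : ℝ → ℝ → ℝ,
        (∀ T : ℝ, 0 < T → IsClassicalSolution f (gaussianDatum β (β ^ ((3 : ℝ) / 2)) x₀) T u) ∧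
        (∀ t : ℝ, 0 ≤ t → ∀ x, u t x ≤ 0) ∧
        (∀ t : ℝ, 0 ≤ t → ∃ M : ℝ, ∀ x, |u t x| ≤ M)) ∧
      (∀ T : ℝ, 0 < T → ∀ u : ℝ → ℝ → ℝ,
        IsClassicalSolution f (gaussianDatum β (β ^ ((3 : ℝ) / 2)) x₀) T u →
        (∀ t ∈ Ico 0 T, ∀ x, u t x ≤ 0) →
        (∀ t ∈ Ico 0 T, ∃ M : ℝ, ∀ x, |u t x| ≤ M) →
        ¬ IsExtendable f (gaussianDatum β (β ^ ((3 : ℝ) / 2)) x₀) T u →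
        Tendsto (fun t : ℝ => ⨆ x : ℝ, |u t x|) (𝓝[<] T) atTop) := by
  obtain ⟨F, hF⟩ := exists_forall_le_of_tendsto_cocompact hN.continuous hf_decay
  obtain ⟨s, hs, hs_lt⟩ :=
    exists_between (show (0 : ℝ) < min (ε / 2) (1 / 16) by positivity)
  obtain ⟨hsε, hs16⟩ := lt_min_iff.1 hs_lt
  have hγ : 128 * s ^ 6 ≤ s ^ 4 := by
    have hs2 : s ^ 2 ≤ (1 / 16) ^ 2 := by gcongr
    linarith [mul_le_mul_of_nonneg_right hs2 (pow_pos hs 4).le, pow_pos hs 4]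
  obtain ⟨x₀, hx₀⟩ := exists_forall_abs_sub_le_of_tendsto_cocompact hf_decay
    (show 0 < s ^ 4 / 16 by positivity) (8 / s ^ 2)
  refine ⟨s ^ 4, by positivity, x₀, ?_⟩
  rw [pow_four_rpow hs.le]
  refine ⟨fun p hp => ?_, ?_, fun T hT u hu h_nonpos h_bdd hmax =>
    IsBoundedNonposSolution.tendsto_iSup_abs_atTop ⟨hu, h_nonpos, h_bdd⟩ hf hF hN
      continuous_gaussianDatum hT hmax⟩
  · exact (eLpNorm_gaussianDatum_pow_le hs (by linarith) hp).trans_lt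
      ((ENNReal.ofReal_lt_ofReal_iff hε).2 (by linarith))
  · rintro ⟨u, hu, h_nonpos, h_bdd⟩
    have hT := IsBoundedNonposSolution.le_eight_div
      ⟨hu (8 / s ^ 4 + 1) (by positivity), fun t ht => h_nonpos t ht.1, fun t ht => h_bdd t ht.1⟩
      hf (fun x hx => hx₀ x (abs_le_of_sq_le_sq (by
        rw [div_pow, le_div_iff₀ (by positivity)]
        linarith) (by positivity))) (by positivity) hγ
    linarith

end SemilinearHeat

open SemilinearHeat

/-- Main instability theorem: for every sufficiently small `ε > 0` there are `β > 0`
and `x₀ ∈ ℝ` such that `h(x) = −β e^{−β^{3/2}(x−x₀)²}` has `‖h‖_{L^p} < ε` for every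
`1 ≤ p ≤ ∞`, yet the Cauchy problem `∂u/∂t = ∂²u/∂x² − 2 f u − u²`, `u(0,·) = h` has
no global nonpositive bounded classical solution; moreover any maximal such solution
on `[0,T)` has `T < ∞` and `‖u(t,·)‖_∞ → ∞` as `t → T⁻`. -/
theorem instability_of_zero_equilibrium
    (f : ℝ → ℝ) (hf_smooth : ContDiff ℝ (⊤ : ℕ∞) f) (hf_pos : ∀ x, 0 < f x)
    (hf_decay : Tendsto f (cocompact ℝ) (nhds 0))
    (hf_d1 : ∃ M : ℝ, ∀ x, |deriv f x| ≤ M)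
    (hf_d2 : ∃ M : ℝ, ∀ x, |deriv (deriv f) x| ≤ M) :
    ∃ ε₀ : ℝ, 0 < ε₀ ∧ ∀ ε : ℝ, 0 < ε → ε < ε₀ →
      ∃ β : ℝ, 0 < β ∧ ∃ x₀ : ℝ,
        (∀ p : ℝ≥0∞, 1 ≤ p →
          eLpNorm (fun x : ℝ => -β * Real.exp (-β ^ ((3 : ℝ) / 2) * (x - x₀) ^ 2)) p volume
            < ENNReal.ofReal ε) ∧
        (¬ ∃ u : ℝ → ℝ → ℝ,
          (∀ T : ℝ, 0 < T →
            IsClassicalSolution f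
              (fun x : ℝ => -β * Real.exp (-β ^ ((3 : ℝ) / 2) * (x - x₀) ^ 2)) T u) ∧
          (∀ t : ℝ, 0 ≤ t → ∀ x, u t x ≤ 0) ∧
          (∀ t : ℝ, 0 ≤ t → ∃ M : ℝ, ∀ x, |u t x| ≤ M)) ∧
        (∀ T : ℝ, 0 < T → ∀ u : ℝ → ℝ → ℝ,
          IsClassicalSolution f
            (fun x : ℝ => -β * Real.exp (-β ^ ((3 : ℝ) / 2) * (x - x₀) ^ 2)) T u →
          (∀ t ∈ Set.Ico (0 : ℝ) T, ∀ x, u t x ≤ 0) →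
          (∀ t ∈ Set.Ico (0 : ℝ) T, ∃ M : ℝ, ∀ x, |u t x| ≤ M) →
          -- maximality: `u` admits no extension to a classical solution on a longer
          -- time interval with the same sign and boundedness properties
          (¬ ∃ T' : ℝ, T < T' ∧ ∃ u' : ℝ → ℝ → ℝ,
            IsClassicalSolution f
              (fun x : ℝ => -β * Real.exp (-β ^ ((3 : ℝ) / 2) * (x - x₀) ^ 2)) T' u' ∧
            (∀ t ∈ Set.Ico (0 : ℝ) T, ∀ x, u' t x = u t x) ∧
            (∀ t ∈ Set.Ico (0 : ℝ) T', ∀ x, u' t x ≤ 0) ∧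
            (∀ t ∈ Set.Ico (0 : ℝ) T', ∃ M : ℝ, ∀ x, |u' t x| ≤ M)) →
          Tendsto (fun t : ℝ => ⨆ x : ℝ, |u t x|)
            (nhdsWithin T (Set.Iio T)) atTop) := by
  obtain ⟨N, hN⟩ := hf_d1
  have h_lip : LipschitzWith N.toNNReal f := lipschitzWith_of_nnnorm_deriv_le
    (hf_smooth.differentiable (by simp)) fun x => NNReal.le_toNNReal_of_coe_le (hN x)
  exact ⟨1, one_pos, fun ε hε _ =>
    instability_of_zero_equilibrium_general h_lip (fun x => (hf_pos x).le) hf_decay hε⟩
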